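/- arXiv:math-ph/9904013 — 2 statements merged into one kernel-verified Lean document; each statement's English description precedes it below -/
import Mathlib

section
/- Let n ≥ 4 be an integer and let I(x,t) = −∂_t φ(x,t) + ∂_x²(φ(x,t) − κ|x|/√t) − (2 ū(x,t) φ(x,t) + φ(x,t)²)^n. Then there exists a constant c_I > 0 such that for all t ≥ 1, ∫_ℝ |I(√t x, t)| dx ≤ c_I t^{−1−4γ}. -/
noncomputable def kap : ℝ := 1 / Real.sqrt Real.pi

noncomputable def kap3 : ℝ := -kap / 12

noncomputable def gam (n : ℕ) : ℝ := 1 / (2 * (n : ℝ) + 1)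

noncomputable def eps (n : ℕ) : ℝ := 1 / ((n : ℝ) - 1)

noncomputable def alph (n : ℕ) : ℝ := 1 / 2 - gam n

noncomputable def del (n : ℕ) : ℝ := ((n : ℝ) + 2) / ((n : ℝ) - 1)

noncomputable def lam (n : ℕ) : ℝ :=
  (del n * (del n + 1) / (2 * kap) ^ n) ^ (1 / ((n : ℝ) - 1))

noncomputable def lam0 (n : ℕ) : ℝ :=
  (lam n / (2 * kap)) *
    (-2 * (n : ℝ) * kap3 * del n * (del n + 1) - kap * (del n - 2 * eps n)) /
    (((n : ℝ) - 1) * del n * (del n + 1) + 2 * (2 * del n - 1))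

def IsReactiveProfile (n : ℕ) (η : ℝ → ℝ) : Prop :=
  ContDiffOn ℝ 2 η (Set.Ici 0) ∧
  (∀ z ∈ Set.Ici (0:ℝ), 0 < η z) ∧
  (∀ z ∈ Set.Ici (0:ℝ),
    derivWithin (derivWithin η (Set.Ici 0)) (Set.Ici 0) z
      = (2 * kap * z * η z + (η z) ^ 2) ^ n) ∧
  derivWithin η (Set.Ici 0) 0 = -kap ∧
  Filter.Tendsto η Filter.atTop (nhds 0)

/-- The corrector h: C² on [0,∞), satisfies
h'' + γη + αzη' = n(2κzη+η²)^{n−1}((2κz+2η)h + 2κ₃z³η), h'(0) = 0,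
h(z) − λ₀ z^{2−δ} → 0 as z → ∞. -/
def IsCorrector (n : ℕ) (η h : ℝ → ℝ) : Prop :=
  ContDiffOn ℝ 2 h (Set.Ici 0) ∧
  (∀ z ∈ Set.Ici (0:ℝ),
    derivWithin (derivWithin h (Set.Ici 0)) (Set.Ici 0) z + gam n * η z
        + alph n * z * derivWithin η (Set.Ici 0) z
      = (n : ℝ) * (2 * kap * z * η z + (η z) ^ 2) ^ (n - 1)
          * ((2 * kap * z + 2 * η z) * h z + 2 * kap3 * z ^ 3 * η z)) ∧
  derivWithin h (Set.Ici 0) 0 = 0 ∧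
  Filter.Tendsto (fun z : ℝ => h z - lam0 n * z ^ (2 - del n)) Filter.atTop (nhds 0)

noncomputable def mu1 (y : ℝ) : ℝ :=
  (2 / Real.sqrt Real.pi) * ∫ σ in (0:ℝ)..(y / 2), Real.exp (-σ ^ 2)

def IsDiffusiveProfile (n : ℕ) (μ : ℝ → ℝ) : Prop :=
  ContDiffOn ℝ 2 μ (Set.Ioi 0) ∧
  (∀ y ∈ Set.Ioi (0:ℝ), 0 < μ y) ∧
  (∀ y ∈ Set.Ioi (0:ℝ),
    deriv (deriv μ) y + y / 2 * deriv μ y + eps n * μ y = (2 * mu1 y * μ y) ^ n) ∧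
  Filter.Tendsto (fun y : ℝ => y ^ del n * μ y) (nhdsWithin 0 (Set.Ioi 0)) (nhds (lam n)) ∧
  Filter.Tendsto (fun y : ℝ => y ^ (2 * eps n) * μ y) Filter.atTop (nhds 0)

/-- u(x,t) = −erf(x/(2√t)). -/
noncomputable def uu (x t : ℝ) : ℝ := -mu1 (x / Real.sqrt t)

/-- ū(x,t) = μ₁(|x|/√t). -/
noncomputable def ubar (x t : ℝ) : ℝ := mu1 (|x| / Real.sqrt t)

/-- φ₁(z) = η(z) − λ z^{−δ}. -/
noncomputable def phi1 (n : ℕ) (η : ℝ → ℝ) (z : ℝ) : ℝ := η z - lam n * z ^ (-(del n))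

/-- φ₂(z) = −λ₀ z^{2−δ} + h(z). -/
noncomputable def phi2 (n : ℕ) (h : ℝ → ℝ) (z : ℝ) : ℝ := -lam0 n * z ^ (2 - del n) + h z

/-- μ₃(y) = μ₂(y) − λ y^{−δ}. -/
noncomputable def mu3 (n : ℕ) (μ : ℝ → ℝ) (y : ℝ) : ℝ := μ y - lam n * y ^ (-(del n))

/-- The asymptotic profile v_∞. -/
noncomputable def vInf (n : ℕ) (η μ h : ℝ → ℝ) (x t : ℝ) : ℝ :=
  mu1 (|x| / Real.sqrt t) + t ^ (-(eps n)) * μ (|x| / Real.sqrt t)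
    + t ^ (-(gam n)) * phi1 n η (|x| / t ^ alph n)
    + t ^ (-(3 * gam n)) * phi2 n h (|x| / t ^ alph n)

/-- φ(x,t) = t^{−γ} η(|z|) + t^{−ε} μ₃(|y|) + t^{−3γ} φ₂(|z|). -/
noncomputable def phiFun (n : ℕ) (η μ h : ℝ → ℝ) (x t : ℝ) : ℝ :=
  t ^ (-(gam n)) * η (|x| / t ^ alph n) + t ^ (-(eps n)) * mu3 n μ (|x| / Real.sqrt t)
    + t ^ (-(3 * gam n)) * phi2 n h (|x| / t ^ alph n)

/-- The inhomogeneous term I(x,t) = −∂ₜφ(x,t) + ∂ₓ²(φ(x,t) − κ|x|/√t)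
 − (2ū(x,t)φ(x,t) + φ(x,t)²)ⁿ. -/
noncomputable def IFun (n : ℕ) (η μ h : ℝ → ℝ) (x t : ℝ) : ℝ :=
  -(deriv (fun s : ℝ => phiFun n η μ h x s) t)
    + deriv (deriv (fun x' : ℝ => phiFun n η μ h x' t - kap * |x'| / Real.sqrt t)) x
    - (2 * ubar x t * phiFun n η μ h x t + phiFun n η μ h x t ^ 2) ^ n

/-!
In the variables `s = t^γ`, `y = |x| / √t` and `z = s y = |x| / t^α`, the equations of the three
profiles eliminate every derivative from `t I(x, t)` and leave a difference of reaction terms. The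
profiles meet in the power tail `v(z) = λ z^{-δ}`: by comparison with powers, `η = v (1 + O(z⁻²))`
and `h = z² v (λ₀/λ + O(z⁻²))` at infinity, while `μ₂ = v (1 + (λ₀/λ) y² + O(y⁴))` at `0`. For `y
≤ 1` the reaction term is expanded in powers of `s⁻²`: the equations of `η` and `h` cancel the
first two coefficients, and the remainders belonging to `φ` and to `μ₂` agree up to a relative
`O(z⁻²)`. For `y ≥ 1` it is expanded around `μ₂`, the rest of `φ` being a relative perturbation
`O(s⁻²)`. Either way `t I` is at most a constant times `s⁻³ (1 + z)^{-δ} + s⁻⁴ (1 + y)⁻²`, whose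
integral in `y` is a multiple of `s⁻⁴ = t^{-4γ}`.
-/

open Filter Topology Set

section Calculus

lemma deriv_eq_zero_and_second_deriv_nonpos_of_isLocalMax {f f' : ℝ → ℝ} {f'' c : ℝ}
    (hmax : IsLocalMax f c) (hf : ∀ᶠ z in 𝓝 c, HasDerivAt f (f' z) z)
    (hf' : HasDerivAt f' f'' c) : f' c = 0 ∧ f'' ≤ 0 := by
  have hc := hf.self_of_nhds
  have hcrit : f' c = 0 := hmax.hasDerivAt_eq_zero hc
  refine ⟨hcrit, ?_⟩
  by_contra! hpos
  have hderiv : deriv f =ᶠ[𝓝 c] f' := hf.mono fun z hz => hz.deriv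
  have hderiv2 : deriv (deriv f) c = f'' := by rw [hderiv.deriv_eq]; exact hf'.deriv
  have hmin : IsLocalMin f c := isLocalMin_of_deriv_deriv_pos (by rwa [hderiv2])
    (by rw [hc.deriv, hcrit]) hc.continuousAt
  have hconst : f =ᶠ[𝓝 c] fun _ => f c := by
    filter_upwards [hmax, hmin] with z hle hge using le_antisymm hle hge
  have hzero : deriv (deriv f) c = 0 := by
    rw [hconst.deriv.deriv_eq]
    simp
  linarith

/-! ### Maximum principles and decay of solutions -/

lemma nonpos_on_Icc_of_second_deriv_pos {f f' f'' : ℝ → ℝ} {a b : ℝ} (hab : a ≤ b)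
    (hc : ContinuousOn f (Icc a b)) (hf : ∀ z ∈ Ioo a b, HasDerivAt f (f' z) z)
    (hf' : ∀ z ∈ Ioo a b, HasDerivAt f' (f'' z) z) (ha : f a ≤ 0) (hb : f b ≤ 0)
    (hpos : ∀ z ∈ Ioo a b, 0 < f z → f' z = 0 → 0 < f'' z) :
    ∀ z ∈ Icc a b, f z ≤ 0 := by
  obtain ⟨c, hcab, hmax⟩ := isCompact_Icc.exists_isMaxOn (nonempty_Icc.2 hab) hc
  suffices hfc : f c ≤ 0 from fun z hz => (hmax hz).trans hfc
  by_contra! hfc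
  have hca : c ≠ a := by rintro rfl; linarith
  have hcb : c ≠ b := by rintro rfl; linarith
  have hcI : c ∈ Ioo a b := ⟨lt_of_le_of_ne hcab.1 hca.symm, lt_of_le_of_ne hcab.2 hcb⟩
  obtain ⟨hcrit, hconcave⟩ := deriv_eq_zero_and_second_deriv_nonpos_of_isLocalMax
    (hmax.isLocalMax (Icc_mem_nhds hcI.1 hcI.2))
    (by filter_upwards [Ioo_mem_nhds hcI.1 hcI.2] with z hz using hf z hz) (hf' c hcI)
  exact (hpos c hcI hfc hcrit).not_ge hconcave

lemma nonpos_on_Ici_of_second_deriv_pos {f f' f'' : ℝ → ℝ} {a : ℝ} (hc : ContinuousOn f (Ici a))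
    (hf : ∀ z > a, HasDerivAt f (f' z) z) (hf' : ∀ z > a, HasDerivAt f' (f'' z) z)
    (ha : f a ≤ 0) (hlim : Tendsto f atTop (𝓝 0)) (hpos : ∀ z > a, 0 < f z → 0 < f'' z) :
    ∀ z ≥ a, f z ≤ 0 := by
  intro z₀ hz₀
  by_contra! hfz₀
  obtain ⟨b, hfb, hb⟩ :=
    ((hlim.eventually_lt_const (half_pos hfz₀)).and (eventually_ge_atTop z₀)).exists
  have := nonpos_on_Icc_of_second_deriv_pos (f := fun z => f z - f z₀ / 2) (f' := f') (f'' := f'')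
    (hz₀.le.trans hb) ((hc.mono Icc_subset_Ici_self).sub continuousOn_const)
    (fun z hz => (hf z hz.1).sub_const _) (fun z hz => hf' z hz.1)
    (by linarith) (by linarith) (fun z hz hp _ => hpos z hz.1 (by linarith)) z₀ ⟨hz₀, hb⟩
  linarith

lemma hasDerivAt_rpow_const_of_pos (p : ℝ) {z : ℝ} (hz : 0 < z) :
    HasDerivAt (fun x : ℝ => x ^ p) (p * (z ^ p / z)) z := by
  have := Real.hasDerivAt_rpow_const (x := z) (p := p) (Or.inl hz.ne')
  rwa [Real.rpow_sub_one hz.ne'] at this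

lemma hasDerivAt_deriv_rpow_const_of_pos (p : ℝ) {z : ℝ} (hz : 0 < z) :
    HasDerivAt (fun x : ℝ => p * (x ^ p / x)) (p * (p - 1) * (z ^ p / z ^ 2)) z := by
  refine (((hasDerivAt_rpow_const_of_pos p hz).div (hasDerivAt_id z) hz.ne').const_mul
    p).congr_deriv ?_
  simp only [id]
  field_simp

lemma continuousOn_rpow_const_Ici (p : ℝ) {a : ℝ} (ha : 0 < a) :
    ContinuousOn (fun z : ℝ => z ^ p) (Ici a) :=
  continuousOn_id.rpow_const fun _ hx => Or.inl (ha.trans_le hx).ne'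

/-- The power `C z^{-ρ}` is a supersolution because `ρ(ρ+1) < k`. -/
lemma le_mul_rpow_neg_of_second_deriv_ge {u u' u'' : ℝ → ℝ} {a k K C ρ : ℝ} (ha : 0 < a)
    (hρ : 0 < ρ) (hC : 0 < C) (hk : ρ * (ρ + 1) < k) (hCK : K < C * (k - ρ * (ρ + 1)))
    (hc : ContinuousOn u (Ici a)) (hu : ∀ z > a, HasDerivAt u (u' z) z)
    (hu' : ∀ z > a, HasDerivAt u' (u'' z) z) (hlim : Tendsto u atTop (𝓝 0))
    (hCa : u a ≤ C * a ^ (-ρ))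
    (hpos : ∀ z > a, 0 < u z → k * (u z / z ^ 2) - K * (z ^ (-ρ) / z ^ 2) ≤ u'' z) :
    ∀ z ≥ a, u z ≤ C * z ^ (-ρ) := by
  have hconvex : ∀ z > a, 0 < u z - C * z ^ (-ρ) →
      0 < u'' z - C * (-ρ * (-ρ - 1) * (z ^ (-ρ) / z ^ 2)) := by
    intro z hz hpz
    have hz0 : 0 < z := ha.trans hz
    have hw : 0 < z ^ (-ρ) := Real.rpow_pos_of_pos hz0 _
    have hwz : 0 < z ^ (-ρ) / z ^ 2 := by positivity
    have hk0 : 0 < k := by nlinarith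
    have huz : 0 < u z := by nlinarith
    have hcoef : k * C * (z ^ (-ρ) / z ^ 2) ≤ k * (u z / z ^ 2) := by
      rw [mul_assoc, ← mul_div_assoc]
      gcongr
      linarith
    nlinarith [hpos z hz huz, mul_lt_mul_of_pos_right hCK hwz]
  have hcmp := nonpos_on_Ici_of_second_deriv_pos (f := fun z => u z - C * z ^ (-ρ))
    (hc.sub (continuousOn_const.mul (continuousOn_rpow_const_Ici _ ha)))
    (fun z hz => (hu z hz).sub ((hasDerivAt_rpow_const_of_pos (-ρ) (ha.trans hz)).const_mul C))
    (fun z hz => (hu' z hz).sub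
      ((hasDerivAt_deriv_rpow_const_of_pos (-ρ) (ha.trans hz)).const_mul C))
    (by simpa using hCa) (by simpa using hlim.sub ((tendsto_rpow_neg_atTop hρ).const_mul C))
    hconvex
  exact fun z hz => sub_nonpos.1 (hcmp z hz)

lemma exists_le_mul_rpow_neg_of_second_deriv_ge {u u' u'' : ℝ → ℝ} {a k K ρ : ℝ} (ha : 0 < a)
    (hρ : 0 < ρ) (hk : ρ * (ρ + 1) < k) (hc : ContinuousOn u (Ici a))
    (hu : ∀ z > a, HasDerivAt u (u' z) z) (hu' : ∀ z > a, HasDerivAt u' (u'' z) z)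
    (hlim : Tendsto u atTop (𝓝 0))
    (hpos : ∀ z > a, 0 < u z → k * (u z / z ^ 2) - K * (z ^ (-ρ) / z ^ 2) ≤ u'' z) :
    ∃ C > 0, ∀ z ≥ a, u z ≤ C * z ^ (-ρ) := by
  have hw : 0 < a ^ (-ρ) := Real.rpow_pos_of_pos ha _
  have hgap : 0 < k - ρ * (ρ + 1) := by linarith
  have hsource : 0 ≤ |K| / (k - ρ * (ρ + 1)) := by positivity
  have hbdry : 0 ≤ |u a| / a ^ (-ρ) := by positivity
  refine ⟨|K| / (k - ρ * (ρ + 1)) + |u a| / a ^ (-ρ) + 1, by positivity,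
    le_mul_rpow_neg_of_second_deriv_ge ha hρ (by positivity) hk ?_ hc hu hu' hlim ?_ hpos⟩
  · exact (le_abs_self K).trans_lt ((div_lt_iff₀ hgap).1 (by linarith))
  · exact (le_abs_self _).trans ((div_le_iff₀ hw).1 (by linarith))

lemma exists_abs_le_mul_rpow_neg_of_linear_ode {u u' u'' c : ℝ → ℝ} {a k K ρ : ℝ} (ha : 0 < a)
    (hρ : 0 < ρ) (hk : ρ * (ρ + 1) < k) (hc : ContinuousOn u (Ici a))
    (hu : ∀ z > a, HasDerivAt u (u' z) z) (hu' : ∀ z > a, HasDerivAt u' (u'' z) z)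
    (hlim : Tendsto u atTop (𝓝 0)) (hck : ∀ z > a, k ≤ c z)
    (hode : ∀ z > a, |u'' z - c z * (u z / z ^ 2)| ≤ K * (z ^ (-ρ) / z ^ 2)) :
    ∃ C > 0, ∀ z ≥ a, |u z| ≤ C * z ^ (-ρ) := by
  obtain ⟨C₁, hC₁, hle⟩ := exists_le_mul_rpow_neg_of_second_deriv_ge (K := K) ha hρ hk hc hu hu'
    hlim fun z hz huz => by
      have hq : 0 < u z / z ^ 2 := div_pos huz (pow_pos (ha.trans hz) 2)
      nlinarith [(abs_le.1 (hode z hz)).1, hck z hz]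
  obtain ⟨C₂, hC₂, hge⟩ := exists_le_mul_rpow_neg_of_second_deriv_ge (K := K) (u := fun z => -u z)
    ha hρ hk hc.neg (fun z hz => (hu z hz).neg) (fun z hz => (hu' z hz).neg)
    (by simpa using hlim.neg) fun z hz huz => by
      have hq : 0 < -u z / z ^ 2 := div_pos huz (pow_pos (ha.trans hz) 2)
      have hode := (abs_le.1 (hode z hz)).2
      rw [← neg_neg (u z), neg_div] at hode
      nlinarith [hck z hz]
  refine ⟨C₁ + C₂, by positivity, fun z hz => abs_le.2 ?_⟩
  have hw : 0 < z ^ (-ρ) := Real.rpow_pos_of_pos (ha.trans_le hz) _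
  constructor <;> nlinarith [hle z hz, hge z hz]

/-- Interpolation: some `u' c` with `c ∈ (z, 2z)` is a difference quotient of `u`, and `u' z`
differs from it by at most `z` times the supremum of `|u''|`. -/
lemma abs_deriv_le_of_abs_le_rpow_neg {u u' u'' : ℝ → ℝ} {C K ρ : ℝ} (hρ : 0 ≤ ρ) (hC : 0 ≤ C)
    (hK : 0 ≤ K) (hu : ∀ z ≥ 1, HasDerivAt u (u' z) z) (hu' : ∀ z ≥ 1, HasDerivAt u' (u'' z) z)
    (hbound : ∀ z ≥ 1, |u z| ≤ C * z ^ (-ρ))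
    (hbound'' : ∀ z ≥ 1, |u'' z| ≤ K * (z ^ (-ρ) / z ^ 2)) :
    ∀ z ≥ 1, |u' z| ≤ (2 * C + K) * (z ^ (-ρ) / z) := by
  intro z hz
  have hz0 : (0 : ℝ) < z := by linarith
  have hw : 0 < z ^ (-ρ) := Real.rpow_pos_of_pos hz0 _
  have hanti : ∀ x ≥ z, x ^ (-ρ) ≤ z ^ (-ρ) := fun x hx =>
    Real.rpow_le_rpow_of_nonpos hz0 hx (by linarith)
  obtain ⟨c, hc, hslope⟩ := exists_hasDerivAt_eq_slope u u' (show z < 2 * z by linarith)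
    (fun x hx => (hu x (hz.le.trans hx.1)).continuousAt.continuousWithinAt)
    (fun x hx => hu x (hz.le.trans hx.1.le))
  obtain ⟨d, hd, hslope'⟩ := exists_hasDerivAt_eq_slope u' u'' hc.1
    (fun x hx => (hu' x (hz.le.trans hx.1)).continuousAt.continuousWithinAt)
    (fun x hx => hu' x (hz.le.trans hx.1.le))
  have hquotient : |u' c| ≤ 2 * C * (z ^ (-ρ) / z) := by
    rw [hslope, show 2 * z - z = z by ring, abs_div, abs_of_pos hz0, ← mul_div_assoc]
    gcongr
    have h2z := hanti (2 * z) (by linarith)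
    nlinarith [abs_sub (u (2 * z)) (u z), hbound (2 * z) (by linarith), hbound z hz]
  have hvariation : |u' c - u' z| ≤ K * (z ^ (-ρ) / z) := by
    have hcz : 0 < c - z := sub_pos.2 hc.1
    have hdecay : |u'' d| ≤ K * (z ^ (-ρ) / z ^ 2) := by
      refine (hbound'' d (hz.le.trans hd.1.le)).trans ?_
      exact mul_le_mul_of_nonneg_left (div_le_div₀ hw.le (hanti d hd.1.le) (by positivity)
        (pow_le_pow_left₀ hz0.le hd.1.le 2)) hK
    calc |u' c - u' z| = |u'' d| * (c - z) := by
          rw [hslope', abs_div, abs_of_pos hcz]; field_simp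
      _ ≤ K * (z ^ (-ρ) / z ^ 2) * z := by
          gcongr
          linarith [hc.2]
      _ = K * (z ^ (-ρ) / z) := by field_simp
  have := abs_sub (u' c) (u' c - u' z)
  rw [sub_sub_cancel] at this
  linarith

lemma exists_abs_le_mul_on_Ici {f w : ℝ → ℝ} {a b C : ℝ} (hf : ContinuousOn f (Ici b))
    (hw : ContinuousOn w (Ici b)) (hwpos : ∀ z ≥ b, 0 < w z)
    (hbound : ∀ z ≥ a, |f z| ≤ C * w z) : ∃ C' > 0, ∀ z ≥ b, |f z| ≤ C' * w z := by
  have hq : ContinuousOn (fun z => f z / w z) (Icc b (max a b)) :=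
    (hf.div hw fun z hz => (hwpos z hz).ne').mono Icc_subset_Ici_self
  obtain ⟨M, hM⟩ := isCompact_Icc.exists_bound_of_continuousOn hq
  refine ⟨|C| + |M| + 1, by positivity, fun z hz => ?_⟩
  have hwz := hwpos z hz
  rcases le_total a z with h | h
  · nlinarith [hbound z h, le_abs_self C, abs_nonneg M]
  · have hMz := hM z ⟨hz, h.trans (le_max_left _ _)⟩
    rw [Real.norm_eq_abs, abs_div, abs_of_pos hwz, div_le_iff₀ hwz] at hMz
    nlinarith [le_abs_self M, abs_nonneg C]

lemma hasDerivAt_derivWithin_Ici {f : ℝ → ℝ} {a z : ℝ} (hf : DifferentiableOn ℝ f (Ici a))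
    (hz : a < z) : HasDerivAt f (derivWithin f (Ici a) z) z :=
  (hf z hz.le).hasDerivWithinAt.hasDerivAt (Ici_mem_nhds hz)

lemma contDiffOn_derivWithin_Ici {f : ℝ → ℝ} {a : ℝ} (hf : ContDiffOn ℝ 2 f (Ici a)) :
    ContDiffOn ℝ 1 (derivWithin f (Ici a)) (Ici a) :=
  hf.derivWithin (uniqueDiffOn_Ici a) (by norm_num)

end Calculus

/-! ### Powers of perturbed quantities -/

section Powers

/-- The second-order Taylor remainder of `(a + b)^k`, divided by `b²`. -/
def powRem : ℕ → ℝ → ℝ → ℝ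
  | 0, _, _ => 0
  | k + 1, a, b => k * a ^ (k - 1) + (a + b) * powRem k a b

lemma add_pow_sub_linear_eq (k : ℕ) (a b : ℝ) :
    (a + b) ^ k - a ^ k - k * a ^ (k - 1) * b = b ^ 2 * powRem k a b := by
  induction k with
  | zero => simp [powRem]
  | succ k ih =>
    have hk : (k : ℝ) * a ^ (k - 1) * a = k * a ^ k := by
      cases k <;> simp [pow_succ, mul_assoc]
    simp only [powRem, Nat.add_sub_cancel, pow_succ (a + b) k, pow_succ a k]
    push_cast
    linear_combination (a + b) * ih + b * hk

lemma powRem_nonneg (k : ℕ) {a b : ℝ} (ha : 0 ≤ a) (hab : 0 ≤ a + b) : 0 ≤ powRem k a b := by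
  induction k with
  | zero => simp [powRem]
  | succ k ih => simp only [powRem]; positivity

lemma contDiff_powRem (k : ℕ) : ContDiff ℝ 1 (fun p : ℝ × ℝ => powRem k p.1 p.2) := by
  induction k with
  | zero => simpa [powRem] using contDiff_const
  | succ k ih => simp only [powRem]; fun_prop

lemma mul_pow_pred_mul_sub_le_pow_sub_pow (n : ℕ) {x a : ℝ} (ha : 0 ≤ a) (hx : 0 ≤ x) :
    n * a ^ (n - 1) * (x - a) ≤ x ^ n - a ^ n := by
  have htaylor := add_pow_sub_linear_eq n a (x - a)
  rw [add_sub_cancel] at htaylor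
  have := mul_nonneg (sq_nonneg (x - a)) (powRem_nonneg n ha (by linarith : 0 ≤ a + (x - a)))
  linarith

/-- The remainder of `(a + b₁ Y + b₂ Y²)^n` beyond first order in `Y`, divided by `Y²`. -/
def quadPowRem (n : ℕ) (Y a b₁ b₂ : ℝ) : ℝ :=
  n * a ^ (n - 1) * b₂ + (b₁ + b₂ * Y) ^ 2 * powRem n a ((b₁ + b₂ * Y) * Y)

lemma quad_pow_sub_linear_eq (n : ℕ) (Y a b₁ b₂ : ℝ) :
    (a + b₁ * Y + b₂ * Y ^ 2) ^ n - a ^ n - n * a ^ (n - 1) * (b₁ * Y)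
      = Y ^ 2 * quadPowRem n Y a b₁ b₂ := by
  rw [show a + b₁ * Y + b₂ * Y ^ 2 = a + (b₁ + b₂ * Y) * Y by ring, quadPowRem]
  linear_combination add_pow_sub_linear_eq n a ((b₁ + b₂ * Y) * Y)

/-- The remainder of `(k(1 + cY + mY²)f + rf²)^n`, where `f = θ + qY + ρY²`, beyond first order in
`Y`, divided by `Y²`. The parameters form a tuple so that bounds can be stated with its norm. -/
def reactionRem (n : ℕ) : ℝ × ℝ × ℝ × ℝ × ℝ × ℝ × ℝ × ℝ → ℝ
  | (k, c, m, r, θ, q, ρ, Y) =>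
    quadPowRem n Y (k * θ + r * θ ^ 2) ((k + 2 * r * θ) * q + k * c * θ)
      (k * (ρ + c * q + m * θ + (m * q + c * ρ) * Y + m * ρ * Y ^ 2)
        + r * (q ^ 2 + 2 * θ * ρ + 2 * q * ρ * Y + ρ ^ 2 * Y ^ 2))

lemma reaction_pow_eq (n : ℕ) (k c m r θ q ρ Y : ℝ) :
    (k * ((1 + c * Y + m * Y ^ 2) * (θ + q * Y + ρ * Y ^ 2))
        + r * (θ + q * Y + ρ * Y ^ 2) ^ 2) ^ n
      = (k * θ + r * θ ^ 2) ^ n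
        + n * (k * θ + r * θ ^ 2) ^ (n - 1) * (((k + 2 * r * θ) * q + k * c * θ) * Y)
        + Y ^ 2 * reactionRem n (k, c, m, r, θ, q, ρ, Y) := by
  rw [reactionRem, ← quad_pow_sub_linear_eq]
  ring

lemma reactionRem_scale {n : ℕ} (hn : n ≠ 0) {v w Y : ℝ} (hv : v ≠ 0) (hw : w ≠ 0) (hY : Y ≠ 0)
    {k : ℝ} (hk : k ≠ 0) (c m θ q ρ : ℝ) :
    reactionRem n (k, c * w, m * w ^ 2, 1, v * θ, v * (w * q), v * (w ^ 2 * ρ), Y / w)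
      = (k * v) ^ n * w ^ 2 * reactionRem n (1, c, m, v / k, θ, q, ρ, Y) := by
  have hleft := reaction_pow_eq n k (c * w) (m * w ^ 2) 1 (v * θ) (v * (w * q)) (v * (w ^ 2 * ρ))
    (Y / w)
  have hright := reaction_pow_eq n 1 c m (v / k) θ q ρ Y
  have hbase : k * ((1 + c * w * (Y / w) + m * w ^ 2 * (Y / w) ^ 2)
        * (v * θ + v * (w * q) * (Y / w) + v * (w ^ 2 * ρ) * (Y / w) ^ 2))
        + 1 * (v * θ + v * (w * q) * (Y / w) + v * (w ^ 2 * ρ) * (Y / w) ^ 2) ^ 2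
      = k * v * (1 * ((1 + c * Y + m * Y ^ 2) * (θ + q * Y + ρ * Y ^ 2))
        + v / k * (θ + q * Y + ρ * Y ^ 2) ^ 2) := by
    field_simp
  have hconst : k * (v * θ) + 1 * (v * θ) ^ 2 = k * v * (1 * θ + v / k * θ ^ 2) := by field_simp
  have hlinear : ((k + 2 * 1 * (v * θ)) * (v * (w * q)) + k * (c * w) * (v * θ)) * (Y / w)
      = k * v * (((1 + 2 * (v / k) * θ) * q + 1 * c * θ) * Y) := by field_simp
  rw [hbase, hconst, hlinear, mul_pow (k * v), mul_pow (k * v), mul_pow (k * v), hright] at hleft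
  refine mul_left_cancel₀ (pow_ne_zero 2 (div_ne_zero hY hw)) ?_
  have hw2 : (Y / w) ^ 2 * w ^ 2 = Y ^ 2 := by field_simp
  linear_combination -hleft - (k * v) ^ n * reactionRem n (1, c, m, v / k, θ, q, ρ, Y) * hw2
    - n * (1 * θ + v / k * θ ^ 2) ^ (n - 1)
      * (((1 + 2 * (v / k) * θ) * q + 1 * c * θ) * Y) * pow_sub_one_mul hn (k * v)

lemma contDiff_reactionRem (n : ℕ) : ContDiff ℝ 1 (reactionRem n) := by
  have hquad : ContDiff ℝ 1 (fun p : ℝ × ℝ × ℝ × ℝ => quadPowRem n p.1 p.2.1 p.2.2.1 p.2.2.2) := by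
    have hrem : ContDiff ℝ 1 (fun p : ℝ × ℝ × ℝ × ℝ =>
        powRem n p.2.1 ((p.2.2.1 + p.2.2.2 * p.1) * p.1)) :=
      (contDiff_powRem n).comp
        (f := fun p : ℝ × ℝ × ℝ × ℝ => (p.2.1, (p.2.2.1 + p.2.2.2 * p.1) * p.1)) (by fun_prop)
    simp only [quadPowRem]
    fun_prop
  exact hquad.comp (f := fun p : ℝ × ℝ × ℝ × ℝ × ℝ × ℝ × ℝ × ℝ => match p with
    | (k, c, m, r, θ, q, ρ, Y) => (Y, k * θ + r * θ ^ 2, (k + 2 * r * θ) * q + k * c * θ,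
      k * (ρ + c * q + m * θ + (m * q + c * ρ) * Y + m * ρ * Y ^ 2)
        + r * (q ^ 2 + 2 * θ * ρ + 2 * q * ρ * Y + ρ ^ 2 * Y ^ 2))) (by fun_prop)

lemma exists_abs_sub_le_of_contDiff {E : Type*} [NormedAddCommGroup E] [NormedSpace ℝ E]
    [ProperSpace E] {f : E → ℝ} (hf : ContDiff ℝ 1 f) (M : ℝ) :
    ∃ C ≥ 0, ∀ p q, ‖p‖ ≤ M → ‖q‖ ≤ M → |f p - f q| ≤ C * ‖p - q‖ := by
  obtain ⟨C, hC⟩ := hf.contDiffOn.exists_lipschitzOnWith one_ne_zero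
    (convex_closedBall (0 : E) M) (isCompact_closedBall 0 M)
  refine ⟨C, C.2, fun p q hp hq => ?_⟩
  simpa only [dist_eq_norm, Real.norm_eq_abs] using
    hC.dist_le_mul p (mem_closedBall_zero_iff.2 hp) q (mem_closedBall_zero_iff.2 hq)

lemma exists_abs_le_of_continuous {E : Type*} [NormedAddCommGroup E] [ProperSpace E]
    {f : E → ℝ} (hf : Continuous f) (M : ℝ) : ∃ C ≥ 0, ∀ p, ‖p‖ ≤ M → |f p| ≤ C := by
  obtain ⟨C, hC⟩ := (isCompact_closedBall (0 : E) M).exists_bound_of_continuousOn hf.continuousOn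
  exact ⟨|C|, abs_nonneg _, fun p hp => (hC p (mem_closedBall_zero_iff.2 hp)).trans (le_abs_self C)⟩

lemma abs_pow_sub_one_le (n : ℕ) {x M : ℝ} (hM : 1 ≤ M) (hx : |x| ≤ M) :
    |x ^ n - 1| ≤ n * M ^ (n - 1) * |x - 1| := by
  have h := abs_pow_sub_pow_le x 1 n
  rw [one_pow, abs_one] at h
  calc |x ^ n - 1| ≤ |x - 1| * n * max |x| 1 ^ (n - 1) := h
    _ ≤ |x - 1| * n * M ^ (n - 1) := by gcongr; exact max_le hx hM
    _ = n * M ^ (n - 1) * |x - 1| := by ring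

lemma one_div_sq_le_one {z : ℝ} (hz : 1 ≤ z) : 1 / z ^ 2 ≤ 1 := by
  rw [div_le_one (by positivity)]
  exact one_le_pow₀ hz

lemma abs_le_one_add_of_abs_sub_one_le {x a : ℝ} (h : |x - 1| ≤ a) : |x| ≤ 1 + a := by
  have := abs_add_le (x - 1) 1
  rw [sub_add_cancel, abs_one] at this
  linarith

end Powers

/-! ### Constants -/

section Constants

variable {n : ℕ}

lemma kap_pos : 0 < kap := by unfold kap; positivity

lemma one_lt_cast (hn : 1 < n) : (1 : ℝ) < n := by exact_mod_cast hn

lemma cast_sub_one_ne_zero (hn : 1 < n) : (n : ℝ) - 1 ≠ 0 := (sub_pos.2 (one_lt_cast hn)).ne'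

lemma gam_pos (n : ℕ) : 0 < gam n := by unfold gam; positivity

lemma eps_pos (hn : 1 < n) : 0 < eps n := one_div_pos.2 (sub_pos.2 (one_lt_cast hn))

lemma eps_le_third (hn : 4 ≤ n) : eps n ≤ 1 / 3 := by
  have : (4 : ℝ) ≤ n := by exact_mod_cast hn
  exact one_div_le_one_div_of_le (by norm_num) (by linarith)

lemma del_eq_one_add (hn : 1 < n) : del n = 1 + 3 * eps n := by
  have := cast_sub_one_ne_zero hn
  unfold del eps
  field_simp
  ring

lemma one_lt_del (hn : 1 < n) : 1 < del n := by rw [del_eq_one_add hn]; linarith [eps_pos hn]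

lemma del_le_two (hn : 4 ≤ n) : del n ≤ 2 := by
  rw [del_eq_one_add (by lia)]
  linarith [eps_le_third hn]

lemma del_mul_succ_pos (hn : 1 < n) : 0 < del n * (del n + 1) := by
  have := one_lt_del hn
  positivity

lemma alph_pos (hn : 1 < n) : 0 < alph n := by
  have := one_lt_cast hn
  unfold alph gam
  rw [sub_pos]
  apply one_div_lt_one_div_of_lt <;> linarith

lemma eps_eq_gam_mul (hn : 1 < n) : eps n = gam n * (1 + del n) := by
  have := cast_sub_one_ne_zero hn
  unfold del eps gam
  field_simp
  ring

lemma two_mul_cast_mul_gam (n : ℕ) : 2 * n * gam n = 1 - gam n := by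
  unfold gam
  field_simp
  ring

lemma cast_sub_one_mul_eps (hn : 1 < n) : (n - 1) * eps n = 1 :=
  mul_one_div_cancel (cast_sub_one_ne_zero hn)

lemma cast_mul_one_sub_del (hn : 1 < n) : (n : ℝ) * (1 - del n) = -del n - 2 := by
  have := cast_sub_one_ne_zero hn
  unfold del
  field_simp
  ring

lemma cast_mul_del_mul_succ_ge (hn : 1 < n) : 22 ≤ (n : ℝ) * (del n * (del n + 1)) := by
  have h2 : (2 : ℝ) ≤ n := by exact_mod_cast hn
  have := cast_sub_one_ne_zero hn
  have hclosed : (n : ℝ) * (del n * (del n + 1))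
      = n * (n + 2) * (2 * n + 1) / ((n : ℝ) - 1) ^ 2 := by
    unfold del
    field_simp
    ring
  rw [hclosed, le_div_iff₀ (by positivity)]
  nlinarith [mul_nonneg (sub_nonneg.2 h2) (sq_nonneg ((n : ℝ) - 3.4)), sq_nonneg ((n : ℝ) - 3.6)]

lemma lam_pos (hn : 1 < n) : 0 < lam n :=
  Real.rpow_pos_of_pos (div_pos (del_mul_succ_pos hn) (by have := kap_pos; positivity)) _

lemma two_kap_pow_mul_lam_pow (hn : 1 < n) :
    (2 * kap) ^ n * lam n ^ n = del n * (del n + 1) * lam n := by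
  have := kap_pos
  have := cast_sub_one_ne_zero hn
  have hpred : lam n ^ (n - 1) = del n * (del n + 1) / (2 * kap) ^ n := by
    have hexp : 1 / ((n : ℝ) - 1) * ((n - 1 : ℕ) : ℝ) = 1 := by
      rw [Nat.cast_sub (by lia)]
      push_cast
      field_simp
    have := del_mul_succ_pos hn
    unfold lam
    rw [← Real.rpow_natCast, ← Real.rpow_mul (by positivity), hexp, Real.rpow_one]
  rw [← pow_sub_one_mul (by lia : n ≠ 0) (lam n), hpred]
  field_simp

/-- The coefficient `λ₀/λ` of the quadratic correction to the power tail. -/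
noncomputable def corrRatio (n : ℕ) : ℝ := lam0 n / lam n

lemma lam0_eq (hn : 1 < n) : lam0 n = lam n * corrRatio n :=
  (mul_div_cancel₀ _ (lam_pos hn).ne').symm

/-- This identity cancels the leading terms of the corrector equation at infinity and of the
diffusive profile at the origin. -/
lemma corrRatio_identity (hn : 1 < n) :
    eps n - del n / 2 + corrRatio n * ((2 - del n) * (1 - del n))
      = n * (del n * (del n + 1)) * (corrRatio n - 1 / 12) := by
  have := lam_pos hn
  have := kap_pos
  have hden : ((n : ℝ) - 1) * del n * (del n + 1) + 2 * (2 * del n - 1) ≠ 0 := by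
    have := one_lt_del hn
    have := sub_pos.2 (one_lt_cast hn)
    have : 0 < 2 * del n - 1 := by linarith
    positivity
  have hratio : corrRatio n * (((n : ℝ) - 1) * del n * (del n + 1) + 2 * (2 * del n - 1)) =
      n / 12 * del n * (del n + 1) - (del n - 2 * eps n) / 2 := by
    unfold corrRatio lam0 kap3
    generalize ((n : ℝ) - 1) * del n * (del n + 1) + 2 * (2 * del n - 1) = D at hden ⊢
    field_simp
  linear_combination -hratio

lemma eps_sub_half_del (hn : 1 < n) : eps n - del n / 2 = gam n - alph n * del n := by
  rw [eps_eq_gam_mul hn, alph]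
  ring

end Constants

/-! ### The common power tail of the profiles -/

section PowerTail

variable {n : ℕ} {z : ℝ}

/-- The power `v(z) = λ z^{-δ}`: the tail of the reactive profile and the singular part of the
diffusive profile at the origin. -/
noncomputable def powerTail (n : ℕ) (z : ℝ) : ℝ := lam n * z ^ (-del n)

/-- The ratio of `v²` to `2κzv`, the quadratic against the linear term of `reactBase` at the power
tail. -/
noncomputable def tailRatio (n : ℕ) (z : ℝ) : ℝ := powerTail n z / (2 * kap * z)

/-- The base `2κza + a²` of the reaction term. -/
noncomputable def reactBase (z a : ℝ) : ℝ := 2 * kap * z * a + a ^ 2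

lemma powerTail_pos (hn : 1 < n) (hz : 0 < z) : 0 < powerTail n z :=
  mul_pos (lam_pos hn) (Real.rpow_pos_of_pos hz _)

lemma tailRatio_pos (hn : 1 < n) (hz : 0 < z) : 0 < tailRatio n z :=
  div_pos (powerTail_pos hn hz) (by have := kap_pos; positivity)

lemma hasDerivAt_powerTail (n : ℕ) (hz : 0 < z) :
    HasDerivAt (powerTail n) (-del n * (powerTail n z / z)) z := by
  refine ((hasDerivAt_rpow_const_of_pos (-del n) hz).const_mul (lam n)).congr_deriv ?_
  unfold powerTail
  ring

lemma hasDerivAt_deriv_powerTail (n : ℕ) (hz : 0 < z) :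
    HasDerivAt (fun z => -del n * (powerTail n z / z))
      (del n * (del n + 1) * (powerTail n z / z ^ 2)) z := by
  have := (hasDerivAt_deriv_rpow_const_of_pos (-del n) hz).const_mul (lam n)
  unfold powerTail
  exact (this.congr_deriv (by ring)).congr_of_eventuallyEq (.of_forall fun x => by ring)

lemma continuousOn_powerTail (n : ℕ) {a : ℝ} (ha : 0 < a) : ContinuousOn (powerTail n) (Ici a) :=
  continuousOn_const.mul (continuousOn_rpow_const_Ici _ ha)

lemma tendsto_powerTail_atTop (hn : 1 < n) : Tendsto (powerTail n) atTop (𝓝 0) := by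
  have := one_lt_del hn
  have := (tendsto_rpow_neg_atTop (y := del n) (by linarith)).const_mul (lam n)
  rwa [mul_zero] at this

lemma rpow_neg_del_le_one_div (hn : 1 < n) (hz : 1 ≤ z) : z ^ (-del n) ≤ 1 / z := by
  have := one_lt_del hn
  rw [one_div, ← Real.rpow_neg_one]
  exact Real.rpow_le_rpow_of_exponent_le hz (by linarith)

lemma rpow_neg_del_add_two (hn : 1 < n) (hz : 0 < z) :
    z ^ (-(del n + 2)) = powerTail n z / z ^ 2 / lam n := by
  have := lam_pos hn
  rw [neg_add', Real.rpow_sub hz, powerTail, Real.rpow_ofNat]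
  field_simp

lemma tailRatio_le_mul_one_div_sq (hn : 1 < n) (hz : 1 ≤ z) :
    tailRatio n z ≤ tailRatio n 1 * (1 / z ^ 2) := by
  have : 0 < z := by linarith
  have := tailRatio_pos hn one_pos
  calc tailRatio n z = tailRatio n 1 * (z ^ (-del n) / z) := by
        simp only [tailRatio, powerTail, Real.one_rpow]
        ring
    _ ≤ tailRatio n 1 * (1 / z / z) := by gcongr; exact rpow_neg_del_le_one_div hn hz
    _ = tailRatio n 1 * (1 / z ^ 2) := by rw [div_div, sq]

lemma tailRatio_le_tailRatio_one (hn : 1 < n) (hz : 1 ≤ z) : tailRatio n z ≤ tailRatio n 1 :=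
  (tailRatio_le_mul_one_div_sq hn hz).trans
    (mul_le_of_le_one_right (tailRatio_pos hn one_pos).le (one_div_sq_le_one hz))

lemma two_kap_mul_powerTail_pow (hn : 1 < n) (hz : 0 < z) :
    (2 * kap * z * powerTail n z) ^ n = del n * (del n + 1) * (powerTail n z / z ^ 2) := by
  have hpow : (z * z ^ (-del n)) ^ n = z ^ (-del n) / z ^ 2 := by
    rw [← Real.rpow_one_add' hz.le (by linarith [one_lt_del hn]), ← Real.rpow_natCast,
      ← Real.rpow_mul hz.le, mul_comm (1 + -del n), ← sub_eq_add_neg, cast_mul_one_sub_del hn,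
      Real.rpow_sub hz, Real.rpow_ofNat]
  calc (2 * kap * z * powerTail n z) ^ n
      = (2 * kap) ^ n * lam n ^ n * (z * z ^ (-del n)) ^ n := by
        rw [← mul_pow, ← mul_pow, powerTail]
        ring
    _ = del n * (del n + 1) * (powerTail n z / z ^ 2) := by
        rw [hpow, two_kap_pow_mul_lam_pow hn, powerTail]
        ring

/-- The quotient `η / v` of a profile by the power tail. -/
noncomputable def relProfile (n : ℕ) (η : ℝ → ℝ) (z : ℝ) : ℝ := η z / powerTail n z

/-- The base of the reaction term of `η` relative to `2κzv`. -/
noncomputable def relBase (n : ℕ) (η : ℝ → ℝ) (z : ℝ) : ℝ :=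
  relProfile n η z + tailRatio n z * relProfile n η z ^ 2

lemma powerTail_mul_relProfile (hn : 1 < n) (hz : 0 < z) (η : ℝ → ℝ) :
    powerTail n z * relProfile n η z = η z :=
  mul_div_cancel₀ _ (powerTail_pos hn hz).ne'

lemma reactBase_eq (hn : 1 < n) (hz : 0 < z) (η : ℝ → ℝ) :
    reactBase z (η z) = 2 * kap * z * powerTail n z * relBase n η z := by
  have := kap_pos
  rw [← powerTail_mul_relProfile hn hz η, reactBase, relBase, tailRatio]
  field_simp

lemma reactBase_pow_eq (hn : 1 < n) (hz : 0 < z) (η : ℝ → ℝ) :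
    reactBase z (η z) ^ n
      = del n * (del n + 1) * (powerTail n z / z ^ 2) * relBase n η z ^ n := by
  rw [reactBase_eq hn hz, mul_pow, two_kap_mul_powerTail_pow hn hz]

end PowerTail

/-! ### The reactive profile at infinity -/

/-- The reactive equation on the open half-line, with `η'` the derivative of `η`; the conditions at
the origin play no role for the behaviour at infinity. -/
structure ReactiveSolution (n : ℕ) (η η' : ℝ → ℝ) : Prop where
  hasDerivAt : ∀ z > 0, HasDerivAt η (η' z) z
  hasDerivAt_deriv : ∀ z > 0, HasDerivAt η' (reactBase z (η z) ^ n) z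
  pos : ∀ z > 0, 0 < η z
  tendsto_zero : Tendsto η atTop (𝓝 0)

lemma IsReactiveProfile.reactiveSolution {n : ℕ} {η : ℝ → ℝ} (h : IsReactiveProfile n η) :
    ReactiveSolution n η (derivWithin η (Ici 0)) where
  hasDerivAt _ hz := hasDerivAt_derivWithin_Ici (h.1.differentiableOn (by norm_num)) hz
  hasDerivAt_deriv z hz := (hasDerivAt_derivWithin_Ici
    ((contDiffOn_derivWithin_Ici h.1).differentiableOn (by norm_num)) hz).congr_deriv
      (h.2.2.1 z hz.le)
  pos z hz := h.2.1 z hz.le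
  tendsto_zero := h.2.2.2.2

/-- Second-order agreement of `η`, and of its reaction term, with the power tail on `[1, ∞)`. -/
structure ReactiveTail (n : ℕ) (η : ℝ → ℝ) (M : ℝ) : Prop where
  one_le : 1 ≤ M
  tailRatio_le : ∀ z ≥ 1, tailRatio n z ≤ M * (1 / z ^ 2)
  abs_relProfile_sub_one_le : ∀ z ≥ 1, |relProfile n η z - 1| ≤ M * (1 / z ^ 2)
  abs_relBase_sub_one_le : ∀ z ≥ 1, |relBase n η z - 1| ≤ M * (1 / z ^ 2)

namespace ReactiveTail

variable {n : ℕ} {η : ℝ → ℝ} {M z : ℝ}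

lemma tailRatio_le_const (h : ReactiveTail n η M) (hz : 1 ≤ z) : tailRatio n z ≤ M :=
  (h.tailRatio_le z hz).trans
    (mul_le_of_le_one_right (by linarith [h.one_le]) (one_div_sq_le_one hz))

lemma abs_relProfile_le (h : ReactiveTail n η M) (hz : 1 ≤ z) : |relProfile n η z| ≤ 1 + M :=
  abs_le_one_add_of_abs_sub_one_le ((h.abs_relProfile_sub_one_le z hz).trans
    (mul_le_of_le_one_right (by linarith [h.one_le]) (one_div_sq_le_one hz)))

lemma abs_relBase_le (h : ReactiveTail n η M) (hz : 1 ≤ z) : |relBase n η z| ≤ 1 + M :=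
  abs_le_one_add_of_abs_sub_one_le ((h.abs_relBase_sub_one_le z hz).trans
    (mul_le_of_le_one_right (by linarith [h.one_le]) (one_div_sq_le_one hz)))

end ReactiveTail

section ReactiveAsymptotics

lemma add_mul_sq_pow_lt {n : ℕ} (hn : 1 < n) {θ r a R : ℝ} (hr : 0 ≤ r) (hrR : r ≤ R) (hθ : 0 ≤ θ)
    (hθa : θ ≤ a) (ha : 0 < a) (haR : a * (1 + R) ^ 2 ≤ 1 / 2) : (θ + r * θ ^ 2) ^ n < a := by
  have hR : 0 ≤ R := hr.trans hrR
  have ha1 : a ≤ 1 := by nlinarith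
  have haR1 : a * (1 + R) ≤ 1 := by nlinarith
  have hbase : θ + r * θ ^ 2 ≤ a * (1 + R) := by
    have : r * θ ^ 2 ≤ R * a := mul_le_mul hrR (by nlinarith) (by positivity) hR
    linarith
  calc (θ + r * θ ^ 2) ^ n ≤ (a * (1 + R)) ^ n := pow_le_pow_left₀ (by positivity) hbase n
    _ ≤ (a * (1 + R)) ^ 2 := pow_le_pow_of_le_one (by positivity) haR1 hn
    _ = a * (a * (1 + R) ^ 2) := by ring
    _ < a := by nlinarith

lemma add_mul_sq_pow_le (n : ℕ) {θ r R : ℝ} (hr : 0 ≤ r) (hrR : r ≤ R) (hθ : 0 ≤ θ) (hθ1 : θ ≤ 1) :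
    (θ + r * θ ^ 2) ^ n ≤ θ ^ n + n * (1 + R) ^ (n - 1) * r := by
  have hpert : (1 + r) ^ n - 1 ≤ n * (1 + R) ^ (n - 1) * r := by
    have := abs_pow_sub_one_le n (x := 1 + r) (M := 1 + R) (by linarith)
      (by rw [abs_of_nonneg (by linarith)]; linarith)
    rw [add_sub_cancel_left, abs_of_nonneg hr] at this
    exact (le_abs_self _).trans this
  have hR : 0 ≤ R := hr.trans hrR
  have hbound : 0 ≤ n * (1 + R) ^ (n - 1) * r := by positivity
  calc (θ + r * θ ^ 2) ^ n ≤ (θ * (1 + r)) ^ n := by gcongr; nlinarith [mul_nonneg hr hθ]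
    _ = θ ^ n + θ ^ n * ((1 + r) ^ n - 1) := by rw [mul_pow]; ring
    _ ≤ θ ^ n + θ ^ n * (n * (1 + R) ^ (n - 1) * r) := by gcongr
    _ ≤ θ ^ n + n * (1 + R) ^ (n - 1) * r := by
        exact add_le_add_right (mul_le_of_le_one_left hbound (pow_le_one₀ hθ hθ1)) _

lemma one_add_mul_one_sub_le_one_sub_pow {n : ℕ} (hn : 1 < n) {a θ : ℝ} (hθ0 : 0 ≤ θ) (ha : a ≤ θ)
    (hθ : θ ≤ 1) :
    (1 + a) * (1 - θ) ≤ 1 - θ ^ n := by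
  have := pow_le_pow_of_le_one hθ0 hθ hn
  nlinarith

namespace ReactiveSolution

variable {n : ℕ} {η η' : ℝ → ℝ} {z : ℝ}

lemma continuousOn (h : ReactiveSolution n η η') {a : ℝ} (ha : 0 < a) : ContinuousOn η (Ici a) :=
  fun z hz => (h.hasDerivAt z (ha.trans_le hz)).continuousAt.continuousWithinAt

lemma relProfile_pos (h : ReactiveSolution n η η') (hn : 1 < n) (hz : 0 < z) :
    0 < relProfile n η z := div_pos (h.pos z hz) (powerTail_pos hn hz)

lemma hasDerivAt_sub_powerTail (h : ReactiveSolution n η η') (hz : 0 < z) :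
    HasDerivAt (fun z => η z - powerTail n z) (η' z - -del n * (powerTail n z / z)) z :=
  (h.hasDerivAt z hz).sub (hasDerivAt_powerTail n hz)

lemma hasDerivAt_deriv_sub_powerTail (h : ReactiveSolution n η η') (hn : 1 < n) (hz : 0 < z) :
    HasDerivAt (fun z => η' z - -del n * (powerTail n z / z))
      (del n * (del n + 1) * (powerTail n z / z ^ 2) * (relBase n η z ^ n - 1)) z := by
  refine ((h.hasDerivAt_deriv z hz).sub (hasDerivAt_deriv_powerTail n hz)).congr_deriv ?_
  rw [reactBase_pow_eq hn hz]
  ring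

/-- A small multiple of the power tail is a subsolution. -/
lemma exists_mul_powerTail_le (h : ReactiveSolution n η η') (hn : 1 < n) :
    ∃ a > 0, ∀ z ≥ 1, a * powerTail n z ≤ η z := by
  have hv1 := powerTail_pos hn one_pos
  have hR := tailRatio_pos hn one_pos
  have hη1 := h.pos 1 one_pos
  set a := min (η 1 / powerTail n 1) (1 / (2 * (1 + tailRatio n 1) ^ 2))
  have ha : 0 < a := by positivity
  have haη : a * powerTail n 1 ≤ η 1 := (le_div_iff₀ hv1).1 (min_le_left _ _)
  have haR : a * (1 + tailRatio n 1) ^ 2 ≤ 1 / 2 := by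
    have := (le_div_iff₀ (by positivity)).1
      (min_le_right (η 1 / powerTail n 1) (1 / (2 * (1 + tailRatio n 1) ^ 2)))
    linarith
  refine ⟨a, ha, ?_⟩
  have hcmp := nonpos_on_Ici_of_second_deriv_pos (f := fun z => a * powerTail n z - η z)
    ((continuousOn_const.mul (continuousOn_powerTail n one_pos)).sub (h.continuousOn one_pos))
    (fun z hz => ((hasDerivAt_powerTail n (one_pos.trans hz)).const_mul a).sub
      (h.hasDerivAt z (one_pos.trans hz)))
    (fun z hz => ((hasDerivAt_deriv_powerTail n (one_pos.trans hz)).const_mul a).sub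
      (h.hasDerivAt_deriv z (one_pos.trans hz)))
    (by linarith) (by simpa using ((tendsto_powerTail_atTop hn).const_mul a).sub h.tendsto_zero)
    fun z hz hpos => by
      have hz0 : 0 < z := one_pos.trans hz
      have hv := powerTail_pos hn hz0
      have hsmall : relProfile n η z ≤ a := ((div_lt_iff₀ hv).2 (by linarith)).le
      have hlt := add_mul_sq_pow_lt hn (tailRatio_pos hn hz0).le
        (tailRatio_le_tailRatio_one hn hz.le) (h.relProfile_pos hn hz0).le hsmall ha haR
      rw [← relBase] at hlt
      have hcoef : 0 < del n * (del n + 1) * (powerTail n z / z ^ 2) :=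
        mul_pos (del_mul_succ_pos hn) (by positivity)
      rw [reactBase_pow_eq hn hz0]
      linarith [mul_lt_mul_of_pos_left hlt hcoef]
  exact fun z hz => by linarith [hcmp z hz]

/-- Above the tail the reaction term is convex, so `η - v` is a subsolution of a linear equation
with coefficient `nδ(δ+1) ≥ 22 > (δ+2)(δ+3)`. -/
lemma exists_sub_powerTail_le (h : ReactiveSolution n η η') (hn : 4 ≤ n) :
    ∃ C > 0, ∀ z ≥ 1, η z - powerTail n z ≤ C * z ^ (-(del n + 2)) := by
  have hn1 : 1 < n := by lia
  have hd := one_lt_del hn1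
  have hd2 := del_le_two hn
  refine exists_le_mul_rpow_neg_of_second_deriv_ge (k := 21) (K := 0) one_pos (by linarith)
    (by nlinarith) ((h.continuousOn one_pos).sub (continuousOn_powerTail n one_pos))
    (fun z hz => h.hasDerivAt_sub_powerTail (one_pos.trans hz))
    (fun z hz => h.hasDerivAt_deriv_sub_powerTail hn1 (one_pos.trans hz))
    (by simpa using h.tendsto_zero.sub (tendsto_powerTail_atTop hn1)) fun z hz hpos => ?_
  have hz0 : 0 < z := one_pos.trans hz
  have hv := powerTail_pos hn1 hz0
  have hθ : 1 < relProfile n η z := (one_lt_div hv).2 (by linarith)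
  have hr := tailRatio_pos hn1 hz0
  have hbern : n * (relProfile n η z - 1) ≤ relBase n η z ^ n - 1 := by
    have hle : relProfile n η z ≤ relBase n η z := le_add_of_nonneg_right (by positivity)
    have := one_add_mul_le_pow (a := relProfile n η z - 1) (by linarith) n
    rw [add_sub_cancel] at this
    linarith [pow_le_pow_left₀ (by linarith) hle n]
  have : 0 ≤ powerTail n z / z ^ 2 * (relProfile n η z - 1) :=
    mul_nonneg (by positivity) (by linarith)
  calc 21 * ((η z - powerTail n z) / z ^ 2) - 0 * (z ^ (-(del n + 2)) / z ^ 2)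
      = 21 * (powerTail n z / z ^ 2 * (relProfile n η z - 1)) := by
        rw [← powerTail_mul_relProfile hn1 hz0 η]; ring
    _ ≤ n * (del n * (del n + 1)) * (powerTail n z / z ^ 2 * (relProfile n η z - 1)) := by
        gcongr; linarith [cast_mul_del_mul_succ_ge hn1]
    _ = del n * (del n + 1) * (powerTail n z / z ^ 2) * (n * (relProfile n η z - 1)) := by ring
    _ ≤ _ := by gcongr

/-- One step of the bootstrap for the lower bound: `k` bounds the secant slope of
`δ(δ+1)θ^n` between `η / v` and `1` from below, and any exponent gain `s` with `(δ+s)(δ+s+1) < k`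
is admissible. -/
lemma exists_powerTail_sub_le (h : ReactiveSolution n η η') (hn : 1 < n) {z₁ k s : ℝ}
    (hz₁ : 1 ≤ z₁) (hs : 0 < s) (hs2 : s ≤ 2) (hk : (del n + s) * (del n + s + 1) < k)
    (hsecant : ∀ z > z₁, relProfile n η z < 1 →
      k * (1 - relProfile n η z) ≤ del n * (del n + 1) * (1 - relProfile n η z ^ n)) :
    ∃ C > 0, ∀ z ≥ z₁, powerTail n z - η z ≤ C * z ^ (-(del n + s)) := by
  have hz₁0 : 0 < z₁ := by linarith
  have hd := one_lt_del hn
  have hl := lam_pos hn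
  have hR := tailRatio_pos hn one_pos
  set P := n * (1 + tailRatio n 1) ^ (n - 1)
  simp only [← neg_sub (η _) (powerTail n _)]
  refine exists_le_mul_rpow_neg_of_second_deriv_ge (k := k)
    (K := del n * (del n + 1) * (P * (tailRatio n 1 * lam n))) hz₁0 (by linarith) hk
    ((h.continuousOn hz₁0).sub (continuousOn_powerTail n hz₁0)).neg
    (fun z hz => (h.hasDerivAt_sub_powerTail (hz₁0.trans hz)).neg)
    (fun z hz => (h.hasDerivAt_deriv_sub_powerTail hn (hz₁0.trans hz)).neg)
    (by simpa using (h.tendsto_zero.sub (tendsto_powerTail_atTop hn)).neg) fun z hz hpos => ?_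
  have hz0 : 0 < z := hz₁0.trans hz
  have hz1 : 1 ≤ z := hz₁.trans hz.le
  have hv := powerTail_pos hn hz0
  have hθ : relProfile n η z < 1 := (div_lt_one hv).2 (by linarith)
  have hpow : relBase n η z ^ n ≤ relProfile n η z ^ n + P * tailRatio n z :=
    add_mul_sq_pow_le n (tailRatio_pos hn hz0).le (tailRatio_le_tailRatio_one hn hz1)
      (h.relProfile_pos hn hz0).le hθ.le
  have hratio : powerTail n z * tailRatio n z ≤ tailRatio n 1 * lam n * z ^ (-(del n + s)) :=
    calc powerTail n z * tailRatio n z ≤ powerTail n z * (tailRatio n 1 * (1 / z ^ 2)) := by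
          gcongr; exact tailRatio_le_mul_one_div_sq hn hz1
      _ = tailRatio n 1 * lam n * z ^ (-(del n + 2)) := by
          rw [rpow_neg_del_add_two hn hz0]; field_simp
      _ ≤ _ := by gcongr
  have hq : 0 < powerTail n z / z ^ 2 := by positivity
  calc k * (-(η z - powerTail n z) / z ^ 2)
        - del n * (del n + 1) * (P * (tailRatio n 1 * lam n)) * (z ^ (-(del n + s)) / z ^ 2)
      = powerTail n z / z ^ 2 * (k * (1 - relProfile n η z))
        - del n * (del n + 1) * P * (tailRatio n 1 * lam n * z ^ (-(del n + s))) / z ^ 2 := by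
        rw [← powerTail_mul_relProfile hn hz0 η]; ring
    _ ≤ powerTail n z / z ^ 2 * (del n * (del n + 1) * (1 - relProfile n η z ^ n))
        - del n * (del n + 1) * P * (powerTail n z * tailRatio n z) / z ^ 2 := by
        exact sub_le_sub (mul_le_mul_of_nonneg_left (hsecant z hz hθ) hq.le) (by gcongr)
    _ = del n * (del n + 1) * (powerTail n z / z ^ 2)
        * (1 - (relProfile n η z ^ n + P * tailRatio n z)) := by ring
    _ ≤ del n * (del n + 1) * (powerTail n z / z ^ 2) * (1 - relBase n η z ^ n) := by gcongr
    _ = _ := by ring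

lemma exists_pos_powerTail_sub_le (h : ReactiveSolution n η η') (hn : 4 ≤ n) :
    ∃ s > 0, ∃ C > 0, ∀ z ≥ 1, powerTail n z - η z ≤ C * z ^ (-(del n + s)) := by
  have hn1 : 1 < n := by lia
  have hd := one_lt_del hn1
  obtain ⟨b, hb, hlow⟩ := h.exists_mul_powerTail_le hn1
  set a := min b 1
  have ha : 0 < a := lt_min hb one_pos
  have ha1 : a ≤ 1 := min_le_right _ _
  refine ⟨a / 10, by positivity, h.exists_powerTail_sub_le hn1
    (k := del n * (del n + 1) * (1 + a)) le_rfl (by positivity) (by linarith)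
    (by nlinarith [mul_pos ha (sub_pos.2 hd), mul_pos ha (sq_pos_of_pos (sub_pos.2 hd))])
    fun z hz hθ => ?_⟩
  have hz0 : 0 < z := one_pos.trans hz
  have haθ : a ≤ relProfile n η z :=
    (min_le_left _ _).trans ((le_div_iff₀ (powerTail_pos hn1 hz0)).2 (hlow z hz.le))
  rw [mul_assoc]
  exact mul_le_mul_of_nonneg_left
    (one_add_mul_one_sub_le_one_sub_pow hn1 (h.relProfile_pos hn1 hz0).le haθ hθ.le)
    (del_mul_succ_pos hn1).le

lemma eventually_lt_relProfile_pow (h : ReactiveSolution n η η') (hn : 4 ≤ n) {c : ℝ} (hc : c < 1) :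
    ∀ᶠ z in atTop, c < relProfile n η z ^ (n - 1) := by
  have hn1 : 1 < n := by lia
  have hl := lam_pos hn1
  obtain ⟨s, hs, C, -, hlow⟩ := h.exists_pos_powerTail_sub_le hn
  have hlim : Tendsto (fun z : ℝ => 1 - C / lam n * z ^ (-s)) atTop (𝓝 1) := by
    simpa using ((tendsto_rpow_neg_atTop hs).const_mul (C / lam n)).const_sub 1
  have hlimpow := hlim.pow (n - 1)
  rw [one_pow] at hlimpow
  filter_upwards [hlim.eventually_const_lt one_pos, hlimpow.eventually_const_lt hc,
    eventually_ge_atTop 1] with z hpos hlt hz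
  have hz0 : 0 < z := by linarith
  refine hlt.trans_le (pow_le_pow_left₀ hpos.le ((le_div_iff₀ (powerTail_pos hn1 hz0)).2 ?_) _)
  have hz' := hlow z hz
  rw [neg_add, Real.rpow_add hz0] at hz'
  have : C / lam n * z ^ (-s) * powerTail n z = C * (z ^ (-del n) * z ^ (-s)) := by
    unfold powerTail
    field_simp
  linarith

lemma exists_powerTail_sub_le_two (h : ReactiveSolution n η η') (hn : 4 ≤ n) :
    ∃ z₁ ≥ 1, ∃ C > 0, ∀ z ≥ z₁, powerTail n z - η z ≤ C * z ^ (-(del n + 2)) := by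
  have hn1 : 1 < n := by lia
  have hd := one_lt_del hn1
  have hd2 := del_le_two hn
  have := del_mul_succ_pos hn1
  obtain ⟨z₁, hz₁⟩ := ((h.eventually_lt_relProfile_pow hn (show (21 / 22 : ℝ) < 1 by
    norm_num)).and (eventually_ge_atTop 1)).exists_forall_of_atTop
  have hz₁1 : 1 ≤ z₁ := (hz₁ z₁ le_rfl).2
  refine ⟨z₁, hz₁1, h.exists_powerTail_sub_le hn1 (k := 21) hz₁1 two_pos le_rfl (by nlinarith)
    fun z hz hθ => ?_⟩
  have hz0 : 0 < z := by linarith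
  have : 0 ≤ 1 - relProfile n η z := by linarith
  have htangent := mul_pow_pred_mul_sub_le_pow_sub_pow n (h.relProfile_pos hn1 hz0).le zero_le_one
  rw [one_pow] at htangent
  calc 21 * (1 - relProfile n η z) = 22 * (21 / 22) * (1 - relProfile n η z) := by ring
    _ ≤ n * (del n * (del n + 1)) * relProfile n η z ^ (n - 1) * (1 - relProfile n η z) := by
        gcongr
        exacts [cast_mul_del_mul_succ_ge hn1, (hz₁ z hz.le).1.le]
    _ = del n * (del n + 1) * (n * relProfile n η z ^ (n - 1) * (1 - relProfile n η z)) := by ring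
    _ ≤ _ := by gcongr

lemma exists_abs_sub_powerTail_le (h : ReactiveSolution n η η') (hn : 4 ≤ n) :
    ∃ C > 0, ∀ z ≥ 1, |η z - powerTail n z| ≤ C * z ^ (-(del n + 2)) := by
  obtain ⟨C, hC, hup⟩ := h.exists_sub_powerTail_le hn
  obtain ⟨z₁, hz₁, C', hC', hlow⟩ := h.exists_powerTail_sub_le_two hn
  refine exists_abs_le_mul_on_Ici (a := z₁) (C := C + C')
    ((h.continuousOn one_pos).sub (continuousOn_powerTail n one_pos))
    (continuousOn_rpow_const_Ici _ one_pos) (fun z hz => Real.rpow_pos_of_pos (by linarith) _)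
    fun z hz => ?_
  have hw : 0 < z ^ (-(del n + 2)) := Real.rpow_pos_of_pos (by linarith) _
  rw [abs_le]
  constructor <;> nlinarith [hup z (hz₁.trans hz), hlow z hz]

lemma exists_reactiveTail (h : ReactiveSolution n η η') (hn : 4 ≤ n) :
    ∃ M, ReactiveTail n η M := by
  have hn1 : 1 < n := by lia
  have hl := lam_pos hn1
  have hR := tailRatio_pos hn1 one_pos
  obtain ⟨C, hC, hclose⟩ := h.exists_abs_sub_powerTail_le hn
  set D := C / lam n
  set R := tailRatio n 1
  have hD : 0 < D := by positivity
  have hrel : ∀ z ≥ 1, |relProfile n η z - 1| ≤ D * (1 / z ^ 2) := by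
    intro z hz
    have hz0 : 0 < z := by linarith
    have hv := powerTail_pos hn1 hz0
    rw [relProfile, div_sub_one hv.ne', abs_div, abs_of_pos hv, div_le_iff₀ hv]
    refine (hclose z hz).trans_eq ?_
    rw [rpow_neg_del_add_two hn1 hz0]
    ring
  have hbase : ∀ z ≥ 1, |relBase n η z - 1| ≤ (D + R * (1 + D) ^ 2) * (1 / z ^ 2) := by
    intro z hz
    have hr := tailRatio_pos hn1 (one_pos.trans_le hz)
    have hθ : |relProfile n η z| ≤ 1 + D := abs_le_one_add_of_abs_sub_one_le
      ((hrel z hz).trans (mul_le_of_le_one_right hD.le (one_div_sq_le_one hz)))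
    calc |relBase n η z - 1|
        ≤ |relProfile n η z - 1| + tailRatio n z * |relProfile n η z| ^ 2 := by
          rw [relBase, add_sub_right_comm]
          refine (abs_add_le _ _).trans_eq ?_
          rw [abs_mul, abs_of_pos hr, abs_pow]
      _ ≤ D * (1 / z ^ 2) + R * (1 / z ^ 2) * (1 + D) ^ 2 := by
          gcongr
          exacts [hrel z hz, tailRatio_le_mul_one_div_sq hn1 hz]
      _ = _ := by ring
  have hRD : 0 < R * (1 + D) ^ 2 := by positivity
  refine ⟨1 + R + (D + R * (1 + D) ^ 2), by linarith,
    fun z hz => (tailRatio_le_mul_one_div_sq hn1 hz).trans ?_,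
    fun z hz => (hrel z hz).trans ?_, fun z hz => (hbase z hz).trans ?_⟩ <;>
  exact mul_le_mul_of_nonneg_right (by linarith) (by positivity)

lemma exists_abs_mul_deriv_add_le (h : ReactiveSolution n η η') (hn : 4 ≤ n) :
    ∃ L > 0, ∀ z ≥ 1, |z * η' z + del n * powerTail n z| ≤ L * (powerTail n z / z ^ 2) := by
  have hn1 : 1 < n := by lia
  have hd := one_lt_del hn1
  have hdd := del_mul_succ_pos hn1
  have hl := lam_pos hn1
  obtain ⟨C, hC, hclose⟩ := h.exists_abs_sub_powerTail_le hn
  obtain ⟨M, hM⟩ := h.exists_reactiveTail hn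
  have hM1 := hM.one_le
  set P := n * (1 + M) ^ (n - 1)
  have hP : 0 ≤ P := by positivity
  have hderiv := abs_deriv_le_of_abs_le_rpow_neg (K := del n * (del n + 1) * lam n * (P * M))
    (by linarith) hC.le (by positivity)
    (fun z hz => h.hasDerivAt_sub_powerTail (one_pos.trans_le hz))
    (fun z hz => h.hasDerivAt_deriv_sub_powerTail hn1 (one_pos.trans_le hz)) hclose
    fun z hz => by
      have hz0 : 0 < z := by linarith
      have hcoef : 0 < del n * (del n + 1) * (powerTail n z / z ^ 2) :=
        mul_pos hdd (div_pos (powerTail_pos hn1 hz0) (by positivity))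
      have hpow : |relBase n η z ^ n - 1| ≤ P * (M * (1 / z ^ 2)) :=
        (abs_pow_sub_one_le n (by linarith) (hM.abs_relBase_le hz)).trans
          (mul_le_mul_of_nonneg_left (hM.abs_relBase_sub_one_le z hz) hP)
      rw [abs_mul, abs_of_pos hcoef, rpow_neg_del_add_two hn1 hz0]
      refine (mul_le_mul_of_nonneg_left hpow hcoef.le).trans_eq ?_
      field_simp
  refine ⟨(2 * C + del n * (del n + 1) * lam n * (P * M)) / lam n, by positivity, fun z hz => ?_⟩
  have hz0 : 0 < z := by linarith
  calc |z * η' z + del n * powerTail n z| = z * |η' z - -del n * (powerTail n z / z)| := by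
        rw [← abs_of_pos hz0, ← abs_mul, abs_of_pos hz0]
        congr 1
        field_simp
        ring
    _ ≤ z * _ := mul_le_mul_of_nonneg_left (hderiv z hz) hz0.le
    _ = _ := by
        rw [rpow_neg_del_add_two hn1 hz0]
        field_simp

end ReactiveSolution

end ReactiveAsymptotics

/-! ### The corrector at infinity -/

section NearOne

/-- `f = 1 + O(z⁻²)` on `[1, ∞)`. -/
def NearOne (f : ℝ → ℝ) : Prop := ∃ C > 0, ∀ z ≥ 1, |f z - 1| ≤ C * (1 / z ^ 2)

variable {f g : ℝ → ℝ}

lemma NearOne.mul (hf : NearOne f) (hg : NearOne g) : NearOne fun z => f z * g z := by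
  obtain ⟨C, hC, hfC⟩ := hf
  obtain ⟨D, hD, hgD⟩ := hg
  refine ⟨C * (1 + D) + D, by positivity, fun z hz => ?_⟩
  have hgb : |g z| ≤ 1 + D := abs_le_one_add_of_abs_sub_one_le
    ((hgD z hz).trans (mul_le_of_le_one_right hD.le (one_div_sq_le_one hz)))
  calc |f z * g z - 1| = |(f z - 1) * g z + (g z - 1)| := by ring_nf
    _ ≤ |f z - 1| * |g z| + |g z - 1| := by rw [← abs_mul]; exact abs_add_le _ _
    _ ≤ C * (1 / z ^ 2) * (1 + D) + D * (1 / z ^ 2) := by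
        gcongr
        exacts [hfC z hz, hgD z hz]
    _ = (C * (1 + D) + D) * (1 / z ^ 2) := by ring

lemma NearOne.pow (hf : NearOne f) (k : ℕ) : NearOne fun z => f z ^ k := by
  induction k with
  | zero => exact ⟨1, one_pos, fun z _ => by simpa using sq_nonneg z⟩
  | succ k ih => simpa only [pow_succ] using ih.mul hf

end NearOne

section Corrector

variable {n : ℕ} {η η' h h' : ℝ → ℝ} {M z : ℝ}

/-- The right-hand side of the corrector equation: the first variation of `reactBase z a ^ n` when
`a` varies in the direction `b` and `κz` in the direction `κ₃z³`. -/
noncomputable def corrSource (n : ℕ) (z a b : ℝ) : ℝ :=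
  n * reactBase z a ^ (n - 1) * ((2 * kap * z + 2 * a) * b + 2 * kap3 * z ^ 3 * a)

/-- The derivative of the reaction term at `η`, relative to its value at the power tail. -/
noncomputable def relSlope (n : ℕ) (η : ℝ → ℝ) (z : ℝ) : ℝ :=
  relBase n η z ^ (n - 1) * (1 + 2 * tailRatio n z * relProfile n η z)

lemma two_kap_mul_powerTail_pow_pred (hn : 1 < n) (hz : 0 < z) :
    (2 * kap * z * powerTail n z) ^ (n - 1) * (2 * kap * z) = del n * (del n + 1) / z ^ 2 := by
  refine mul_right_cancel₀ (powerTail_pos hn hz).ne' ?_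
  rw [mul_assoc, pow_sub_one_mul (by lia), two_kap_mul_powerTail_pow hn hz]
  ring

lemma corrSource_eq (hn : 1 < n) (hz : 0 < z) (η : ℝ → ℝ) (b : ℝ) :
    corrSource n z (η z) b = n * (del n * (del n + 1)) / z ^ 2
      * (relSlope n η z * b
        - 1 / 12 * (z ^ 2 * powerTail n z) * (relBase n η z ^ (n - 1) * relProfile n η z)) := by
  have := kap_pos
  have hlinear : (2 * kap * z + 2 * η z) * b + 2 * kap3 * z ^ 3 * η z
      = 2 * kap * z * ((1 + 2 * tailRatio n z * relProfile n η z) * b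
        - 1 / 12 * (z ^ 2 * powerTail n z) * relProfile n η z) := by
    rw [← powerTail_mul_relProfile hn hz η, tailRatio, kap3]
    field_simp
    ring
  rw [corrSource, reactBase_eq hn hz, mul_pow, hlinear, relSlope]
  linear_combination n * relBase n η z ^ (n - 1)
    * ((1 + 2 * tailRatio n z * relProfile n η z) * b
      - 1 / 12 * (z ^ 2 * powerTail n z) * relProfile n η z)
    * two_kap_mul_powerTail_pow_pred hn hz

lemma ReactiveTail.nearOne_relProfile (h : ReactiveTail n η M) : NearOne (relProfile n η) :=
  ⟨M, one_pos.trans_le h.one_le, h.abs_relProfile_sub_one_le⟩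

lemma ReactiveTail.nearOne_relBase (h : ReactiveTail n η M) : NearOne (relBase n η) :=
  ⟨M, one_pos.trans_le h.one_le, h.abs_relBase_sub_one_le⟩

lemma ReactiveTail.nearOne_relSlope (h : ReactiveTail n η M) (hn : 1 < n) :
    NearOne (relSlope n η) := by
  have hM := h.one_le
  refine (h.nearOne_relBase.pow (n - 1)).mul ⟨2 * M * (1 + M), by positivity, fun z hz => ?_⟩
  have hr := tailRatio_pos hn (one_pos.trans_le hz)
  rw [add_sub_cancel_left, abs_mul, abs_of_pos (by positivity : 0 < 2 * tailRatio n z)]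
  calc 2 * tailRatio n z * |relProfile n η z| ≤ 2 * (M * (1 / z ^ 2)) * (1 + M) := by
        gcongr
        exacts [h.tailRatio_le z hz, h.abs_relProfile_le hz]
    _ = 2 * M * (1 + M) * (1 / z ^ 2) := by ring

/-- The corrector equation on the open half-line, with `h'` the derivative of `h`, together with the
matching condition at infinity. -/
structure CorrectorSolution (n : ℕ) (η η' h h' : ℝ → ℝ) : Prop where
  hasDerivAt : ∀ z > 0, HasDerivAt h (h' z) z
  hasDerivAt_deriv : ∀ z > 0,
    HasDerivAt h' (corrSource n z (η z) (h z) - gam n * η z - alph n * (z * η' z)) z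
  tendsto_zero : Tendsto (fun z => h z - lam0 n * z ^ (2 - del n)) atTop (𝓝 0)

lemma IsCorrector.correctorSolution (hh : IsCorrector n η h) :
    CorrectorSolution n η (derivWithin η (Ici 0)) h (derivWithin h (Ici 0)) where
  hasDerivAt _ hz := hasDerivAt_derivWithin_Ici (hh.1.differentiableOn (by norm_num)) hz
  hasDerivAt_deriv z hz := (hasDerivAt_derivWithin_Ici
    ((contDiffOn_derivWithin_Ici hh.1).differentiableOn (by norm_num)) hz).congr_deriv (by
      rw [corrSource, reactBase, ← hh.2.1 z hz.le]
      ring)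
  tendsto_zero := hh.2.2.2

lemma lam0_mul_rpow (hn : 1 < n) (hz : 0 < z) :
    lam0 n * z ^ (2 - del n) = corrRatio n * (z ^ 2 * powerTail n z) := by
  rw [sub_eq_add_neg, Real.rpow_add hz, powerTail, lam0_eq hn, Real.rpow_ofNat]
  ring

lemma phi2_eq (hn : 1 < n) (hz : 0 < z) (h : ℝ → ℝ) :
    phi2 n h z = h z - corrRatio n * (z ^ 2 * powerTail n z) := by
  rw [phi2, neg_mul, lam0_mul_rpow hn hz]
  ring

lemma hasDerivAt_sq_mul_powerTail (n : ℕ) (hz : 0 < z) :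
    HasDerivAt (fun z => z ^ 2 * powerTail n z) ((2 - del n) * (z * powerTail n z)) z := by
  refine ((hasDerivAt_pow 2 z).mul (hasDerivAt_powerTail n hz)).congr_deriv ?_
  field_simp
  push_cast
  ring

lemma hasDerivAt_mul_powerTail (n : ℕ) (hz : 0 < z) :
    HasDerivAt (fun z => z * powerTail n z) ((1 - del n) * powerTail n z) z := by
  refine ((hasDerivAt_id z).mul (hasDerivAt_powerTail n hz)).congr_deriv ?_
  simp only [id]
  field_simp
  ring

/-- The derivative of `phi2 n h` when `h'` is that of `h`. -/
noncomputable def phi2Deriv (n : ℕ) (h' : ℝ → ℝ) (z : ℝ) : ℝ :=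
  h' z - corrRatio n * ((2 - del n) * (z * powerTail n z))

/-- The second derivative of `phi2 n h` for a corrector `h`. -/
noncomputable def phi2SecondDeriv (n : ℕ) (η η' h : ℝ → ℝ) (z : ℝ) : ℝ :=
  corrSource n z (η z) (h z) - gam n * η z - alph n * (z * η' z)
    - corrRatio n * ((2 - del n) * ((1 - del n) * powerTail n z))

/-- Second-order agreement of the corrector with `λ₀z^{2-δ}`, and of their derivatives, on
`[1, ∞)`. -/
structure CorrectorTail (n : ℕ) (h h' : ℝ → ℝ) (M : ℝ) : Prop where
  pos : 0 < M
  abs_phi2_le : ∀ z ≥ 1, |phi2 n h z| ≤ M * powerTail n z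
  abs_mul_phi2Deriv_le : ∀ z ≥ 1, |z * phi2Deriv n h' z| ≤ M * powerTail n z

namespace CorrectorSolution

lemma hasDerivAt_phi2 (hc : CorrectorSolution n η η' h h') (hn : 1 < n) (hz : 0 < z) :
    HasDerivAt (phi2 n h) (phi2Deriv n h' z) z := by
  refine ((hc.hasDerivAt z hz).sub
    ((hasDerivAt_sq_mul_powerTail n hz).const_mul (corrRatio n))).congr_of_eventuallyEq ?_
  filter_upwards [eventually_gt_nhds hz] with x hx using phi2_eq hn hx h

lemma hasDerivAt_phi2Deriv (hc : CorrectorSolution n η η' h h') (hz : 0 < z) :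
    HasDerivAt (phi2Deriv n h') (phi2SecondDeriv n η η' h z) z :=
  (hc.hasDerivAt_deriv z hz).sub
    (((hasDerivAt_mul_powerTail n hz).const_mul (2 - del n)).const_mul (corrRatio n))

lemma tendsto_phi2 (hc : CorrectorSolution n η η' h h') : Tendsto (phi2 n h) atTop (𝓝 0) :=
  hc.tendsto_zero.congr fun z => by rw [phi2]; ring

end CorrectorSolution

/-- The terms of order `v` cancel by the choice of `λ₀`. -/
lemma phi2SecondDeriv_sub_eq (hn : 1 < n) (hz : 0 < z) (η η' h : ℝ → ℝ) :
    phi2SecondDeriv n η η' h z - n * (del n * (del n + 1)) * relSlope n η z * (phi2 n h z / z ^ 2)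
      = n * (del n * (del n + 1)) * powerTail n z * (corrRatio n * (relSlope n η z - 1)
          - 1 / 12 * (relBase n η z ^ (n - 1) * relProfile n η z - 1))
        - gam n * powerTail n z * (relProfile n η z - 1)
        - alph n * (z * η' z + del n * powerTail n z) := by
  rw [phi2SecondDeriv, corrSource_eq hn hz, phi2_eq hn hz, ← powerTail_mul_relProfile hn hz η]
  generalize relBase n η z ^ (n - 1) * relProfile n η z = G
  field_simp
  linear_combination 12 * z ^ 2 * powerTail n z * eps_sub_half_del hn
    - 12 * z ^ 2 * powerTail n z * corrRatio_identity hn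

lemma ReactiveSolution.exists_abs_phi2SecondDeriv_sub_le (hr : ReactiveSolution n η η')
    (hn : 4 ≤ n) (h : ℝ → ℝ) : ∃ K > 0, ∀ z ≥ 1,
      |phi2SecondDeriv n η η' h z
        - n * (del n * (del n + 1)) * relSlope n η z * (phi2 n h z / z ^ 2)|
      ≤ K * (powerTail n z / z ^ 2) := by
  have hn1 : 1 < n := by lia
  have hγ := gam_pos n
  have hα := alph_pos hn1
  have hN : 0 < (n : ℝ) * (del n * (del n + 1)) := by linarith [cast_mul_del_mul_succ_ge hn1]
  obtain ⟨M, hM⟩ := hr.exists_reactiveTail hn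
  have hM1 := hM.one_le
  obtain ⟨L, hL, hη'⟩ := hr.exists_abs_mul_deriv_add_le hn
  obtain ⟨D, hD, hslope⟩ := hM.nearOne_relSlope hn1
  obtain ⟨E, hE, hprod⟩ := (hM.nearOne_relBase.pow (n - 1)).mul hM.nearOne_relProfile
  set N := (n : ℝ) * (del n * (del n + 1))
  refine ⟨N * (|corrRatio n| * D + 1 / 12 * E) + gam n * M + alph n * L, by positivity,
    fun z hz => ?_⟩
  have hv := powerTail_pos hn1 (one_pos.trans_le hz)
  rw [phi2SecondDeriv_sub_eq hn1 (one_pos.trans_le hz)]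
  calc _ ≤ N * powerTail n z * (|corrRatio n| * |relSlope n η z - 1|
          + 1 / 12 * |relBase n η z ^ (n - 1) * relProfile n η z - 1|)
        + gam n * powerTail n z * |relProfile n η z - 1|
        + alph n * |z * η' z + del n * powerTail n z| := by
        refine (abs_sub _ _).trans (add_le_add ((abs_sub _ _).trans (add_le_add ?_ ?_)) ?_)
        · rw [abs_mul, abs_of_pos (by positivity : 0 < N * powerTail n z)]
          gcongr
          refine (abs_sub _ _).trans_eq ?_
          rw [abs_mul, abs_mul, abs_of_pos (by norm_num : (0 : ℝ) < 1 / 12)]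
        · rw [abs_mul, abs_of_pos (by positivity : 0 < gam n * powerTail n z)]
        · rw [abs_mul, abs_of_pos hα]
    _ ≤ N * powerTail n z * (|corrRatio n| * (D * (1 / z ^ 2)) + 1 / 12 * (E * (1 / z ^ 2)))
        + gam n * powerTail n z * (M * (1 / z ^ 2))
        + alph n * (L * (powerTail n z / z ^ 2)) := by
        gcongr
        exacts [hslope z hz, hprod z hz, hM.abs_relProfile_sub_one_le z hz, hη' z hz]
    _ = _ := by ring

lemma rpow_neg_del_eq (hn : 1 < n) (z : ℝ) : z ^ (-del n) = powerTail n z / lam n :=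
  (mul_div_cancel_left₀ _ (lam_pos hn).ne').symm

namespace CorrectorSolution

lemma continuousOn_phi2 (hc : CorrectorSolution n η η' h h') (hn : 1 < n) {a : ℝ} (ha : 0 < a) :
    ContinuousOn (phi2 n h) (Ici a) :=
  fun _ hz => (hc.hasDerivAt_phi2 hn (ha.trans_le hz)).continuousAt.continuousWithinAt

lemma exists_abs_phi2_le (hc : CorrectorSolution n η η' h h') (hr : ReactiveSolution n η η')
    (hn : 4 ≤ n) : ∃ C > 0, ∀ z ≥ 1, |phi2 n h z| ≤ C * z ^ (-del n) := by
  have hn1 : 1 < n := by lia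
  have hd := one_lt_del hn1
  have hd2 := del_le_two hn
  have hl := lam_pos hn1
  have hN := cast_mul_del_mul_succ_ge hn1
  obtain ⟨M, hM⟩ := hr.exists_reactiveTail hn
  obtain ⟨D, hD, hslope⟩ := hM.nearOne_relSlope hn1
  obtain ⟨K, -, hK⟩ := hr.exists_abs_phi2SecondDeriv_sub_le hn h
  have ha : 0 < 1 + 22 * D := by positivity
  obtain ⟨C, -, hC⟩ := exists_abs_le_mul_rpow_neg_of_linear_ode (k := 21) (K := K * lam n)
    (c := fun z => n * (del n * (del n + 1)) * relSlope n η z) (ρ := del n) ha (by linarith)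
    (by nlinarith) (hc.continuousOn_phi2 hn1 ha)
    (fun z hz => hc.hasDerivAt_phi2 hn1 (ha.trans hz))
    (fun z hz => hc.hasDerivAt_phi2Deriv (ha.trans hz)) hc.tendsto_phi2
    (fun z hz => by
      have hsmall : D * (1 / z ^ 2) ≤ 1 / 22 := by
        have : 0 < z := ha.trans hz
        rw [mul_one_div, div_le_iff₀ (by positivity)]
        nlinarith
      nlinarith [(abs_le.1 (hslope z (by linarith))).1])
    fun z hz => (hK z (by linarith)).trans_eq (by
      rw [rpow_neg_del_eq hn1]
      field_simp)
  exact exists_abs_le_mul_on_Ici (hc.continuousOn_phi2 hn1 one_pos)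
    (continuousOn_rpow_const_Ici _ one_pos) (fun z hz => Real.rpow_pos_of_pos (by linarith) _) hC

lemma exists_correctorTail (hc : CorrectorSolution n η η' h h') (hr : ReactiveSolution n η η')
    (hn : 4 ≤ n) : ∃ M, CorrectorTail n h h' M := by
  have hn1 : 1 < n := by lia
  have hd := one_lt_del hn1
  have hl := lam_pos hn1
  obtain ⟨M, hM⟩ := hr.exists_reactiveTail hn
  obtain ⟨D, hD, hslope⟩ := hM.nearOne_relSlope hn1
  obtain ⟨K, hK0, hK⟩ := hr.exists_abs_phi2SecondDeriv_sub_le hn h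
  obtain ⟨C, hC, hphi⟩ := hc.exists_abs_phi2_le hr hn
  set N := (n : ℝ) * (del n * (del n + 1))
  have hN : 0 < N := by linarith [cast_mul_del_mul_succ_ge hn1]
  have hderiv := abs_deriv_le_of_abs_le_rpow_neg (K := N * (1 + D) * C + K * lam n)
    (by linarith) hC.le (by positivity) (fun z hz => hc.hasDerivAt_phi2 hn1 (one_pos.trans_le hz))
    (fun z hz => hc.hasDerivAt_phi2Deriv (one_pos.trans_le hz)) hphi fun z hz => by
      have hbound : |relSlope n η z| ≤ 1 + D := abs_le_one_add_of_abs_sub_one_le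
        ((hslope z hz).trans (mul_le_of_le_one_right hD.le (one_div_sq_le_one hz)))
      calc |phi2SecondDeriv n η η' h z|
          ≤ N * |relSlope n η z| * (|phi2 n h z| / z ^ 2) + K * (powerTail n z / z ^ 2) := by
            have := abs_sub_abs_le_abs_sub (phi2SecondDeriv n η η' h z)
              (N * relSlope n η z * (phi2 n h z / z ^ 2))
            rw [abs_mul _ (_ / _), abs_mul N, abs_of_pos hN, abs_div, abs_sq] at this
            linarith [hK z hz]
        _ ≤ N * (1 + D) * (C * z ^ (-del n) / z ^ 2) + K * (powerTail n z / z ^ 2) := by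
            gcongr
            exact hphi z hz
        _ = _ := by rw [powerTail]; ring
  set C' := 2 * C + (N * (1 + D) * C + K * lam n)
  have hC' : 0 < C' := by positivity
  refine ⟨(C + C') / lam n, by positivity, fun z hz => ?_, fun z hz => ?_⟩
  · have : 0 < powerTail n z := powerTail_pos hn1 (one_pos.trans_le hz)
    calc |phi2 n h z| ≤ C / lam n * powerTail n z :=
          (hphi z hz).trans_eq (by rw [powerTail]; field_simp)
      _ ≤ _ := by gcongr; linarith
  · have hz0 : 0 < z := one_pos.trans_le hz
    have : 0 < powerTail n z := powerTail_pos hn1 hz0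
    calc |z * phi2Deriv n h' z| = z * |phi2Deriv n h' z| := by rw [abs_mul, abs_of_pos hz0]
      _ ≤ z * (C' * (z ^ (-del n) / z)) := by gcongr; exact hderiv z hz
      _ = C' / lam n * powerTail n z := by rw [powerTail]; field_simp
      _ ≤ _ := by gcongr; linarith

end CorrectorSolution

end Corrector

/-! ### The error function near the origin -/

section ErrorFunction

open intervalIntegral

variable {y : ℝ}

lemma abs_integral_exp_neg_sq_sub_le {x : ℝ} (hx : 0 ≤ x) (hx1 : x ≤ 1) :
    |(∫ σ in (0:ℝ)..x, Real.exp (-σ ^ 2)) - (x - x ^ 3 / 3)| ≤ x ^ 5 := by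
  have hint : ∀ f : ℝ → ℝ, Continuous f → IntervalIntegrable f MeasureTheory.volume 0 x :=
    fun f hf => hf.intervalIntegrable _ _
  have hrem : (∫ σ in (0:ℝ)..x, Real.exp (-σ ^ 2)) - (x - x ^ 3 / 3)
      = ∫ σ in (0:ℝ)..x, (Real.exp (-σ ^ 2) - (1 - σ ^ 2)) := by
    rw [integral_sub (hint _ (by fun_prop)) (hint _ (by fun_prop)),
      integral_sub (hint _ (by fun_prop)) (hint _ (by fun_prop)), integral_pow, integral_const]
    norm_num
  have hle : ∀ σ ∈ uIoc 0 x, ‖Real.exp (-σ ^ 2) - (1 - σ ^ 2)‖ ≤ x ^ 4 := fun σ hσ => by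
    rw [uIoc_of_le hx] at hσ
    have hsq : |(-σ ^ 2)| ≤ 1 := by
      rw [abs_neg, abs_sq]
      nlinarith [hσ.1, hσ.2]
    calc ‖Real.exp (-σ ^ 2) - (1 - σ ^ 2)‖ = |Real.exp (-σ ^ 2) - 1 - -σ ^ 2| := by
          rw [Real.norm_eq_abs]
          ring_nf
      _ ≤ (-σ ^ 2) ^ 2 := Real.abs_exp_sub_one_sub_id_le hsq
      _ = σ ^ 4 := by ring
      _ ≤ x ^ 4 := pow_le_pow_left₀ hσ.1.le hσ.2 4
  calc _ ≤ x ^ 4 * |x - 0| := hrem ▸ norm_integral_le_of_norm_le_const hle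
    _ = x ^ 5 := by rw [sub_zero, abs_of_nonneg hx]; ring

lemma mu1_eq (y : ℝ) : mu1 y = 2 * kap * ∫ σ in (0:ℝ)..(y / 2), Real.exp (-σ ^ 2) := by
  unfold mu1 kap
  ring

/-- The remainder of the Taylor expansion `μ₁(y) = κy(1 - y²/12 + O(y⁴))`, divided by `y⁴`. -/
noncomputable def mu1Rem (y : ℝ) : ℝ := (mu1 y / (kap * y) - (1 - y ^ 2 / 12)) / y ^ 4

lemma mu1_eq_taylor (hy : 0 < y) :
    mu1 y = kap * y * (1 - y ^ 2 / 12 + mu1Rem y * y ^ 4) := by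
  have := kap_pos
  unfold mu1Rem
  field_simp
  ring

lemma abs_mu1Rem_le_one (hy : 0 < y) (hy1 : y ≤ 1) : |mu1Rem y| ≤ 1 := by
  have := kap_pos
  have hint := abs_integral_exp_neg_sq_sub_le (x := y / 2) (by linarith) (by linarith)
  have hrem : mu1Rem y
      = 2 * ((∫ σ in (0:ℝ)..(y / 2), Real.exp (-σ ^ 2)) - (y / 2 - (y / 2) ^ 3 / 3)) / y ^ 5 := by
    rw [mu1Rem, mu1_eq]
    field_simp
    ring
  rw [hrem, abs_div, abs_mul, abs_two, abs_of_pos (by positivity : 0 < y ^ 5),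
    div_le_one (by positivity)]
  have : 0 < y ^ 5 := by positivity
  linarith [show (y / 2) ^ 5 = y ^ 5 / 32 by ring]

lemma mu1_nonneg (hy : 0 ≤ y) : 0 ≤ mu1 y := by
  have := kap_pos
  rw [mu1_eq]
  exact mul_nonneg (by positivity) (integral_nonneg (by linarith) fun _ _ => (Real.exp_pos _).le)

lemma mu1_le_one (hy : 0 ≤ y) : mu1 y ≤ 1 := by
  have hk := kap_pos
  have hgauss := integral_gaussian_Ioi 1
  simp only [neg_mul, one_mul, div_one] at hgauss
  have hle : (∫ σ in Ioc (0:ℝ) (y / 2), Real.exp (-σ ^ 2)) ≤ ∫ σ in Ioi (0:ℝ), Real.exp (-σ ^ 2) :=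
    MeasureTheory.setIntegral_mono_set
      (by simpa using (integrable_exp_neg_mul_sq (b := 1) one_pos).integrableOn)
      (.of_forall fun _ => (Real.exp_pos _).le) Ioc_subset_Ioi_self.eventuallyLE
  rw [mu1_eq, integral_of_le (by linarith)]
  calc _ ≤ 2 * kap * (√Real.pi / 2) := by
        rw [← hgauss]
        gcongr
    _ = 1 := by unfold kap; field_simp

lemma tendsto_mu1_div_nhdsGT_zero : Tendsto (fun y => mu1 y / (kap * y)) (𝓝[>] 0) (𝓝 1) := by
  have hlim : Tendsto (fun y : ℝ => y ^ 2 / 12 + y ^ 4) (𝓝[>] 0) (𝓝 0) := by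
    have : ContinuousAt (fun y : ℝ => y ^ 2 / 12 + y ^ 4) 0 := by fun_prop
    simpa using this.tendsto.mono_left nhdsWithin_le_nhds
  refine tendsto_iff_dist_tendsto_zero.2 (squeeze_zero' (.of_forall fun _ => dist_nonneg) ?_ hlim)
  filter_upwards [Ioo_mem_nhdsGT one_pos] with y hy
  have hκ : 0 < kap * y := mul_pos kap_pos hy.1
  have hrem := abs_mu1Rem_le_one hy.1 hy.2.le
  rw [mu1_eq_taylor hy.1, mul_div_cancel_left₀ _ hκ.ne', Real.dist_eq]
  calc |1 - y ^ 2 / 12 + mu1Rem y * y ^ 4 - 1| = |mu1Rem y * y ^ 4 - y ^ 2 / 12| := by ring_nf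
    _ ≤ |mu1Rem y| * y ^ 4 + y ^ 2 / 12 := (abs_sub _ _).trans_eq (by
        rw [abs_mul, abs_of_nonneg (by positivity : 0 ≤ y ^ 4),
          abs_of_nonneg (by positivity : 0 ≤ y ^ 2 / 12)])
    _ ≤ 1 * y ^ 4 + y ^ 2 / 12 := by gcongr
    _ = y ^ 2 / 12 + y ^ 4 := by ring

end ErrorFunction

/-! ### The diffusive profile near the origin -/

section Diffusive

variable {n : ℕ} {y : ℝ}

/-- The two-term expansion `λy^{-δ} + λ₀y^{2-δ}` of the diffusive profile at the origin. -/
noncomputable def nearProfile (n : ℕ) (y : ℝ) : ℝ :=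
  powerTail n y + corrRatio n * (y ^ 2 * powerTail n y)

/-- The derivative of `nearProfile n`. -/
noncomputable def nearProfileDeriv (n : ℕ) (y : ℝ) : ℝ :=
  -del n * (powerTail n y / y) + corrRatio n * ((2 - del n) * (y * powerTail n y))

/-- The diffusive operator `f'' + (y/2)f' + εf` applied to `nearProfile n`. -/
noncomputable def nearSource (n : ℕ) (y : ℝ) : ℝ :=
  del n * (del n + 1) * (powerTail n y / y ^ 2)
    + corrRatio n * ((2 - del n) * ((1 - del n) * powerTail n y))
    + y / 2 * nearProfileDeriv n y + eps n * nearProfile n y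

lemma nearProfile_eq (n : ℕ) (y : ℝ) :
    nearProfile n y = powerTail n y * (1 + corrRatio n * y ^ 2) := by
  unfold nearProfile
  ring

lemma hasDerivAt_nearProfile (n : ℕ) (hy : 0 < y) :
    HasDerivAt (nearProfile n) (nearProfileDeriv n y) y :=
  (hasDerivAt_powerTail n hy).add ((hasDerivAt_sq_mul_powerTail n hy).const_mul (corrRatio n))

lemma hasDerivAt_nearProfileDeriv (n : ℕ) (hy : 0 < y) : HasDerivAt (nearProfileDeriv n)
    (nearSource n y - y / 2 * nearProfileDeriv n y - eps n * nearProfile n y) y :=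
  ((hasDerivAt_deriv_powerTail n hy).add
    (((hasDerivAt_mul_powerTail n hy).const_mul (2 - del n)).const_mul (corrRatio n))).congr_deriv
    (by unfold nearSource; ring)

lemma tendsto_nearProfile_div_powerTail (hn : 1 < n) :
    Tendsto (fun y => nearProfile n y / powerTail n y) (𝓝[>] 0) (𝓝 1) := by
  have hlim : Tendsto (fun y : ℝ => 1 + corrRatio n * y ^ 2) (𝓝[>] 0) (𝓝 1) := by
    have : ContinuousAt (fun y : ℝ => 1 + corrRatio n * y ^ 2) 0 := by fun_prop
    simpa using this.tendsto.mono_left nhdsWithin_le_nhds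
  refine hlim.congr' ?_
  filter_upwards [self_mem_nhdsWithin] with y hy
  rw [nearProfile_eq, mul_div_cancel_left₀ _ (powerTail_pos hn hy).ne']

lemma two_mul_mul_powerTail_mul_pow (hn : 1 < n) (hy : 0 < y) (m r : ℝ) :
    (2 * (kap * y * m) * (powerTail n y * r)) ^ n
      = del n * (del n + 1) * (powerTail n y / y ^ 2) * (m * r) ^ n := by
  rw [← two_kap_mul_powerTail_pow hn hy, ← mul_pow]
  ring

lemma two_mul_mu1_mul_powerTail_mul_pow (hn : 1 < n) (hy : 0 < y) (ρ : ℝ) :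
    (2 * mu1 y * (powerTail n y * (1 + corrRatio n * y ^ 2 + ρ * y ^ 4))) ^ n
      = del n * (del n + 1) * (powerTail n y / y ^ 2)
        + (eps n - del n / 2 + corrRatio n * ((2 - del n) * (1 - del n))) * powerTail n y
        + del n * (del n + 1) * (y ^ 2 * powerTail n y)
          * reactionRem n (1, -1 / 12, mu1Rem y, 0, 1, corrRatio n, ρ, y ^ 2) := by
  have hpow := reaction_pow_eq n 1 (-1 / 12) (mu1Rem y) 0 1 (corrRatio n) ρ (y ^ 2)
  have hexpand : (1 - y ^ 2 / 12 + mu1Rem y * y ^ 4) * (1 + corrRatio n * y ^ 2 + ρ * y ^ 4)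
      = 1 * ((1 + -1 / 12 * y ^ 2 + mu1Rem y * (y ^ 2) ^ 2)
          * (1 + corrRatio n * y ^ 2 + ρ * (y ^ 2) ^ 2))
        + 0 * (1 + corrRatio n * y ^ 2 + ρ * (y ^ 2) ^ 2) ^ 2 := by ring
  rw [mu1_eq_taylor hy, two_mul_mul_powerTail_mul_pow hn hy, hexpand, hpow,
    corrRatio_identity hn, mul_one, zero_mul, add_zero, one_pow, one_pow]
  field_simp
  ring

lemma nearProfile_pow_sub_nearSource_eq (hn : 1 < n) (hy : 0 < y) :
    (2 * mu1 y * nearProfile n y) ^ n - nearSource n y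
      = (del n * (del n + 1)
          * reactionRem n (1, -1 / 12, mu1Rem y, 0, 1, corrRatio n, 0, y ^ 2)
        - (corrRatio n * (2 - del n) / 2 + eps n * corrRatio n)) * (y ^ 2 * powerTail n y) := by
  have hpow := two_mul_mu1_mul_powerTail_mul_pow hn hy 0
  rw [zero_mul, add_zero, ← nearProfile_eq] at hpow
  rw [hpow, nearSource, nearProfileDeriv, nearProfile]
  field_simp
  ring

lemma exists_abs_nearProfile_pow_sub_le (hn : 1 < n) : ∃ K > 0, ∀ y > 0, y ≤ 1 →
    |(2 * mu1 y * nearProfile n y) ^ n - nearSource n y| ≤ K * (y ^ 2 * powerTail n y) := by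
  have hd := del_mul_succ_pos hn
  have hp := abs_nonneg (corrRatio n)
  obtain ⟨C, hC, hrem⟩ :=
    exists_abs_le_of_continuous (contDiff_reactionRem n).continuous (1 + |corrRatio n|)
  refine ⟨del n * (del n + 1) * C
    + |corrRatio n * (2 - del n) / 2 + eps n * corrRatio n| + 1, by positivity, fun y hy hy1 => ?_⟩
  have hv := powerTail_pos hn hy
  have hbound : |reactionRem n (1, -1 / 12, mu1Rem y, 0, 1, corrRatio n, 0, y ^ 2)| ≤ C := by
    refine hrem _ ?_
    have hm := abs_mu1Rem_le_one hy hy1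
    have hy2 : y ^ 2 ≤ 1 := pow_le_one₀ hy.le hy1
    simp only [Prod.norm_mk, sup_le_iff, Real.norm_eq_abs, abs_one, abs_zero, abs_sq]
    rw [abs_of_neg (by norm_num : (-1 / 12 : ℝ) < 0)]
    refine ⟨?_, ?_, ?_, ?_, ?_, ?_, ?_, ?_⟩ <;> linarith
  rw [nearProfile_pow_sub_nearSource_eq hn hy, abs_mul,
    abs_of_pos (by positivity : 0 < y ^ 2 * powerTail n y)]
  gcongr
  refine (abs_sub _ _).trans ?_
  rw [abs_mul, abs_of_pos hd]
  linarith [mul_le_mul_of_nonneg_left hbound hd.le]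

lemma exists_pow_sub_pow_eq_mul_sub (n : ℕ) {m a b : ℝ} (hm : 0 ≤ m) (ha : m ≤ a) (hb : m ≤ b) :
    ∃ c ≥ n * m ^ (n - 1), b ^ n - a ^ n = c * (b - a) := by
  refine ⟨∑ i ∈ Finset.range n, b ^ i * a ^ (n - 1 - i), ?_, (geom_sum₂_mul b a n).symm⟩
  have hterm : ∀ i ∈ Finset.range n, m ^ (n - 1) ≤ b ^ i * a ^ (n - 1 - i) := fun i hi => by
    have hsplit : m ^ (n - 1) = m ^ i * m ^ (n - 1 - i) := by
      rw [← pow_add, Nat.add_sub_cancel' (by have := Finset.mem_range.1 hi; lia)]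
    have := hm.trans hb
    rw [hsplit]
    gcongr
  simpa using Finset.card_nsmul_le_sum _ _ _ hterm

/-- `11` is half of the lower bound `22` for `nδ(δ+1)`, the value of the slope at the power
tail. -/
lemma exists_reaction_slope_ge (hn : 1 < n) {q u a b : ℝ} (hy : 0 < y) (hq : 0 < q)
    (hqpow : 1 / 2 ≤ q ^ (n + (n - 1))) (hu : kap * y * q ≤ u) (ha : powerTail n y * q ≤ a)
    (hb : powerTail n y * q ≤ b) :
    ∃ c ≥ 11 / y ^ 2, (2 * u * b) ^ n - (2 * u * a) ^ n = c * (b - a) := by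
  have hκ := kap_pos
  have hv := powerTail_pos hn hy
  have hN := cast_mul_del_mul_succ_ge hn
  have hu0 : 0 ≤ u := le_trans (by positivity) hu
  obtain ⟨c, hc, hcab⟩ := exists_pow_sub_pow_eq_mul_sub n (by positivity) ha hb
  refine ⟨(2 * u) ^ n * c, ?_, by rw [mul_pow, mul_pow _ a, ← mul_sub, hcab, mul_assoc]⟩
  calc 11 / y ^ 2 = 22 * (1 / 2) / y ^ 2 := by norm_num
    _ ≤ n * (del n * (del n + 1)) * q ^ (n + (n - 1)) / y ^ 2 := by gcongr
    _ = n * ((2 * kap * y * powerTail n y) ^ (n - 1) * (2 * kap * y)) * (q ^ n * q ^ (n - 1)) := by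
        rw [two_kap_mul_powerTail_pow_pred hn hy, pow_add]
        ring
    _ = (2 * kap * y) ^ n * q ^ n * (n * (powerTail n y * q) ^ (n - 1)) := by
        rw [mul_pow _ (powerTail n y), mul_pow (powerTail n y),
          ← pow_sub_one_mul (by lia : n ≠ 0) (2 * kap * y)]
        ring
    _ = (2 * (kap * y * q)) ^ n * (n * (powerTail n y * q) ^ (n - 1)) := by
        rw [← mul_pow]
        ring
    _ ≤ (2 * u) ^ n * c := by gcongr

/-! ### Comparison at the origin -/

lemma hasDerivAt_quartic_mul_powerTail (n : ℕ) (C τ : ℝ) (hy : 0 < y) :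
    HasDerivAt (fun y => (C * y ^ 4 + τ) * powerTail n y)
      ((C * (4 - del n) * y ^ 3 - del n * τ / y) * powerTail n y) y := by
  refine ((((hasDerivAt_pow 4 y).const_mul C).add_const τ).mul
    (hasDerivAt_powerTail n hy)).congr_deriv ?_
  field_simp
  push_cast
  ring

lemma hasDerivAt_deriv_quartic_mul_powerTail (n : ℕ) (C τ : ℝ) (hy : 0 < y) :
    HasDerivAt (fun y => (C * (4 - del n) * y ^ 3 - del n * τ / y) * powerTail n y)
      ((C * ((4 - del n) * (3 - del n)) * y ^ 2 + del n * (del n + 1) * τ / y ^ 2)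
        * powerTail n y) y := by
  refine ((((hasDerivAt_pow 3 y).const_mul (C * (4 - del n))).sub
    ((hasDerivAt_const y (del n * τ)).div (hasDerivAt_id y) hy.ne')).mul
    (hasDerivAt_powerTail n hy)).congr_deriv ?_
  simp only [id, Pi.sub_apply, Pi.div_apply]
  field_simp
  push_cast
  ring

lemma barrier_supersolution (hn : 4 ≤ n) {C K τ : ℝ} (hK : 0 < K) (hCK : K ≤ C) (hτ : 0 < τ)
    (hy : 0 < y) (hy1 : y ≤ 1) :
    K * (y ^ 2 * powerTail n y)
        + (C * ((4 - del n) * (3 - del n)) * y ^ 2 + del n * (del n + 1) * τ / y ^ 2)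
          * powerTail n y
        + y / 2 * ((C * (4 - del n) * y ^ 3 - del n * τ / y) * powerTail n y)
      < (11 / y ^ 2 - eps n) * ((C * y ^ 4 + τ) * powerTail n y) := by
  have hn1 : 1 < n := by lia
  have hd := one_lt_del hn1
  have hd2 := del_le_two hn
  have he := eps_pos hn1
  have he3 := eps_le_third hn
  have hv := powerTail_pos hn1 hy
  have hy2 : y ^ 2 ≤ 1 := pow_le_one₀ hy.le hy1
  have hC := hK.trans_le hCK
  have hCy : 0 < C * y ^ 4 := by positivity
  have hpoly : K * y ^ 4 + (C * ((4 - del n) * (3 - del n)) * y ^ 4 + del n * (del n + 1) * τ)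
      + y ^ 2 / 2 * (C * (4 - del n) * y ^ 4 - del n * τ)
      < (11 - eps n * y ^ 2) * (C * y ^ 4 + τ) := by
    have hsource : K * y ^ 4 ≤ C * y ^ 4 := by gcongr
    have hcurv : (4 - del n) * (3 - del n) * (C * y ^ 4) ≤ 6 * (C * y ^ 4) :=
      mul_le_mul_of_nonneg_right (by nlinarith) hCy.le
    have hcurvτ : del n * (del n + 1) * τ ≤ 6 * τ := mul_le_mul_of_nonneg_right (by nlinarith) hτ.le
    have hdrift : y ^ 2 / 2 * ((4 - del n) * (C * y ^ 4)) ≤ 1 / 2 * (3 * (C * y ^ 4)) :=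
      mul_le_mul (by linarith) (mul_le_mul_of_nonneg_right (by linarith) hCy.le)
        (mul_nonneg (by linarith) hCy.le) (by norm_num)
    have hdriftτ : 0 < y ^ 2 / 2 * (del n * τ) := by positivity
    have hzero : eps n * y ^ 2 * (C * y ^ 4 + τ) ≤ 1 / 3 * 1 * (C * y ^ 4 + τ) := by gcongr
    linarith
  calc _ = (K * y ^ 4 + (C * ((4 - del n) * (3 - del n)) * y ^ 4 + del n * (del n + 1) * τ)
        + y ^ 2 / 2 * (C * (4 - del n) * y ^ 4 - del n * τ)) * (powerTail n y / y ^ 2) := by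
        field_simp
    _ < (11 - eps n * y ^ 2) * (C * y ^ 4 + τ) * (powerTail n y / y ^ 2) :=
        mul_lt_mul_of_pos_right hpoly (by positivity)
    _ = _ := by field_simp

variable {u u' g : ℝ → ℝ} {y₁ C K : ℝ}

/-- Maximum principle for `u'' + (y/2)u' + εu = g` with the barrier `(Cy⁴ + τ)v`; the term `τv`
dominates `u` at the origin and is then sent to zero. -/
lemma le_mul_pow_four_mul_powerTail (hn : 4 ≤ n) (hy₁ : y₁ ≤ 1) (hK : 0 < K) (hCK : K ≤ C)
    (hu : ∀ y > 0, HasDerivAt u (u' y) y)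
    (hu' : ∀ y > 0, HasDerivAt u' (g y - y / 2 * u' y - eps n * u y) y)
    (hg : ∀ y > 0, y ≤ y₁ → ∃ c ≥ 11 / y ^ 2, |g y - c * u y| ≤ K * (y ^ 2 * powerTail n y))
    (hlim : Tendsto (fun y => u y / powerTail n y) (𝓝[>] 0) (𝓝 0))
    (hend : u y₁ ≤ C * (y₁ ^ 4 * powerTail n y₁)) :
    ∀ y > 0, y ≤ y₁ → u y ≤ C * (y ^ 4 * powerTail n y) := by
  intro y hy hyy₁
  have hn1 : 1 < n := by lia
  have hvy := powerTail_pos hn1 hy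
  suffices hτ : ∀ τ > 0, u y ≤ (C * y ^ 4 + τ) * powerTail n y by
    have : u y / powerTail n y ≤ C * y ^ 4 :=
      le_of_forall_pos_le_add fun τ hτ0 => (div_le_iff₀ hvy).2 (hτ τ hτ0)
    exact ((div_le_iff₀ hvy).1 this).trans_eq (by ring)
  intro τ hτ
  obtain ⟨y₀, hy₀τ, hy₀, hy₀y⟩ :=
    ((hlim.eventually_lt_const hτ).and (Ioo_mem_nhdsGT hy)).exists
  have hv₀ := powerTail_pos hn1 hy₀
  rw [div_lt_iff₀ hv₀] at hy₀τ
  have hf : ∀ x > 0, HasDerivAt (fun x => u x - (C * x ^ 4 + τ) * powerTail n x) _ x :=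
    fun x hx => (hu x hx).sub (hasDerivAt_quartic_mul_powerTail n C τ hx)
  refine sub_nonpos.1 (nonpos_on_Icc_of_second_deriv_pos (hy₀y.le.trans hyy₁)
    (fun x hx => (hf x (hy₀.trans_le hx.1)).continuousAt.continuousWithinAt)
    (fun x hx => hf x (hy₀.trans hx.1))
    (fun x hx => (hu' x (hy₀.trans hx.1)).sub
      (hasDerivAt_deriv_quartic_mul_powerTail n C τ (hy₀.trans hx.1)))
    ?_ ?_ (fun x hx hpos hcrit => ?_) y ⟨hy₀y.le, hyy₁⟩)
  · have : 0 < C * y₀ ^ 4 * powerTail n y₀ := by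
      have := hK.trans_le hCK
      positivity
    linarith
  · have := mul_pos hτ (powerTail_pos hn1 (hy.trans_le hyy₁))
    linarith
  · have hx0 := hy₀.trans hx.1
    have hx1 : x ≤ 1 := hx.2.le.trans hy₁
    obtain ⟨c, hc, hgc⟩ := hg x hx0 hx.2.le
    have hw : 0 < (C * x ^ 4 + τ) * powerTail n x := by
      have := hK.trans_le hCK
      have := powerTail_pos hn1 hx0
      positivity
    have h11 : 11 ≤ 11 / x ^ 2 := le_div_self (by norm_num) (by positivity) (pow_le_one₀ hx0.le hx1)
    have hslope : (11 / x ^ 2 - eps n) * ((C * x ^ 4 + τ) * powerTail n x) ≤ (c - eps n) * u x :=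
      mul_le_mul (by linarith) (by linarith) hw.le (by linarith [eps_le_third hn])
    rw [sub_eq_zero.1 hcrit]
    linarith [(abs_le.1 hgc).1, barrier_supersolution hn hK hCK hτ hx0 hx1]

lemma exists_abs_le_mul_pow_four_mul_powerTail (hn : 4 ≤ n) (hy₁ : 0 < y₁) (hy₁1 : y₁ ≤ 1)
    (hK : 0 < K) (hu : ∀ y > 0, HasDerivAt u (u' y) y)
    (hu' : ∀ y > 0, HasDerivAt u' (g y - y / 2 * u' y - eps n * u y) y)
    (hg : ∀ y > 0, y ≤ y₁ → ∃ c ≥ 11 / y ^ 2, |g y - c * u y| ≤ K * (y ^ 2 * powerTail n y))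
    (hlim : Tendsto (fun y => u y / powerTail n y) (𝓝[>] 0) (𝓝 0)) :
    ∃ C > 0, ∀ y > 0, y ≤ y₁ → |u y| ≤ C * (y ^ 4 * powerTail n y) := by
  have hw : 0 < y₁ ^ 4 * powerTail n y₁ := mul_pos (by positivity) (powerTail_pos (by lia) hy₁)
  have hCK : K ≤ K + |u y₁| / (y₁ ^ 4 * powerTail n y₁) := le_add_of_nonneg_right (by positivity)
  have hend : |u y₁| ≤ (K + |u y₁| / (y₁ ^ 4 * powerTail n y₁)) * (y₁ ^ 4 * powerTail n y₁) := by
    rw [add_mul, div_mul_cancel₀ _ hw.ne']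
    exact le_add_of_nonneg_left (by positivity)
  have hupper := le_mul_pow_four_mul_powerTail hn hy₁1 hK hCK hu hu' hg hlim
    ((le_abs_self _).trans hend)
  have hlower := le_mul_pow_four_mul_powerTail (u := fun y => -u y) (u' := fun y => -u' y)
    (g := fun y => -g y) hn hy₁1 hK hCK (fun y hy => (hu y hy).neg)
    (fun y hy => (hu' y hy).neg.congr_deriv (by ring))
    (fun y hy hyy₁ => by
      obtain ⟨c, hc, hgc⟩ := hg y hy hyy₁
      exact ⟨c, hc, by rwa [mul_neg, neg_sub_neg, abs_sub_comm]⟩)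
    (by simpa only [neg_div, neg_zero] using hlim.neg) ((neg_le_abs _).trans hend)
  exact ⟨_, hK.trans_le hCK, fun y hy hyy₁ =>
    abs_le'.2 ⟨hupper y hy hyy₁, hlower y hy hyy₁⟩⟩

/-- The diffusive equation on the open half-line, with `μ'` the derivative of `μ`, together with the
conditions at the origin and at infinity. -/
structure DiffusiveSolution (n : ℕ) (μ μ' : ℝ → ℝ) : Prop where
  hasDerivAt : ∀ y > 0, HasDerivAt μ (μ' y) y
  hasDerivAt_deriv : ∀ y > 0,
    HasDerivAt μ' ((2 * mu1 y * μ y) ^ n - y / 2 * μ' y - eps n * μ y) y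
  tendsto_origin : Tendsto (fun y => y ^ del n * μ y) (𝓝[>] 0) (𝓝 (lam n))
  tendsto_atTop : Tendsto (fun y => y ^ (2 * eps n) * μ y) atTop (𝓝 0)

variable {μ μ' : ℝ → ℝ}

lemma IsDiffusiveProfile.diffusiveSolution (hμ : IsDiffusiveProfile n μ) :
    DiffusiveSolution n μ (deriv μ) where
  hasDerivAt _ hy := ((hμ.1.differentiableOn (by norm_num)).differentiableAt
    (Ioi_mem_nhds hy)).hasDerivAt
  hasDerivAt_deriv y hy := by
    have hdiff : DifferentiableOn ℝ (deriv μ) (Ioi 0) :=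
      ((contDiffOn_succ_iff_deriv_of_isOpen (n := 1) isOpen_Ioi).1 hμ.1).2.2.differentiableOn
        (by norm_num)
    refine (hdiff.differentiableAt (Ioi_mem_nhds hy)).hasDerivAt.congr_deriv ?_
    rw [← hμ.2.2.1 y hy]
    ring
  tendsto_origin := hμ.2.2.2.1
  tendsto_atTop := hμ.2.2.2.2

namespace DiffusiveSolution

lemma continuousOn (h : DiffusiveSolution n μ μ') {a : ℝ} (ha : 0 < a) : ContinuousOn μ (Ici a) :=
  fun y hy => (h.hasDerivAt y (ha.trans_le hy)).continuousAt.continuousWithinAt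

lemma tendsto_div_powerTail (h : DiffusiveSolution n μ μ') (hn : 1 < n) :
    Tendsto (fun y => μ y / powerTail n y) (𝓝[>] 0) (𝓝 1) := by
  have hl := lam_pos hn
  have hlim := h.tendsto_origin.div_const (lam n)
  rw [div_self hl.ne'] at hlim
  refine hlim.congr' ?_
  filter_upwards [self_mem_nhdsWithin] with y (hy : 0 < y)
  have : 0 < y ^ del n := Real.rpow_pos_of_pos hy _
  rw [powerTail, Real.rpow_neg hy.le]
  field_simp

lemma tendsto_sub_nearProfile_div_powerTail (h : DiffusiveSolution n μ μ') (hn : 1 < n) :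
    Tendsto (fun y => (μ y - nearProfile n y) / powerTail n y) (𝓝[>] 0) (𝓝 0) := by
  have := (h.tendsto_div_powerTail hn).sub (tendsto_nearProfile_div_powerTail hn)
  simpa only [sub_div, sub_self] using this

lemma exists_lower_bounds (h : DiffusiveSolution n μ μ') (hn : 1 < n) {q : ℝ} (hq : q < 1) :
    ∃ y₁ > 0, y₁ ≤ 1 ∧ ∀ y > 0, y ≤ y₁ →
      kap * y * q ≤ mu1 y ∧ powerTail n y * q ≤ μ y ∧ powerTail n y * q ≤ nearProfile n y := by
  have hev := (tendsto_mu1_div_nhdsGT_zero.eventually_const_lt hq).and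
    (((h.tendsto_div_powerTail hn).eventually_const_lt hq).and
      ((tendsto_nearProfile_div_powerTail hn).eventually_const_lt hq))
  obtain ⟨y₀, hy₀, hsub⟩ := mem_nhdsGT_iff_exists_Ioc_subset.1 hev
  refine ⟨min y₀ 1, lt_min hy₀ one_pos, min_le_right _ _, fun y hy hyy₁ => ?_⟩
  have hκ : 0 < kap * y := mul_pos kap_pos hy
  have hv := powerTail_pos hn hy
  obtain ⟨hmu1, hμ, hnear⟩ := hsub ⟨hy, hyy₁.trans (min_le_left _ _)⟩
  exact ⟨((lt_div_iff₀' hκ).1 hmu1).le, ((lt_div_iff₀' hv).1 hμ).le, ((lt_div_iff₀' hv).1 hnear).le⟩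

lemma exists_abs_sub_nearProfile_le_of_small (h : DiffusiveSolution n μ μ') (hn : 4 ≤ n) :
    ∃ y₁ > 0, ∃ C > 0, ∀ y > 0, y ≤ y₁ →
      |μ y - nearProfile n y| ≤ C * (y ^ 4 * powerTail n y) := by
  have hn1 : 1 < n := by lia
  obtain ⟨K, hK, hsource⟩ := exists_abs_nearProfile_pow_sub_le hn1
  obtain ⟨q, hqpow, hq0, hq1⟩ : ∃ q : ℝ, 1 / 2 < q ^ (n + (n - 1)) ∧ 0 < q ∧ q < 1 := by
    have hcont : ContinuousAt (fun q : ℝ => q ^ (n + (n - 1))) 1 := by fun_prop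
    have hev : ∀ᶠ q : ℝ in 𝓝[<] 1, 1 / 2 < q ^ (n + (n - 1)) :=
      (hcont.eventually_const_lt (by norm_num)).filter_mono nhdsWithin_le_nhds
    exact (hev.and (Ioo_mem_nhdsLT one_pos)).exists
  obtain ⟨y₁, hy₁, hy₁1, hlow⟩ := h.exists_lower_bounds hn1 hq1
  refine ⟨y₁, hy₁, exists_abs_le_mul_pow_four_mul_powerTail
    (g := fun y => (2 * mu1 y * μ y) ^ n - nearSource n y) hn hy₁ hy₁1 hK
    (fun y hy => (h.hasDerivAt y hy).sub (hasDerivAt_nearProfile n hy))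
    (fun y hy => ((h.hasDerivAt_deriv y hy).sub (hasDerivAt_nearProfileDeriv n hy)).congr_deriv
      (by ring))
    (fun y hy hyy₁ => ?_) (h.tendsto_sub_nearProfile_div_powerTail hn1)⟩
  obtain ⟨hmu1, hμ, hnear⟩ := hlow y hy hyy₁
  obtain ⟨c, hc, hsecant⟩ := exists_reaction_slope_ge hn1 hy hq0 hqpow.le hmu1 hnear hμ
  refine ⟨c, hc, ?_⟩
  rw [← hsecant]
  convert hsource y hy (hyy₁.trans hy₁1) using 2
  ring

lemma exists_abs_sub_nearProfile_le (h : DiffusiveSolution n μ μ') (hn : 4 ≤ n) :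
    ∃ C > 0, ∀ y > 0, y ≤ 1 → |μ y - nearProfile n y| ≤ C * (y ^ 4 * powerTail n y) := by
  have hn1 : 1 < n := by lia
  obtain ⟨y₁, hy₁, C, hC, hsmall⟩ := h.exists_abs_sub_nearProfile_le_of_small hn
  have hpos : ∀ y > 0, 0 < y ^ 4 * powerTail n y := fun y hy =>
    mul_pos (by positivity) (powerTail_pos hn1 hy)
  have hcont : ContinuousOn (fun y => (μ y - nearProfile n y) / (y ^ 4 * powerTail n y))
      (Icc y₁ 1) := fun y hy => by
    have hy0 := hy₁.trans_le hy.1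
    exact (((h.hasDerivAt y hy0).sub (hasDerivAt_nearProfile n hy0)).continuousAt.div
      ((continuousAt_id.pow 4).mul (hasDerivAt_powerTail n hy0).continuousAt)
      (hpos y hy0).ne').continuousWithinAt
  obtain ⟨B, hB⟩ := isCompact_Icc.exists_bound_of_continuousOn hcont
  refine ⟨max C B, lt_max_of_lt_left hC, fun y hy hy1 => ?_⟩
  have hw := hpos y hy
  rcases le_total y y₁ with hyy₁ | hyy₁
  · exact (hsmall y hy hyy₁).trans (by gcongr; exact le_max_left _ _)
  · have := hB y ⟨hyy₁, hy1⟩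
    rw [Real.norm_eq_abs, abs_div, abs_of_pos hw, div_le_iff₀ hw] at this
    exact this.trans (by gcongr; exact le_max_right _ _)

lemma exists_abs_le_rpow (h : DiffusiveSolution n μ μ') :
    ∃ C > 0, ∀ y ≥ 1, |μ y| ≤ C * y ^ (-(2 * eps n)) := by
  have hlim := (tendsto_zero_iff_abs_tendsto_zero _).1 h.tendsto_atTop
  obtain ⟨a, ha⟩ := ((hlim.eventually_lt_const one_pos).and
    (eventually_gt_atTop 0)).exists_forall_of_atTop
  refine exists_abs_le_mul_on_Ici (a := a) (C := 1) (h.continuousOn one_pos)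
    (continuousOn_rpow_const_Ici _ one_pos) (fun y hy => Real.rpow_pos_of_pos (by linarith) _)
    fun y hy => ?_
  obtain ⟨hlt, hy0⟩ := ha y hy
  have : 0 < y ^ (2 * eps n) := Real.rpow_pos_of_pos hy0 _
  rw [Function.comp_apply, abs_mul, abs_of_pos this] at hlt
  rw [Real.rpow_neg hy0.le, one_mul, ← one_div, le_div_iff₀' this]
  exact hlt.le

end DiffusiveSolution

end Diffusive

/-! ### The residual in self-similar variables -/

section Residual

lemma deriv_deriv_comp_abs {G G' G'' : ℝ → ℝ} (hG : ∀ r > 0, HasDerivAt G (G' r) r)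
    (hG' : ∀ r > 0, HasDerivAt G' (G'' r) r) {x : ℝ} (hx : x ≠ 0) :
    deriv (deriv fun x => G |x|) x = G'' |x| := by
  obtain ⟨σ, hσ, habs⟩ : ∃ σ : ℝ, σ * σ = 1 ∧ (fun x => |x|) =ᶠ[𝓝 x] fun x => σ * x := by
    rcases lt_or_gt_of_ne hx with h | h
    · refine ⟨-1, by norm_num, ?_⟩
      filter_upwards [Iio_mem_nhds h] with w hw using by rw [abs_of_neg hw, neg_one_mul]
    · refine ⟨1, by norm_num, ?_⟩
      filter_upwards [Ioi_mem_nhds h] with w hw using by rw [abs_of_pos hw, one_mul]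
  have hpos : ∀ᶠ w in 𝓝 x, 0 < σ * w := by
    filter_upwards [habs, eventually_ne_nhds hx] with w hw hw0
    exact hw ▸ abs_pos.2 hw0
  have hderiv : deriv (fun x => G |x|) =ᶠ[𝓝 x] fun w => σ * G' (σ * w) := by
    refine (habs.fun_comp G).deriv.trans ?_
    filter_upwards [hpos] with w hw
    exact (((hG _ hw).comp w ((hasDerivAt_id w).const_mul σ)).congr_deriv (by ring)).deriv
  have hderiv' := ((hG' _ hpos.self_of_nhds).comp x ((hasDerivAt_id x).const_mul σ)).const_mul σ
  rw [hderiv.deriv_eq, show |x| = σ * x from habs.self_of_nhds]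
  refine (hderiv'.congr_deriv ?_).deriv
  linear_combination G'' (σ * x) * hσ

lemma hasDerivAt_rpow_mul_comp_div_rpow {F : ℝ → ℝ} {F' c a r t : ℝ} (ht : 0 < t)
    (hF : HasDerivAt F F' (r / t ^ a)) :
    HasDerivAt (fun s => s ^ (-c) * F (r / s ^ a))
      (-(t ^ (-c) * (c * F (r / t ^ a) + a * (r / t ^ a * F'))) / t) t := by
  have hta : 0 < t ^ a := Real.rpow_pos_of_pos ht _
  have harg : HasDerivAt (fun s : ℝ => r / s ^ a) (-(a * (r / t ^ a)) / t) t := by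
    refine ((hasDerivAt_const t r).div (hasDerivAt_rpow_const_of_pos a ht) hta.ne').congr_deriv ?_
    field_simp
    ring
  refine ((hasDerivAt_rpow_const_of_pos (-c) ht).mul (hF.comp t harg)).congr_deriv ?_
  simp only [Function.comp_apply]
  field_simp
  ring

lemma hasDerivAt_const_mul_comp_div {F : ℝ → ℝ} {F' T r : ℝ} (c : ℝ)
    (hF : HasDerivAt F F' (r / T)) : HasDerivAt (fun r => c * F (r / T)) (c * (F' / T)) r :=
  ((hF.comp r ((hasDerivAt_id r).div_const T)).const_mul c).congr_deriv (by ring)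

section Scaling

variable {t : ℝ}

lemma rpow_gam_pow (n : ℕ) (ht : 0 < t) : (t ^ gam n) ^ (2 * n + 1) = t := by
  rw [← Real.rpow_natCast, ← Real.rpow_mul ht.le]
  push_cast
  rw [show gam n * (2 * n + 1) = 1 by linarith [two_mul_cast_mul_gam n], Real.rpow_one]

lemma rpow_neg_gam (n : ℕ) (ht : 0 < t) : t ^ (-gam n) = (t ^ gam n)⁻¹ := Real.rpow_neg ht.le _

lemma rpow_neg_three_mul_gam (n : ℕ) (ht : 0 < t) : t ^ (-(3 * gam n)) = ((t ^ gam n) ^ 3)⁻¹ := by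
  rw [Real.rpow_neg ht.le, mul_comm, Real.rpow_mul ht.le, Real.rpow_ofNat]

lemma rpow_alph_mul_rpow_gam (n : ℕ) (ht : 0 < t) : t ^ alph n * t ^ gam n = √t := by
  rw [← Real.rpow_add ht, Real.sqrt_eq_rpow, alph, sub_add_cancel]

lemma div_rpow_alph (n : ℕ) (ht : 0 < t) (r : ℝ) : r / t ^ alph n = t ^ gam n * (r / √t) := by
  have : 0 < t ^ gam n := Real.rpow_pos_of_pos ht _
  have : 0 < t ^ alph n := Real.rpow_pos_of_pos ht _
  rw [← rpow_alph_mul_rpow_gam n ht]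
  field_simp

/-- The power of `s = t^γ` equal to `t^{-ε}`. -/
noncomputable def tailScale (n : ℕ) (s : ℝ) : ℝ := s ^ (-(1 + del n))

lemma rpow_neg_eps {n : ℕ} (hn : 1 < n) (ht : 0 < t) :
    t ^ (-eps n) = tailScale n (t ^ gam n) := by
  rw [tailScale, ← Real.rpow_mul ht.le, eps_eq_gam_mul hn, mul_neg]

end Scaling

variable {n : ℕ} {η η' μ μ' h h' : ℝ → ℝ}

lemma DiffusiveSolution.hasDerivAt_mu3 (hm : DiffusiveSolution n μ μ') {y : ℝ} (hy : 0 < y) :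
    HasDerivAt (mu3 n μ) (μ' y + del n * (powerTail n y / y)) y :=
  ((hm.hasDerivAt y hy).sub (hasDerivAt_powerTail n hy)).congr_deriv (by ring)

lemma DiffusiveSolution.hasDerivAt_deriv_mu3 (hm : DiffusiveSolution n μ μ') {y : ℝ}
    (hy : 0 < y) : HasDerivAt (fun y => μ' y + del n * (powerTail n y / y))
      ((2 * mu1 y * μ y) ^ n - y / 2 * μ' y - eps n * μ y
        - del n * (del n + 1) * (powerTail n y / y ^ 2)) y :=
  ((hm.hasDerivAt_deriv y hy).sub (hasDerivAt_deriv_powerTail n hy)).congr_of_eventuallyEq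
    (.of_forall fun y => by simp only [Pi.sub_apply]; ring)

/-- The function `φ` in the variables `s = t^γ` and `y = |x|/√t`. -/
noncomputable def scaledPhi (n : ℕ) (η μ h : ℝ → ℝ) (s y : ℝ) : ℝ :=
  s⁻¹ * η (s * y) + tailScale n s * (μ y - powerTail n y) + (s ^ 3)⁻¹ * phi2 n h (s * y)

/-- The contribution `3γφ₂ + αzφ₂'` of the time derivative of `t^{-3γ} φ₂(|x|/t^α)`. -/
noncomputable def phi2Transport (n : ℕ) (h h' : ℝ → ℝ) (z : ℝ) : ℝ :=
  3 * gam n * phi2 n h z + alph n * (z * phi2Deriv n h' z)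

/-- The quantity `t · I(x, t)` in the variables `s = t^γ` and `y = |x|/√t`, after the second
derivatives of the profiles have been eliminated by their equations. -/
noncomputable def scaledResidual (n : ℕ) (η μ h h' : ℝ → ℝ) (s y : ℝ) : ℝ :=
  s * reactBase (s * y) (η (s * y)) ^ n
  + s⁻¹ * (corrSource n (s * y) (η (s * y)) (h (s * y))
      - corrRatio n * ((2 - del n) * ((1 - del n) * powerTail n (s * y))))
  + (s ^ 3)⁻¹ * phi2Transport n h h' (s * y)
  + tailScale n s * ((2 * mu1 y * μ y) ^ n
      - (del n * (del n + 1) * (powerTail n y / y ^ 2) + (eps n - del n / 2) * powerTail n y))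
  - s ^ (2 * n + 1) * (2 * mu1 y * scaledPhi n η μ h s y + scaledPhi n η μ h s y ^ 2) ^ n

lemma phiFun_eq_scaledPhi (hn : 1 < n) (η μ h : ℝ → ℝ) (x : ℝ) {t : ℝ} (ht : 0 < t) :
    phiFun n η μ h x t = scaledPhi n η μ h (t ^ gam n) (|x| / √t) := by
  rw [phiFun, scaledPhi, ← rpow_neg_eps hn ht, rpow_neg_gam n ht, rpow_neg_three_mul_gam n ht,
    div_rpow_alph n ht]
  rfl

lemma mul_deriv_time_phiFun (hr : ReactiveSolution n η η') (hm : DiffusiveSolution n μ μ')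
    (hc : CorrectorSolution n η η' h h') (hn : 1 < n) {x t z y : ℝ} (hx : x ≠ 0) (ht : 0 < t)
    (hz : |x| / t ^ alph n = z) (hy : |x| / √t = y) :
    t * deriv (fun s => phiFun n η μ h x s) t
      = -(t ^ (-gam n) * (gam n * η z + alph n * (z * η' z))
        + t ^ (-eps n) * (eps n * mu3 n μ y
          + 1 / 2 * (y * (μ' y + del n * (powerTail n y / y))))
        + t ^ (-(3 * gam n)) * (3 * gam n * phi2 n h z + alph n * (z * phi2Deriv n h' z))) := by
  have hX : 0 < |x| := abs_pos.2 hx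
  have hz0 : 0 < |x| / t ^ alph n := div_pos hX (Real.rpow_pos_of_pos ht _)
  have hy0 : 0 < |x| / t ^ (1 / 2 : ℝ) := div_pos hX (Real.rpow_pos_of_pos ht _)
  have hderiv := ((hasDerivAt_rpow_mul_comp_div_rpow (c := gam n) ht (hr.hasDerivAt _ hz0)).add
    (hasDerivAt_rpow_mul_comp_div_rpow (c := eps n) ht (hm.hasDerivAt_mu3 hy0))).add
    (hasDerivAt_rpow_mul_comp_div_rpow (c := 3 * gam n) ht (hc.hasDerivAt_phi2 hn hz0))
  simp only [← Real.sqrt_eq_rpow, hz, hy] at hderiv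
  rw [show deriv (fun s => phiFun n η μ h x s) t = _ from hderiv.deriv]
  field_simp
  ring

lemma mul_deriv_deriv_phiFun_sub (hr : ReactiveSolution n η η') (hm : DiffusiveSolution n μ μ')
    (hc : CorrectorSolution n η η' h h') (hn : 1 < n) {x t z y : ℝ} (hx : x ≠ 0) (ht : 0 < t)
    (hz : |x| / t ^ alph n = z) (hy : |x| / √t = y) :
    t * deriv (deriv fun x => phiFun n η μ h x t - kap * |x| / √t) x
      = t ^ gam n * reactBase z (η z) ^ n
        + t ^ (-eps n) * ((2 * mu1 y * μ y) ^ n - y / 2 * μ' y - eps n * μ y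
          - del n * (del n + 1) * (powerTail n y / y ^ 2))
        + t ^ (-gam n) * phi2SecondDeriv n η η' h z := by
  have hA : 0 < t ^ alph n := Real.rpow_pos_of_pos ht _
  have hs : 0 < t ^ gam n := Real.rpow_pos_of_pos ht _
  have hR : 0 < √t := Real.sqrt_pos.2 ht
  have hderiv := deriv_deriv_comp_abs
    (fun r hr0 => (((hasDerivAt_const_mul_comp_div (t ^ (-gam n))
        (hr.hasDerivAt _ (div_pos hr0 hA))).add
      (hasDerivAt_const_mul_comp_div (t ^ (-eps n)) (hm.hasDerivAt_mu3 (div_pos hr0 hR)))).add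
      (hasDerivAt_const_mul_comp_div (t ^ (-(3 * gam n)))
        (hc.hasDerivAt_phi2 hn (div_pos hr0 hA)))).sub
      (((hasDerivAt_id r).const_mul kap).div_const (√t)))
    (fun r hr0 => (((hasDerivAt_const_mul_comp_div (t ^ (-gam n))
        ((hr.hasDerivAt_deriv _ (div_pos hr0 hA)).div_const (t ^ alph n))).add
      (hasDerivAt_const_mul_comp_div (t ^ (-eps n))
        ((hm.hasDerivAt_deriv_mu3 (div_pos hr0 hR)).div_const (√t)))).add
      (hasDerivAt_const_mul_comp_div (t ^ (-(3 * gam n)))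
        ((hc.hasDerivAt_phi2Deriv (div_pos hr0 hA)).div_const (t ^ alph n)))).sub_const
      (kap * 1 / √t)) hx
  have hAs := rpow_alph_mul_rpow_gam n ht
  have htA : t = (t ^ alph n * t ^ gam n) ^ 2 := by rw [hAs, Real.sq_sqrt ht.le]
  rw [show deriv (deriv fun x => phiFun n η μ h x t - kap * |x| / √t) x = _ from hderiv, hz, hy,
    rpow_neg_gam n ht, rpow_neg_three_mul_gam n ht, ← hAs]
  generalize t ^ (-eps n) = e
  generalize t ^ alph n = A at *
  generalize t ^ gam n = s at *
  rw [htA]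
  field_simp

lemma mul_IFun_eq_scaledResidual (hr : ReactiveSolution n η η') (hm : DiffusiveSolution n μ μ')
    (hc : CorrectorSolution n η η' h h') (hn : 1 < n) {x t : ℝ} (hx : x ≠ 0) (ht : 0 < t) :
    t * IFun n η μ h x t = scaledResidual n η μ h h' (t ^ gam n) (|x| / √t) := by
  have : 0 < |x| / √t := div_pos (abs_pos.2 hx) (Real.sqrt_pos.2 ht)
  have htime := mul_deriv_time_phiFun hr hm hc hn hx ht (div_rpow_alph n ht _) rfl
  have hspace := mul_deriv_deriv_phiFun_sub hr hm hc hn hx ht (div_rpow_alph n ht _) rfl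
  rw [rpow_neg_gam n ht] at htime hspace
  rw [rpow_neg_three_mul_gam n ht] at htime
  rw [IFun, mul_sub, mul_add, mul_neg, htime, hspace, phiFun_eq_scaledPhi hn η μ h x ht,
    ubar, scaledResidual, phi2Transport, ← rpow_neg_eps hn ht, rpow_gam_pow n ht, mu3,
    phi2SecondDeriv, ← powerTail]
  field_simp
  ring

end Residual

/-! ### The residual inside the diffusive layer -/

section Inner

variable {n : ℕ} {η η' μ μ' h h' : ℝ → ℝ} {s y z : ℝ}

lemma tailScale_pos (n : ℕ) (hs : 0 < s) : 0 < tailScale n s := Real.rpow_pos_of_pos hs _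

lemma tailScale_mul_powerTail (n : ℕ) (hs : 0 < s) (hy : 0 < y) :
    tailScale n s * powerTail n y = s⁻¹ * powerTail n (s * y) := by
  rw [tailScale, powerTail, powerTail, Real.mul_rpow hs.le hy.le, neg_add, Real.rpow_add hs,
    Real.rpow_neg_one]
  ring

lemma tailScale_le_inv_sq (hn : 1 < n) (hs : 1 ≤ s) : tailScale n s ≤ (s ^ 2)⁻¹ := by
  rw [← Real.rpow_ofNat, ← Real.rpow_neg (by linarith)]
  exact Real.rpow_le_rpow_of_exponent_le hs (by linarith [one_lt_del hn])

lemma pow_mul_tailScale_pow (hn : 1 < n) (hs : 0 < s) :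
    s ^ (2 * n + 1) * tailScale n s ^ n = tailScale n s := by
  rw [tailScale, ← Real.rpow_natCast, ← Real.rpow_natCast (s ^ _), ← Real.rpow_mul hs.le,
    ← Real.rpow_add hs]
  congr 1
  push_cast
  linear_combination cast_mul_one_sub_del hn

lemma sq_mul_powerTail_le (hn : 4 ≤ n) (hz : 0 < z) (hz1 : z ≤ 1) :
    z ^ 2 * powerTail n z ≤ lam n := by
  rw [powerTail, mul_left_comm, ← Real.rpow_ofNat, ← Real.rpow_add hz]
  exact mul_le_of_le_one_right (lam_pos (by lia)).le
    (Real.rpow_le_one hz.le hz1 (by linarith [del_le_two hn]))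

/-- The coefficient of `y⁴` in the expansion of `μ` at the origin relative to the power tail. -/
noncomputable def nearRem (n : ℕ) (μ : ℝ → ℝ) (y : ℝ) : ℝ :=
  (μ y - nearProfile n y) / (y ^ 4 * powerTail n y)

lemma eq_powerTail_mul_nearRem (hn : 1 < n) (hy : 0 < y) (μ : ℝ → ℝ) :
    μ y = powerTail n y * (1 + corrRatio n * y ^ 2 + nearRem n μ y * y ^ 4) := by
  have := powerTail_pos hn hy
  rw [nearRem, nearProfile]
  field_simp
  ring

lemma DiffusiveSolution.exists_abs_nearRem_le (hm : DiffusiveSolution n μ μ') (hn : 4 ≤ n) :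
    ∃ C > 0, ∀ y > 0, y ≤ 1 → |nearRem n μ y| ≤ C := by
  obtain ⟨C, hC, hbound⟩ := hm.exists_abs_sub_nearProfile_le hn
  refine ⟨C, hC, fun y hy hy1 => ?_⟩
  have : 0 < y ^ 4 * powerTail n y := mul_pos (by positivity) (powerTail_pos (by lia) hy)
  rw [nearRem, abs_div, abs_of_pos this, div_le_iff₀ this]
  exact hbound y hy hy1

lemma scaledPhi_eq_inner (hn : 1 < n) (hs : 0 < s) (hy : 0 < y) (hz : z = s * y)
    (η μ h : ℝ → ℝ) :
    scaledPhi n η μ h s y = s⁻¹ * (η z + h z * (s ^ 2)⁻¹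
      + nearRem n μ y * (z ^ 4 * powerTail n z) * ((s ^ 2)⁻¹) ^ 2) := by
  have htail : tailScale n s * (μ y - powerTail n y)
      = s⁻¹ * powerTail n z * (corrRatio n * y ^ 2 + nearRem n μ y * y ^ 4) := by
    rw [hz, ← tailScale_mul_powerTail n hs hy, eq_powerTail_mul_nearRem hn hy μ]
    ring
  rw [scaledPhi, htail, ← hz, phi2_eq hn (hz ▸ mul_pos hs hy)]
  rw [show y = z / s by rw [hz]; field_simp]
  field_simp
  ring

lemma mul_reaction_scaledPhi_eq (hn : 1 < n) (hs : 0 < s) (hy : 0 < y) (hz : z = s * y)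
    (η μ h : ℝ → ℝ) :
    s ^ (2 * n + 1) * (2 * mu1 y * scaledPhi n η μ h s y + scaledPhi n η μ h s y ^ 2) ^ n
      = s * reactBase z (η z) ^ n + s⁻¹ * corrSource n z (η z) (h z)
        + (s ^ 3)⁻¹ * reactionRem n (2 * kap * z, -1 / 12 * z ^ 2, mu1Rem y * (z ^ 2) ^ 2, 1, η z,
          h z, nearRem n μ y * (z ^ 4 * powerTail n z), (s ^ 2)⁻¹) := by
  have hexpand := reaction_pow_eq n (2 * kap * z) (-1 / 12 * z ^ 2) (mu1Rem y * (z ^ 2) ^ 2) 1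
    (η z) (h z) (nearRem n μ y * (z ^ 4 * powerTail n z)) (s ^ 2)⁻¹
  have hpow : s ^ (2 * n + 1) * (s ^ 2)⁻¹ ^ n = s := by
    rw [pow_succ, pow_mul, inv_pow]
    field_simp
  have hbase : 2 * mu1 y * scaledPhi n η μ h s y + scaledPhi n η μ h s y ^ 2
      = (s ^ 2)⁻¹ * (2 * kap * z * ((1 + -1 / 12 * z ^ 2 * (s ^ 2)⁻¹
        + mu1Rem y * (z ^ 2) ^ 2 * (s ^ 2)⁻¹ ^ 2) * (η z + h z * (s ^ 2)⁻¹
          + nearRem n μ y * (z ^ 4 * powerTail n z) * (s ^ 2)⁻¹ ^ 2))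
        + 1 * (η z + h z * (s ^ 2)⁻¹
          + nearRem n μ y * (z ^ 4 * powerTail n z) * (s ^ 2)⁻¹ ^ 2) ^ 2) := by
    rw [scaledPhi_eq_inner hn hs hy hz, mu1_eq_taylor hy, hz]
    field_simp
    ring
  rw [hbase, mul_pow, ← mul_assoc, hpow, hexpand, corrSource, reactBase, kap3, one_mul, mul_one]
  field_simp

/-- Inside the layer the reaction term can be expanded about the diffusive tail and about the
reactive profile; the leading terms cancel and only the two remainders are left. -/
lemma scaledResidual_eq_inner (hn : 1 < n) (hs : 0 < s) (hy : 0 < y) (hz : z = s * y)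
    (η μ h h' : ℝ → ℝ) :
    scaledResidual n η μ h h' s y = (s ^ 3)⁻¹ * (phi2Transport n h h' z
      + del n * (del n + 1) * (z ^ 2 * powerTail n z)
        * reactionRem n (1, -1 / 12, mu1Rem y, 0, 1, corrRatio n, nearRem n μ y, y ^ 2)
      - reactionRem n (2 * kap * z, -1 / 12 * z ^ 2, mu1Rem y * (z ^ 2) ^ 2, 1, η z, h z,
          nearRem n μ y * (z ^ 4 * powerTail n z), (s ^ 2)⁻¹)) := by
  have hdiffusive := two_mul_mu1_mul_powerTail_mul_pow hn hy (nearRem n μ y)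
  rw [← eq_powerTail_mul_nearRem hn hy] at hdiffusive
  have htail := tailScale_mul_powerTail n hs hy
  have hscale : s⁻¹ * y ^ 2 = (s ^ 3)⁻¹ * z ^ 2 := by
    rw [hz]
    field_simp
  rw [← hz] at htail
  rw [scaledResidual, mul_reaction_scaledPhi_eq hn hs hy hz, hdiffusive, ← hz]
  generalize reactionRem n (1, _) = R₁
  generalize reactionRem n (2 * kap * z, _) = R₂
  linear_combination (corrRatio n * ((2 - del n) * (1 - del n))
    + del n * (del n + 1) * y ^ 2 * R₁) * htail
    + del n * (del n + 1) * powerTail n z * R₁ * hscale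

lemma abs_phi2Transport_le_add (hn : 1 < n) (h h' : ℝ → ℝ) (z : ℝ) :
    |phi2Transport n h h' z|
      ≤ 3 * gam n * |phi2 n h z| + alph n * |z * phi2Deriv n h' z| := by
  have hγ := gam_pos n
  have hα := alph_pos hn
  refine (abs_add_le _ _).trans_eq ?_
  rw [abs_mul (3 * gam n), abs_mul (alph n), abs_of_pos hα, abs_of_pos (by positivity)]

lemma exists_abs_phi2Transport_le (hn : 4 ≤ n) (hh : ContinuousOn h (Icc 0 1))
    (hh' : ContinuousOn h' (Icc 0 1)) :
    ∃ C > 0, ∀ z > 0, z ≤ 1 → |phi2Transport n h h' z| ≤ C := by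
  have hn1 : 1 < n := by lia
  have hγ := gam_pos n
  have hα := alph_pos hn1
  have hl := lam_pos hn1
  obtain ⟨B, hB⟩ := isCompact_Icc.exists_bound_of_continuousOn hh
  obtain ⟨B', hB'⟩ := isCompact_Icc.exists_bound_of_continuousOn hh'
  refine ⟨3 * gam n * (|B| + |corrRatio n| * lam n)
    + alph n * (|B'| + |corrRatio n * (2 - del n)| * lam n) + 1, by positivity,
    fun z hz hz1 => ?_⟩
  have hv := powerTail_pos hn1 hz
  have htail (a : ℝ) : |a * (z ^ 2 * powerTail n z)| ≤ |a| * lam n := by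
    rw [abs_mul, abs_of_pos (by positivity : 0 < z ^ 2 * powerTail n z)]
    exact mul_le_mul_of_nonneg_left (sq_mul_powerTail_le hn hz hz1) (abs_nonneg a)
  have hphi2 : |phi2 n h z| ≤ |B| + |corrRatio n| * lam n := by
    rw [phi2_eq hn1 hz]
    exact (abs_sub _ _).trans
      (add_le_add ((hB z ⟨hz.le, hz1⟩).trans (le_abs_self B)) (htail _))
  have hderiv : |z * phi2Deriv n h' z| ≤ |B'| + |corrRatio n * (2 - del n)| * lam n := by
    rw [show z * phi2Deriv n h' z
      = z * h' z - corrRatio n * (2 - del n) * (z ^ 2 * powerTail n z) by rw [phi2Deriv]; ring]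
    refine (abs_sub _ _).trans (add_le_add ?_ (htail _))
    rw [abs_mul, abs_of_pos hz]
    exact (mul_le_of_le_one_left (abs_nonneg _) hz1).trans
      ((hB' z ⟨hz.le, hz1⟩).trans (le_abs_self B'))
  refine (abs_phi2Transport_le_add hn1 h h' z).trans ?_
  linarith [mul_le_mul_of_nonneg_left hphi2 (by positivity : 0 ≤ 3 * gam n),
    mul_le_mul_of_nonneg_left hderiv hα.le]

lemma CorrectorTail.abs_phi2Transport_le {M : ℝ} (ht : CorrectorTail n h h' M) (hn : 1 < n)
    (hz : 1 ≤ z) : |phi2Transport n h h' z| ≤ (3 * gam n + alph n) * M * powerTail n z := by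
  have hγ := gam_pos n
  have hα := alph_pos hn
  refine (abs_phi2Transport_le_add hn h h' z).trans ?_
  linarith [mul_le_mul_of_nonneg_left (ht.abs_phi2_le z hz) (by positivity : 0 ≤ 3 * gam n),
    mul_le_mul_of_nonneg_left (ht.abs_mul_phi2Deriv_le z hz) hα.le]

lemma exists_abs_diffusiveRem_le (hm : DiffusiveSolution n μ μ') (hn : 4 ≤ n) :
    ∃ C > 0, ∀ y > 0, y ≤ 1 →
      |reactionRem n (1, -1 / 12, mu1Rem y, 0, 1, corrRatio n, nearRem n μ y, y ^ 2)| ≤ C := by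
  obtain ⟨K, hK, hnear⟩ := hm.exists_abs_nearRem_le hn
  have hp := abs_nonneg (corrRatio n)
  obtain ⟨C, hC, hrem⟩ := exists_abs_le_of_continuous (contDiff_reactionRem n).continuous
    (1 + |corrRatio n| + K)
  refine ⟨C + 1, by positivity, fun y hy hy1 => (hrem _ ?_).trans (by linarith)⟩
  have hm := abs_mu1Rem_le_one hy hy1
  have hρ := hnear y hy hy1
  have hy2 : y ^ 2 ≤ 1 := pow_le_one₀ hy.le hy1
  simp only [Prod.norm_mk, sup_le_iff, Real.norm_eq_abs, abs_one, abs_zero, abs_sq]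
  rw [abs_of_neg (by norm_num : (-1 / 12 : ℝ) < 0)]
  refine ⟨?_, ?_, ?_, ?_, ?_, ?_, ?_, ?_⟩ <;> linarith

lemma exists_abs_reactiveRem_le (hη : ContinuousOn η (Icc 0 1)) (hh : ContinuousOn h (Icc 0 1))
    (hm : DiffusiveSolution n μ μ') (hn : 4 ≤ n) :
    ∃ C > 0, ∀ y > 0, y ≤ 1 → ∀ z > 0, z ≤ 1 → ∀ T ≥ 0, T ≤ 1 →
      |reactionRem n (2 * kap * z, -1 / 12 * z ^ 2, mu1Rem y * (z ^ 2) ^ 2, 1, η z, h z,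
        nearRem n μ y * (z ^ 4 * powerTail n z), T)| ≤ C := by
  have hn1 : 1 < n := by lia
  have hk := kap_pos
  obtain ⟨K, hK, hnear⟩ := hm.exists_abs_nearRem_le hn
  obtain ⟨B, hB⟩ := isCompact_Icc.exists_bound_of_continuousOn hη
  obtain ⟨B', hB'⟩ := isCompact_Icc.exists_bound_of_continuousOn hh
  obtain ⟨C, hC, hrem⟩ := exists_abs_le_of_continuous (contDiff_reactionRem n).continuous
    (1 + 2 * kap + |B| + |B'| + K * lam n)
  refine ⟨C + 1, by positivity, fun y hy hy1 z hz hz1 T hT hT1 =>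
    (hrem _ ?_).trans (by linarith)⟩
  have hv := powerTail_pos hn1 hz
  have hz2 : z ^ 2 ≤ 1 := pow_le_one₀ hz.le hz1
  have hm1 : |mu1Rem y * (z ^ 2) ^ 2| ≤ 1 := by
    rw [abs_mul, abs_of_pos (by positivity : 0 < (z ^ 2) ^ 2)]
    exact mul_le_one₀ (abs_mu1Rem_le_one hy hy1) (by positivity) (pow_le_one₀ (by positivity) hz2)
  have hρ : |nearRem n μ y * (z ^ 4 * powerTail n z)| ≤ K * lam n := by
    rw [abs_mul, abs_of_pos (by positivity : 0 < z ^ 4 * powerTail n z)]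
    refine mul_le_mul (hnear y hy hy1) ?_ (by positivity) hK.le
    rw [show z ^ 4 * powerTail n z = z ^ 2 * (z ^ 2 * powerTail n z) by ring]
    exact (mul_le_of_le_one_left (by positivity) hz2).trans (sq_mul_powerTail_le hn hz hz1)
  have hηz := (hB z ⟨hz.le, hz1⟩).trans (le_abs_self B)
  have hhz := (hB' z ⟨hz.le, hz1⟩).trans (le_abs_self B')
  have hkz : 2 * kap * z ≤ 2 * kap := mul_le_of_le_one_right (by positivity) hz1
  have hpos : 0 < K * lam n := mul_pos hK (lam_pos hn1)
  rw [Real.norm_eq_abs] at hηz hhz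
  simp only [Prod.norm_mk, sup_le_iff, Real.norm_eq_abs, abs_one]
  rw [abs_of_pos (by positivity : 0 < 2 * kap * z), abs_of_nonneg hT,
    abs_of_nonpos (by linarith [sq_nonneg z] : -1 / 12 * z ^ 2 ≤ 0)]
  refine ⟨?_, ?_, ?_, ?_, ?_, ?_, ?_, ?_⟩ <;>
    linarith [abs_nonneg B, abs_nonneg B']

lemma exists_abs_scaledResidual_le_of_mul_le_one (hη : ContinuousOn η (Icc 0 1))
    (hh : ContinuousOn h (Icc 0 1)) (hh' : ContinuousOn h' (Icc 0 1))
    (hm : DiffusiveSolution n μ μ') (hn : 4 ≤ n) :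
    ∃ C > 0, ∀ s ≥ 1, ∀ y > 0, s * y ≤ 1 →
      |scaledResidual n η μ h h' s y| ≤ C * (s ^ 3)⁻¹ := by
  have hn1 : 1 < n := by lia
  have hdd := del_mul_succ_pos hn1
  have hl := lam_pos hn1
  obtain ⟨C₀, hC₀, htransport⟩ := exists_abs_phi2Transport_le hn hh hh'
  obtain ⟨C₁, hC₁, hdiffusive⟩ := exists_abs_diffusiveRem_le hm hn
  obtain ⟨C₂, hC₂, hreactive⟩ := exists_abs_reactiveRem_le hη hh hm hn
  refine ⟨C₀ + del n * (del n + 1) * lam n * C₁ + C₂, by positivity, fun s hs y hy hsy => ?_⟩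
  have hs0 : 0 < s := by linarith
  have hz : 0 < s * y := mul_pos hs0 hy
  have hy1 : y ≤ 1 := (le_mul_of_one_le_left hy.le hs).trans hsy
  have hv := powerTail_pos hn1 hz
  rw [scaledResidual_eq_inner hn1 hs0 hy rfl, abs_mul, abs_of_pos (by positivity : 0 < (s ^ 3)⁻¹),
    mul_comm]
  gcongr
  refine (abs_sub _ _).trans (add_le_add ((abs_add_le _ _).trans (add_le_add
    (htransport _ hz hsy) ?_)) (hreactive y hy hy1 _ hz hsy _ (by positivity)
      (inv_le_one_of_one_le₀ (one_le_pow₀ hs))))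
  rw [abs_mul, abs_of_pos (by positivity)]
  gcongr
  exacts [sq_mul_powerTail_le hn hz hsy, hdiffusive y hy hy1]

/-- The corrector relative to `z²v`. -/
noncomputable def relCorr (n : ℕ) (h : ℝ → ℝ) (z : ℝ) : ℝ := h z / (z ^ 2 * powerTail n z)

lemma mul_relCorr (hn : 1 < n) (hz : 0 < z) (h : ℝ → ℝ) :
    powerTail n z * (z ^ 2 * relCorr n h z) = h z := by
  have := powerTail_pos hn hz
  rw [relCorr]
  field_simp

lemma CorrectorTail.abs_relCorr_sub_le {M : ℝ} (ht : CorrectorTail n h h' M) (hn : 1 < n)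
    (hz : 1 ≤ z) : |relCorr n h z - corrRatio n| ≤ M * (1 / z ^ 2) := by
  have hz0 : 0 < z := by linarith
  have hv := powerTail_pos hn hz0
  have hphi := ht.abs_phi2_le z hz
  rw [phi2_eq hn hz0, ← mul_relCorr hn hz0 h, show powerTail n z * (z ^ 2 * relCorr n h z)
    - corrRatio n * (z ^ 2 * powerTail n z)
      = z ^ 2 * powerTail n z * (relCorr n h z - corrRatio n) by ring, abs_mul,
    abs_of_pos (by positivity)] at hphi
  rw [mul_one_div, le_div_iff₀ (by positivity)]
  refine le_of_mul_le_mul_right ?_ hv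
  linarith

lemma reactionRem_eq_relative (hn : 1 < n) (hs : 0 < s) (hy : 0 < y) (hz : z = s * y)
    (η h : ℝ → ℝ) (m ρ : ℝ) :
    reactionRem n (2 * kap * z, -1 / 12 * z ^ 2, m * (z ^ 2) ^ 2, 1, η z, h z,
        ρ * (z ^ 4 * powerTail n z), (s ^ 2)⁻¹)
      = del n * (del n + 1) * (z ^ 2 * powerTail n z)
        * reactionRem n (1, -1 / 12, m, tailRatio n z, relProfile n η z, relCorr n h z, ρ,
            y ^ 2) := by
  have hz0 : 0 < z := hz ▸ mul_pos hs hy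
  have hk := kap_pos
  have hv := powerTail_pos hn hz0
  have hscale := reactionRem_scale (n := n) (by lia) hv.ne' (pow_ne_zero 2 hz0.ne')
    (pow_ne_zero 2 hy.ne') (k := 2 * kap * z) (by positivity) (-1 / 12) m (relProfile n η z)
    (relCorr n h z) ρ
  rw [powerTail_mul_relProfile hn hz0, mul_relCorr hn hz0, two_kap_mul_powerTail_pow hn hz0,
    ← tailRatio] at hscale
  rw [show ρ * (z ^ 4 * powerTail n z) = powerTail n z * ((z ^ 2) ^ 2 * ρ) by ring,
    show (s ^ 2)⁻¹ = y ^ 2 / z ^ 2 by rw [hz]; field_simp, hscale]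
  field_simp

lemma exists_abs_diffusiveRem_sub_relative_le {M M' : ℝ} (hr : ReactiveTail n η M)
    (hc : CorrectorTail n h h' M') (hm : DiffusiveSolution n μ μ') (hn : 4 ≤ n) :
    ∃ C > 0, ∀ y > 0, y ≤ 1 → ∀ z ≥ 1,
      |reactionRem n (1, -1 / 12, mu1Rem y, 0, 1, corrRatio n, nearRem n μ y, y ^ 2)
        - reactionRem n (1, -1 / 12, mu1Rem y, tailRatio n z, relProfile n η z, relCorr n h z,
            nearRem n μ y, y ^ 2)| ≤ C * (1 / z ^ 2) := by
  have hn1 : 1 < n := by lia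
  have hM := hr.one_le
  have hM' := hc.pos
  have hp := abs_nonneg (corrRatio n)
  obtain ⟨K, hK, hnear⟩ := hm.exists_abs_nearRem_le hn
  obtain ⟨C, hC, hlip⟩ := exists_abs_sub_le_of_contDiff (contDiff_reactionRem n)
    (1 + M + M' + |corrRatio n| + K)
  refine ⟨C * (M + M') + 1, by positivity, fun y hy hy1 z hz => ?_⟩
  have hz0 : 0 < z := by linarith
  have hm := abs_mu1Rem_le_one hy hy1
  have hρ := hnear y hy hy1
  have hy2 : y ^ 2 ≤ 1 := pow_le_one₀ hy.le hy1
  have hz2 := one_div_sq_le_one hz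
  have htail := hr.tailRatio_le z hz
  have hprofile := hr.abs_relProfile_sub_one_le z hz
  have hcorr := hc.abs_relCorr_sub_le hn1 hz
  have htail0 := tailRatio_pos hn1 hz0
  have hprofile_le := hr.abs_relProfile_le hz
  have hcorr_le : |relCorr n h z| ≤ M' + |corrRatio n| := by
    have := abs_add_le (relCorr n h z - corrRatio n) (corrRatio n)
    rw [sub_add_cancel] at this
    linarith [mul_le_mul_of_nonneg_left hz2 hM'.le]
  have htail_le := hr.tailRatio_le_const hz
  have hdist : ‖((1, -1 / 12, mu1Rem y, 0, 1, corrRatio n, nearRem n μ y, y ^ 2) :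
        ℝ × ℝ × ℝ × ℝ × ℝ × ℝ × ℝ × ℝ) - (1, -1 / 12, mu1Rem y, tailRatio n z, relProfile n η z,
          relCorr n h z, nearRem n μ y, y ^ 2)‖ ≤ (M + M') * (1 / z ^ 2) := by
    have : 0 ≤ 1 / z ^ 2 := by positivity
    have : 0 ≤ M * (1 / z ^ 2) := by positivity
    have : 0 ≤ M' * (1 / z ^ 2) := by positivity
    simp only [Prod.mk_sub_mk, Prod.norm_mk, sup_le_iff, Real.norm_eq_abs, sub_self, norm_zero,
      zero_sub, abs_neg]
    rw [abs_of_pos htail0, abs_sub_comm 1, abs_sub_comm (corrRatio n)]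
    refine ⟨?_, ?_, ?_, ?_, ?_, ?_, ?_⟩ <;> linarith
  refine (hlip _ _ ?_ ?_).trans ((mul_le_mul_of_nonneg_left hdist hC).trans ?_)
  · simp only [Prod.norm_mk, sup_le_iff, Real.norm_eq_abs, abs_one, abs_zero, abs_sq]
    rw [abs_of_neg (by norm_num : (-1 / 12 : ℝ) < 0)]
    refine ⟨?_, ?_, ?_, ?_, ?_, ?_, ?_, ?_⟩ <;> linarith
  · simp only [Prod.norm_mk, sup_le_iff, Real.norm_eq_abs, abs_one, abs_sq]
    rw [abs_of_neg (by norm_num : (-1 / 12 : ℝ) < 0), abs_of_pos htail0]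
    refine ⟨?_, ?_, ?_, ?_, ?_, ?_, ?_, ?_⟩ <;> linarith
  · rw [← mul_assoc]
    gcongr
    linarith

lemma exists_abs_scaledResidual_le_of_le_one {M M' : ℝ} (hr : ReactiveTail n η M)
    (hc : CorrectorTail n h h' M') (hm : DiffusiveSolution n μ μ') (hn : 4 ≤ n) :
    ∃ C > 0, ∀ s ≥ 1, ∀ y > 0, y ≤ 1 → 1 ≤ s * y →
      |scaledResidual n η μ h h' s y| ≤ C * ((s ^ 3)⁻¹ * powerTail n (s * y)) := by
  have hn1 : 1 < n := by lia
  have hdd := del_mul_succ_pos hn1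
  have hγ := gam_pos n
  have hα := alph_pos hn1
  have hM' := hc.pos
  obtain ⟨C, hC, hrem⟩ := exists_abs_diffusiveRem_sub_relative_le hr hc hm hn
  refine ⟨(3 * gam n + alph n) * M' + del n * (del n + 1) * C, by positivity,
    fun s hs y hy hy1 hz1 => ?_⟩
  have hs0 : 0 < s := by linarith
  have hz : 0 < s * y := by linarith
  have hv := powerTail_pos hn1 hz
  rw [scaledResidual_eq_inner hn1 hs0 hy rfl, reactionRem_eq_relative hn1 hs0 hy rfl,
    add_sub_assoc, ← mul_sub, abs_mul, abs_of_pos (by positivity : 0 < (s ^ 3)⁻¹)]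
  refine (mul_le_mul_of_nonneg_left ?_ (by positivity)).trans_eq (mul_left_comm _ _ _)
  refine (abs_add_le _ _).trans ?_
  rw [add_mul]
  refine add_le_add (hc.abs_phi2Transport_le hn1 hz1) ?_
  rw [abs_mul, abs_of_pos (by positivity :
    0 < del n * (del n + 1) * ((s * y) ^ 2 * powerTail n (s * y)))]
  calc _ ≤ del n * (del n + 1) * ((s * y) ^ 2 * powerTail n (s * y)) * (C * (1 / (s * y) ^ 2)) := by
        gcongr
        exact hrem y hy hy1 _ hz1
    _ = _ := by field_simp

end Inner

/-! ### The residual outside the diffusive layer -/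

section Outer

variable {n : ℕ} {η η' μ μ' h h' : ℝ → ℝ} {s y z M M' : ℝ}

/-- The perturbation of the diffusive profile `μ` by the reactive profile and the corrector: `φ` is
`tailScale n s * (μ + outerRem)`. -/
noncomputable def outerRem (n : ℕ) (η h : ℝ → ℝ) (s y : ℝ) : ℝ :=
  powerTail n y
    * ((relProfile n η (s * y) - 1) + y ^ 2 * (relCorr n h (s * y) - corrRatio n))

lemma scaledPhi_eq_outer (hn : 1 < n) (hs : 0 < s) (hy : 0 < y) (η μ h : ℝ → ℝ) :
    scaledPhi n η μ h s y = tailScale n s * (μ y + outerRem n η h s y) := by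
  have hz : 0 < s * y := mul_pos hs hy
  have hcorr : (s ^ 3)⁻¹ * (powerTail n (s * y) * ((s * y) ^ 2 * relCorr n h (s * y))
      - corrRatio n * ((s * y) ^ 2 * powerTail n (s * y)))
        = s⁻¹ * powerTail n (s * y) * (y ^ 2 * (relCorr n h (s * y) - corrRatio n)) := by
    field_simp
  rw [scaledPhi, phi2_eq hn hz, ← mul_relCorr hn hz h, ← powerTail_mul_relProfile hn hz η, hcorr,
    outerRem]
  linear_combination (-relProfile n η (s * y) - y ^ 2 * (relCorr n h (s * y) - corrRatio n))
    * tailScale_mul_powerTail n hs hy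

/-- The deviation of `corrSource` at `h`, relative to its value at the power tail, from its
limit. -/
noncomputable def corrSourceRem (n : ℕ) (η h : ℝ → ℝ) (z : ℝ) : ℝ :=
  relSlope n η z * relCorr n h z - 1 / 12 * (relBase n η z ^ (n - 1) * relProfile n η z)
    - (corrRatio n - 1 / 12)

lemma ReactiveTail.exists_abs_corrSourceRem_le (hr : ReactiveTail n η M)
    (hc : CorrectorTail n h h' M') (hn : 1 < n) :
    ∃ C > 0, ∀ z ≥ 1, |corrSourceRem n η h z| ≤ C * (1 / z ^ 2) := by
  obtain ⟨C, hC, hslope⟩ := hr.nearOne_relSlope hn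
  obtain ⟨D, hD, hprod⟩ := (hr.nearOne_relBase.pow (n - 1)).mul hr.nearOne_relProfile
  have hM' := hc.pos
  refine ⟨(1 + C) * M' + |corrRatio n| * C + 1 / 12 * D, by positivity, fun z hz => ?_⟩
  have hslope_le : |relSlope n η z| ≤ 1 + C := abs_le_one_add_of_abs_sub_one_le
    ((hslope z hz).trans (mul_le_of_le_one_right hC.le (one_div_sq_le_one hz)))
  calc |corrSourceRem n η h z|
      = |relSlope n η z * (relCorr n h z - corrRatio n) + corrRatio n * (relSlope n η z - 1)
          + -(1 / 12) * (relBase n η z ^ (n - 1) * relProfile n η z - 1)| := by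
        rw [corrSourceRem]; ring_nf
    _ ≤ |relSlope n η z| * |relCorr n h z - corrRatio n| + |corrRatio n| * |relSlope n η z - 1|
          + 1 / 12 * |relBase n η z ^ (n - 1) * relProfile n η z - 1| := by
        refine (abs_add_three _ _ _).trans_eq ?_
        simp only [abs_mul, abs_neg]
        norm_num
    _ ≤ (1 + C) * (M' * (1 / z ^ 2)) + |corrRatio n| * (C * (1 / z ^ 2))
          + 1 / 12 * (D * (1 / z ^ 2)) := by
        gcongr
        exacts [hc.abs_relCorr_sub_le hn hz, hslope z hz, hprod z hz]
    _ = _ := by ring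

lemma scaledResidual_eq_outer (hn : 1 < n) (hs : 0 < s) (hy : 0 < y) (hz : z = s * y)
    (η μ h h' : ℝ → ℝ) :
    scaledResidual n η μ h h' s y
      = (s ^ 3)⁻¹ * phi2Transport n h h' z
        + del n * (del n + 1) * (s * (powerTail n z / z ^ 2)) * (relBase n η z ^ n - 1)
        + n * (del n * (del n + 1)) * (s⁻¹ * powerTail n z) * corrSourceRem n η h z
        + tailScale n s * ((2 * mu1 y * μ y) ^ n
          - (2 * mu1 y * (μ y + outerRem n η h s y)
            + tailScale n s * (μ y + outerRem n η h s y) ^ 2) ^ n) := by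
  have hz0 : 0 < z := hz ▸ mul_pos hs hy
  have htail := hz ▸ tailScale_mul_powerTail n hs hy
  have htail_div : tailScale n s * (powerTail n y / y ^ 2) = s * (powerTail n z / z ^ 2) := by
    rw [← mul_div_assoc, htail, hz]
    field_simp
  have hsource : corrSource n z (η z) (h z) = n * (del n * (del n + 1)) * (powerTail n z
      * (relSlope n η z * relCorr n h z
        - 1 / 12 * (relBase n η z ^ (n - 1) * relProfile n η z))) := by
    rw [corrSource_eq hn hz0, ← mul_relCorr hn hz0 h]
    field_simp
  have hbase : 2 * mu1 y * (tailScale n s * (μ y + outerRem n η h s y))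
      + (tailScale n s * (μ y + outerRem n η h s y)) ^ 2 = tailScale n s
        * (2 * mu1 y * (μ y + outerRem n η h s y)
          + tailScale n s * (μ y + outerRem n η h s y) ^ 2) := by ring
  rw [scaledResidual, scaledPhi_eq_outer hn hs hy, hbase, mul_pow (tailScale n s),
    ← mul_assoc (s ^ (2 * n + 1)), pow_mul_tailScale_pow hn hs, ← hz, reactBase_pow_eq hn hz0,
    hsource, corrSourceRem]
  linear_combination (-del n * (del n + 1)) * htail_div - (eps n - del n / 2) * htail
    - s⁻¹ * powerTail n z * corrRatio_identity hn

lemma abs_pow_sub_pow_le_mul_pow {a b B k x : ℝ} (hn : n ≠ 0) (ha : |a| ≤ B * k)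
    (hb : |b| ≤ B * k) (hab : |a - b| ≤ x * k) :
    |a ^ n - b ^ n| ≤ n * B ^ (n - 1) * x * k ^ n := by
  calc |a ^ n - b ^ n| ≤ |a - b| * n * max |a| |b| ^ (n - 1) := abs_pow_sub_pow_le a b n
    _ ≤ x * k * n * (B * k) ^ (n - 1) := by
        have := (abs_nonneg _).trans hab
        gcongr
        exact max_le ha hb
    _ = n * B ^ (n - 1) * x * k ^ n := by rw [mul_pow, ← pow_sub_one_mul hn k]; ring

lemma exists_abs_mul_pow_sub_pow_le {A D : ℝ} (hn : n ≠ 0) (hA : 0 < A) (hD : 0 < D) :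
    ∃ C > 0, ∀ e T k m u ψ : ℝ, 0 < e → e ≤ T → T ≤ 1 → 0 ≤ k → k ≤ 1 → 0 ≤ m → m ≤ 1 →
      |u| ≤ A * k → |ψ| ≤ D * T * k →
      |e * ((2 * m * u) ^ n - (2 * m * (u + ψ) + e * (u + ψ) ^ 2) ^ n)| ≤ C * (T ^ 2 * k ^ n) := by
  set X := 2 * D + (A + D) ^ 2
  have hX : 0 < X := by positivity
  refine ⟨n * (2 * A + X) ^ (n - 1) * X, by positivity,
    fun e T k m u ψ he heT hT hk hk1 hm hm1 hu hψ => ?_⟩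
  have hT0 : 0 < T := he.trans_le heT
  have hsum : |u + ψ| ≤ (A + D) * k := (abs_add_le _ _).trans <| by
    linarith [hψ.trans (mul_le_mul_of_nonneg_right (mul_le_of_le_one_right hD.le hT) hk)]
  have hsq : (u + ψ) ^ 2 ≤ (A + D) ^ 2 * k := by
    rw [← sq_abs]
    calc |u + ψ| ^ 2 ≤ (A + D) ^ 2 * (k * k) := by rw [← sq, ← mul_pow]; gcongr
      _ ≤ (A + D) ^ 2 * k := by gcongr; exact mul_le_of_le_one_left hk hk1
  have hdiff : |2 * m * u - (2 * m * (u + ψ) + e * (u + ψ) ^ 2)| ≤ X * T * k := by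
    calc |2 * m * u - (2 * m * (u + ψ) + e * (u + ψ) ^ 2)|
        = |2 * (m * ψ) + e * (u + ψ) ^ 2| := by rw [← abs_neg]; ring_nf
      _ ≤ 2 * (m * |ψ|) + e * (u + ψ) ^ 2 := by
          refine (abs_add_le _ _).trans_eq ?_
          rw [abs_mul, abs_mul m, abs_two, abs_of_nonneg hm,
            abs_of_nonneg (by positivity : 0 ≤ e * (u + ψ) ^ 2)]
      _ ≤ 2 * (1 * (D * T * k)) + T * ((A + D) ^ 2 * k) := by gcongr
      _ = X * T * k := by ring
  have hdiff' : X * T * k ≤ X * k := by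
    gcongr
    exact mul_le_of_le_one_right hX.le hT
  have hleft : |2 * m * u| ≤ 2 * A * k := by
    rw [abs_mul, abs_of_nonneg (by positivity)]
    linarith [mul_le_mul hm1 hu (abs_nonneg u) zero_le_one]
  have hright := abs_sub_abs_le_abs_sub (2 * m * (u + ψ) + e * (u + ψ) ^ 2) (2 * m * u)
  rw [abs_sub_comm] at hright
  have hXk : 0 ≤ X * k := by positivity
  rw [abs_mul, abs_of_pos he]
  calc _ ≤ T * (n * (2 * A + X) ^ (n - 1) * (X * T) * k ^ n) := by
        gcongr
        exact abs_pow_sub_pow_le_mul_pow hn (by linarith) (by linarith) hdiff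
    _ = _ := by ring

lemma rpow_neg_two_mul_eps_le_one (hn : 1 < n) (hy : 1 ≤ y) : y ^ (-(2 * eps n)) ≤ 1 :=
  Real.rpow_le_one_of_one_le_of_nonpos hy (by linarith [eps_pos hn])

lemma powerTail_le_rpow_neg_two_mul_eps (hn : 1 < n) (hy : 1 ≤ y) :
    powerTail n y ≤ lam n * y ^ (-(2 * eps n)) :=
  mul_le_mul_of_nonneg_left (Real.rpow_le_rpow_of_exponent_le hy
    (by linarith [del_eq_one_add hn, eps_pos hn])) (lam_pos hn).le

lemma rpow_neg_two_mul_eps_pow_le (hn : 1 < n) (hy : 1 ≤ y) :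
    (y ^ (-(2 * eps n))) ^ n ≤ (y ^ 2)⁻¹ := by
  have hy0 : 0 ≤ y := by linarith
  rw [← Real.rpow_natCast, ← Real.rpow_mul hy0, ← Real.rpow_two, ← Real.rpow_neg hy0]
  exact Real.rpow_le_rpow_of_exponent_le hy
    (by linarith [cast_sub_one_mul_eps hn, eps_pos hn])

lemma one_div_mul_sq_le (hs : 1 ≤ s) (hy : 1 ≤ y) : 1 / (s * y) ^ 2 ≤ (s ^ 2)⁻¹ := by
  rw [one_div]
  gcongr
  exact le_mul_of_one_le_right (by linarith) hy

lemma abs_outerRem_le (hr : ReactiveTail n η M) (hc : CorrectorTail n h h' M') (hn : 1 < n)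
    (hs : 1 ≤ s) (hy : 1 ≤ y) :
    |outerRem n η h s y| ≤ lam n * (M + M') * (s ^ 2)⁻¹ * y ^ (-(2 * eps n)) := by
  have hM := hr.one_le
  have hM' := hc.pos
  have hl := lam_pos hn
  have hz : 1 ≤ s * y := one_le_mul_of_one_le_of_one_le hs hy
  have hv := powerTail_pos hn (one_pos.trans_le hy)
  have hsum : |(relProfile n η (s * y) - 1) + y ^ 2 * (relCorr n h (s * y) - corrRatio n)|
      ≤ (M + M') * (s ^ 2)⁻¹ := by
    calc _ ≤ |relProfile n η (s * y) - 1| + y ^ 2 * |relCorr n h (s * y) - corrRatio n| := by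
          refine (abs_add_le _ _).trans_eq ?_
          rw [abs_mul, abs_sq]
      _ ≤ M * (1 / (s * y) ^ 2) + y ^ 2 * (M' * (1 / (s * y) ^ 2)) := by
          gcongr
          exacts [hr.abs_relProfile_sub_one_le _ hz, hc.abs_relCorr_sub_le hn hz]
      _ = M * (1 / (s * y) ^ 2) + M' * (s ^ 2)⁻¹ := by field_simp
      _ ≤ M * (s ^ 2)⁻¹ + M' * (s ^ 2)⁻¹ := by gcongr; exact one_div_mul_sq_le hs hy
      _ = _ := by ring
  rw [outerRem, abs_mul, abs_of_pos hv]
  calc _ ≤ lam n * y ^ (-(2 * eps n)) * ((M + M') * (s ^ 2)⁻¹) := by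
        gcongr
        exact powerTail_le_rpow_neg_two_mul_eps hn hy
    _ = _ := by ring

lemma exists_abs_diffusive_reaction_sub_le {A : ℝ} (hr : ReactiveTail n η M)
    (hc : CorrectorTail n h h' M') (hA : 0 < A) (hμ : ∀ y ≥ 1, |μ y| ≤ A * y ^ (-(2 * eps n)))
    (hn : 1 < n) :
    ∃ C > 0, ∀ s ≥ 1, ∀ y ≥ 1,
      |tailScale n s * ((2 * mu1 y * μ y) ^ n
        - (2 * mu1 y * (μ y + outerRem n η h s y)
          + tailScale n s * (μ y + outerRem n η h s y) ^ 2) ^ n)|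
        ≤ C * ((s ^ 4)⁻¹ * (y ^ 2)⁻¹) := by
  have hM := hr.one_le
  have hM' := hc.pos
  have hl := lam_pos hn
  obtain ⟨C, hC, hdiff⟩ := exists_abs_mul_pow_sub_pow_le (n := n) (by lia) hA
    (by positivity : 0 < lam n * (M + M'))
  refine ⟨C, hC, fun s hs y hy => ?_⟩
  have hy0 : 0 ≤ y := by linarith
  refine (hdiff _ (s ^ 2)⁻¹ (y ^ (-(2 * eps n))) _ _ _ (tailScale_pos n (by linarith))
    (tailScale_le_inv_sq hn hs) (inv_le_one_of_one_le₀ (one_le_pow₀ hs)) (by positivity)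
    (rpow_neg_two_mul_eps_le_one hn hy) (mu1_nonneg hy0) (mu1_le_one hy0) (hμ y hy)
    (abs_outerRem_le hr hc hn hs hy)).trans ?_
  rw [inv_pow, ← pow_mul]
  gcongr
  exact rpow_neg_two_mul_eps_pow_le hn hy

lemma exists_abs_scaledResidual_le_of_one_le (hr : ReactiveTail n η M)
    (hc : CorrectorTail n h h' M') (hm : DiffusiveSolution n μ μ') (hn : 1 < n) :
    ∃ C > 0, ∀ s ≥ 1, ∀ y ≥ 1, |scaledResidual n η μ h h' s y|
      ≤ C * ((s ^ 3)⁻¹ * powerTail n (s * y) + (s ^ 4)⁻¹ * (y ^ 2)⁻¹) := by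
  have hM' := hc.pos
  have hγ := gam_pos n
  have hα := alph_pos hn
  have hdd := del_mul_succ_pos hn
  obtain ⟨A, hA, hμ⟩ := hm.exists_abs_le_rpow
  obtain ⟨B, hB, hbase⟩ := hr.nearOne_relBase.pow n
  obtain ⟨D, hD, hsource⟩ := hr.exists_abs_corrSourceRem_le hc hn
  obtain ⟨E, hE, hreaction⟩ := exists_abs_diffusive_reaction_sub_le hr hc hA hμ hn
  set N := del n * (del n + 1)
  set K := (3 * gam n + alph n) * M' + N * B + n * N * D
  have : 0 < K := by positivity
  refine ⟨K + E, by positivity, fun s hs y hy => ?_⟩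
  have hs0 : 0 < s := by linarith
  have hy0 : 0 < y := by linarith
  have hz : 1 ≤ s * y := one_le_mul_of_one_le_of_one_le hs hy
  have hv := powerTail_pos hn (one_pos.trans_le hz)
  have hzs := one_div_mul_sq_le hs hy
  rw [scaledResidual_eq_outer hn hs0 hy0 rfl]
  set v := powerTail n (s * y)
  have hfour (a b c d : ℝ) : |a + b + c + d| ≤ |a| + |b| + |c| + |d| :=
    (abs_add_le _ _).trans (by gcongr; exact abs_add_three a b c)
  calc _ ≤ (s ^ 3)⁻¹ * |phi2Transport n h h' (s * y)|
          + N * (s * (v * (1 / (s * y) ^ 2))) * |relBase n η (s * y) ^ n - 1|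
          + n * N * (s⁻¹ * v) * |corrSourceRem n η h (s * y)| + E * ((s ^ 4)⁻¹ * (y ^ 2)⁻¹) := by
        refine (hfour _ _ _ _).trans (add_le_add (le_of_eq ?_) (hreaction s hs y hy))
        rw [abs_mul, abs_mul (N * _), abs_mul (n * N * _), abs_of_pos (by positivity),
          abs_of_pos (by positivity : 0 < N * _), abs_of_nonneg (by positivity : 0 ≤ n * N * _),
          mul_one_div]
    _ ≤ (s ^ 3)⁻¹ * ((3 * gam n + alph n) * M' * v)
          + N * (s * (v * (s ^ 2)⁻¹)) * (B * (s ^ 2)⁻¹)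
          + n * N * (s⁻¹ * v) * (D * (s ^ 2)⁻¹) + E * ((s ^ 4)⁻¹ * (y ^ 2)⁻¹) := by
        gcongr
        · exact hc.abs_phi2Transport_le hn hz
        · exact (hbase _ hz).trans (by gcongr)
        · exact (hsource _ hz).trans (by gcongr)
    _ = K * ((s ^ 3)⁻¹ * v) + E * ((s ^ 4)⁻¹ * (y ^ 2)⁻¹) := by
        simp only [K]
        field_simp
    _ ≤ (K + E) * ((s ^ 3)⁻¹ * v + (s ^ 4)⁻¹ * (y ^ 2)⁻¹) := by
        have : 0 < K * ((s ^ 4)⁻¹ * (y ^ 2)⁻¹) := by positivity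
        have : 0 < E * ((s ^ 3)⁻¹ * v) := by positivity
        linarith

end Outer

/-! ### Integration of the residual -/

section Integration

open MeasureTheory

variable {n : ℕ} {η η' μ μ' h h' : ℝ → ℝ} {s y : ℝ}

lemma one_le_two_rpow_mul_one_add_rpow_neg {d z : ℝ} (hd : 0 ≤ d) (hz : 0 ≤ z) (hz1 : z ≤ 1) :
    1 ≤ 2 ^ d * (1 + z) ^ (-d) := by
  rw [Real.rpow_neg (by linarith), ← div_eq_mul_inv, one_le_div (by positivity)]
  exact Real.rpow_le_rpow (by linarith) (by linarith) hd

lemma rpow_neg_le_two_rpow_mul_one_add_rpow_neg {d z : ℝ} (hd : 0 ≤ d) (hz : 1 ≤ z) :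
    z ^ (-d) ≤ 2 ^ d * (1 + z) ^ (-d) := by
  have hz0 : 0 < z := by linarith
  have hinv : 1 ≤ 2 ^ d * (1 + z⁻¹) ^ (-d) :=
    one_le_two_rpow_mul_one_add_rpow_neg hd (by positivity) (inv_le_one_of_one_le₀ hz)
  calc z ^ (-d) ≤ z ^ (-d) * (2 ^ d * (1 + z⁻¹) ^ (-d)) :=
        le_mul_of_one_le_right (by positivity) hinv
    _ = 2 ^ d * (z * (1 + z⁻¹)) ^ (-d) := by
        rw [Real.mul_rpow hz0.le (by positivity)]
        ring
    _ = 2 ^ d * (1 + z) ^ (-d) := by rw [mul_add, mul_inv_cancel₀ hz0.ne', mul_one, add_comm]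

/-- The majorant of the residual at `(s, y)`: its first part lives in the reactive layer
`y ≲ 1 / s`, the second one in the diffusive layer `y ≲ 1`. -/
noncomputable def residualWeight (n : ℕ) (s y : ℝ) : ℝ :=
  (s ^ 3)⁻¹ * (1 + s * y) ^ (-del n) + (s ^ 4)⁻¹ * (1 + y) ^ (-(2 : ℝ))

lemma residualWeight_pos (n : ℕ) (hs : 0 < s) (hy : 0 ≤ y) : 0 < residualWeight n s y := by
  rw [residualWeight]
  positivity

lemma inv_cube_le_residualWeight (hn : 1 < n) (hs : 0 < s) (hy : 0 < y) (hsy : s * y ≤ 1) :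
    (s ^ 3)⁻¹ ≤ 2 ^ del n * residualWeight n s y := by
  have hd := one_lt_del hn
  have hkernel : 1 ≤ 2 ^ del n * (1 + s * y) ^ (-del n) :=
    one_le_two_rpow_mul_one_add_rpow_neg (by linarith) (by positivity) hsy
  calc (s ^ 3)⁻¹ ≤ (s ^ 3)⁻¹ * (2 ^ del n * (1 + s * y) ^ (-del n)) :=
        le_mul_of_one_le_right (by positivity) hkernel
    _ = 2 ^ del n * ((s ^ 3)⁻¹ * (1 + s * y) ^ (-del n)) := mul_left_comm _ _ _
    _ ≤ _ := by
        gcongr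
        exact le_add_of_nonneg_right (by positivity)

lemma inv_cube_mul_powerTail_le_residualWeight (hn : 1 < n) (hs : 0 < s) (hy : 0 < y)
    (hsy : 1 ≤ s * y) :
    (s ^ 3)⁻¹ * powerTail n (s * y) ≤ lam n * 2 ^ del n * residualWeight n s y := by
  have hl := lam_pos hn
  have hd := one_lt_del hn
  have hkernel : (s * y) ^ (-del n) ≤ 2 ^ del n * (1 + s * y) ^ (-del n) :=
    rpow_neg_le_two_rpow_mul_one_add_rpow_neg (by linarith) hsy
  calc (s ^ 3)⁻¹ * powerTail n (s * y)
      ≤ (s ^ 3)⁻¹ * (lam n * (2 ^ del n * (1 + s * y) ^ (-del n))) := by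
        rw [powerTail]
        gcongr
    _ = lam n * 2 ^ del n * ((s ^ 3)⁻¹ * (1 + s * y) ^ (-del n)) := by ring
    _ ≤ _ := by
        gcongr
        exact le_add_of_nonneg_right (by positivity)

lemma inv_pow_four_mul_inv_sq_le_residualWeight (n : ℕ) (hs : 0 < s) (hy : 1 ≤ y) :
    (s ^ 4)⁻¹ * (y ^ 2)⁻¹ ≤ 4 * residualWeight n s y := by
  have hy0 : 0 < y := by linarith
  have hkernel := rpow_neg_le_two_rpow_mul_one_add_rpow_neg zero_le_two hy
  rw [Real.rpow_neg hy0.le, Real.rpow_two, Real.rpow_two] at hkernel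
  calc (s ^ 4)⁻¹ * (y ^ 2)⁻¹ ≤ (s ^ 4)⁻¹ * (2 ^ 2 * (1 + y) ^ (-(2 : ℝ))) := by gcongr
    _ = 4 * ((s ^ 4)⁻¹ * (1 + y) ^ (-(2 : ℝ))) := by ring
    _ ≤ _ := by
        gcongr
        exact le_add_of_nonneg_left (by positivity)

lemma exists_abs_scaledResidual_le {M M' : ℝ} (hη : ContinuousOn η (Icc 0 1))
    (hh : ContinuousOn h (Icc 0 1)) (hh' : ContinuousOn h' (Icc 0 1)) (hr : ReactiveTail n η M)
    (hc : CorrectorTail n h h' M') (hm : DiffusiveSolution n μ μ') (hn : 4 ≤ n) :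
    ∃ C > 0, ∀ s ≥ 1, ∀ y > 0, |scaledResidual n η μ h h' s y| ≤ C * residualWeight n s y := by
  have hn1 : 1 < n := by lia
  have hl := lam_pos hn1
  obtain ⟨A, hA, hreactive⟩ := exists_abs_scaledResidual_le_of_mul_le_one hη hh hh' hm hn
  obtain ⟨B, hB, hmatching⟩ := exists_abs_scaledResidual_le_of_le_one hr hc hm hn
  obtain ⟨D, hD, hdiffusive⟩ := exists_abs_scaledResidual_le_of_one_le hr hc hm hn1
  refine ⟨A * 2 ^ del n + B * (lam n * 2 ^ del n) + D * (lam n * 2 ^ del n + 4), by positivity,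
    fun s hs y hy => ?_⟩
  have hs0 : 0 < s := by linarith
  have hW := residualWeight_pos n hs0 hy.le
  set W := residualWeight n s y
  have hA' : 0 ≤ A * (2 ^ del n * W) := by positivity
  have hB' : 0 ≤ B * (lam n * 2 ^ del n * W) := by positivity
  have hD' : 0 ≤ D * (lam n * 2 ^ del n * W + 4 * W) := by positivity
  rcases le_total (s * y) 1 with hsy | hsy
  · have := mul_le_mul_of_nonneg_left (inv_cube_le_residualWeight hn1 hs0 hy hsy) hA.le
    linarith [hreactive s hs y hy hsy]
  have htail := inv_cube_mul_powerTail_le_residualWeight hn1 hs0 hy hsy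
  rcases le_total y 1 with hy1 | hy1
  · have := mul_le_mul_of_nonneg_left htail hB.le
    linarith [hmatching s hs y hy hy1 hsy]
  · have := mul_le_mul_of_nonneg_left
      (add_le_add htail (inv_pow_four_mul_inv_sq_le_residualWeight n hs0 hy1)) hD.le
    linarith [hdiffusive s hs y hy1]

lemma integrable_one_add_mul_abs_rpow_neg {d : ℝ} (hd : 1 < d) (hs : 0 < s) :
    Integrable fun x : ℝ => (1 + s * |x|) ^ (-d) := by
  have hbase : Integrable fun x : ℝ => (1 + ‖x‖) ^ (-d) :=
    integrable_one_add_norm (by simpa using hd)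
  simpa only [Real.norm_eq_abs, abs_mul, abs_of_pos hs] using hbase.comp_mul_left' hs.ne'

lemma integral_one_add_mul_abs_rpow_neg (d : ℝ) (hs : 0 < s) :
    ∫ x : ℝ, (1 + s * |x|) ^ (-d) = s⁻¹ * ∫ x : ℝ, (1 + |x|) ^ (-d) := by
  simpa only [abs_mul, abs_inv, abs_of_pos hs, smul_eq_mul] using
    Measure.integral_comp_mul_left (fun x : ℝ => (1 + |x|) ^ (-d)) s

lemma integrable_residualWeight (hn : 1 < n) (hs : 0 < s) :
    Integrable fun x : ℝ => residualWeight n s |x| := by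
  have hdiffusive := integrable_one_add_mul_abs_rpow_neg one_lt_two one_pos
  simp only [one_mul] at hdiffusive
  exact ((integrable_one_add_mul_abs_rpow_neg (one_lt_del hn) hs).const_mul _).add
    (hdiffusive.const_mul _)

lemma integral_residualWeight_pos (hn : 1 < n) (hs : 0 < s) :
    0 < ∫ x : ℝ, residualWeight n s |x| := by
  have hpos (x : ℝ) : 0 < residualWeight n s |x| := residualWeight_pos n hs (abs_nonneg x)
  have hsupport : Function.support (fun x : ℝ => residualWeight n s |x|) = univ :=
    eq_univ_of_forall fun x => (hpos x).ne'
  rw [integral_pos_iff_support_of_nonneg (fun x => (hpos x).le) (integrable_residualWeight hn hs),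
    hsupport]
  exact Measure.measure_univ_pos.mpr (NeZero.ne volume)

lemma integral_residualWeight (hn : 1 < n) (hs : 0 < s) :
    ∫ x : ℝ, residualWeight n s |x| = (s ^ 4)⁻¹ * ∫ x : ℝ, residualWeight n 1 |x| := by
  have hreactive {r : ℝ} (hr : 0 < r) := integrable_one_add_mul_abs_rpow_neg (one_lt_del hn) hr
  have hdiffusive := integrable_one_add_mul_abs_rpow_neg one_lt_two one_pos
  simp only [one_mul] at hdiffusive
  simp only [residualWeight]
  rw [integral_add ((hreactive hs).const_mul _) (hdiffusive.const_mul _),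
    integral_add ((hreactive one_pos).const_mul _) (hdiffusive.const_mul _)]
  simp only [integral_const_mul, integral_one_add_mul_abs_rpow_neg _ hs, one_mul, one_pow, inv_one]
  field_simp

lemma integral_abs_IFun_le {C t : ℝ} (hr : ReactiveSolution n η η')
    (hm : DiffusiveSolution n μ μ') (hc : CorrectorSolution n η η' h h') (hn : 1 < n)
    (hbound : ∀ s ≥ 1, ∀ y > 0, |scaledResidual n η μ h h' s y| ≤ C * residualWeight n s y)
    (ht : 1 ≤ t) :
    ∫ x : ℝ, |IFun n η μ h (√t * x) t|
      ≤ C * (∫ x : ℝ, residualWeight n 1 |x|) * t ^ (-(1 + 4 * gam n)) := by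
  have ht0 : 0 < t := by linarith
  have hsqrt : 0 < √t := Real.sqrt_pos.mpr ht0
  set s := t ^ gam n with hs_def
  have hs : 1 ≤ s := Real.one_le_rpow ht (gam_pos n).le
  have hpointwise : ∀ᵐ x : ℝ, |IFun n η μ h (√t * x) t| ≤ t⁻¹ * (C * residualWeight n s |x|) := by
    filter_upwards [Measure.ae_ne volume 0] with x hx
    have hres := mul_IFun_eq_scaledResidual hr hm hc hn (mul_ne_zero hsqrt.ne' hx) ht0
    rw [abs_mul, abs_of_pos hsqrt, mul_div_cancel_left₀ _ hsqrt.ne'] at hres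
    rw [le_inv_mul_iff₀ ht0, ← abs_of_pos ht0, ← abs_mul, abs_of_pos ht0, hres]
    exact hbound s hs _ (abs_pos.mpr hx)
  have hdecay : t ^ (-(1 + 4 * gam n)) = t⁻¹ * (s ^ 4)⁻¹ := by
    rw [Real.rpow_neg ht0.le, Real.rpow_one_add' ht0.le (by linarith [gam_pos n]), mul_inv, hs_def,
      ← Real.rpow_mul_natCast ht0.le, mul_comm (gam n), Nat.cast_ofNat]
  calc _ ≤ ∫ x : ℝ, t⁻¹ * (C * residualWeight n s |x|) :=
        integral_mono_of_nonneg (.of_forall fun _ => abs_nonneg _)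
          (((integrable_residualWeight hn (by linarith)).const_mul C).const_mul _) hpointwise
    _ = _ := by
        rw [integral_const_mul, integral_const_mul, integral_residualWeight hn (by linarith),
          hdecay]
        ring

end Integration

/-- Bound on the inhomogeneous term: ∫ |I(√t x, t)| dx ≤ c_I t^{−1−4γ} for t ≥ 1. -/
theorem inhomogeneous_term_bound (n : ℕ) (hn : 4 ≤ n) (η μ h : ℝ → ℝ)
    (hη : IsReactiveProfile n η) (hμ : IsDiffusiveProfile n μ) (hh : IsCorrector n η h) :
    ∃ cI : ℝ, 0 < cI ∧ ∀ t ≥ (1 : ℝ),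
      (∫ x : ℝ, |IFun n η μ h (Real.sqrt t * x) t|) ≤ cI * t ^ (-(1 + 4 * gam n)) := by
  have hr := hη.reactiveSolution
  have hm := hμ.diffusiveSolution
  have hc := hh.correctorSolution
  obtain ⟨M, hM⟩ := hr.exists_reactiveTail hn
  obtain ⟨M', hM'⟩ := hc.exists_correctorTail hr hn
  obtain ⟨C, hC, hbound⟩ := exists_abs_scaledResidual_le
    (hη.1.continuousOn.mono Icc_subset_Ici_self) (hh.1.continuousOn.mono Icc_subset_Ici_self)
    ((contDiffOn_derivWithin_Ici hh.1).continuousOn.mono Icc_subset_Ici_self) hM hM' hm hn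
  have hn1 : 1 < n := by lia
  exact ⟨C * ∫ x : ℝ, residualWeight n 1 |x|,
    mul_pos hC (integral_residualWeight_pos hn1 one_pos),
    fun t ht => integral_abs_IFun_le hr hm hc hn1 hbound ht⟩
end

section
/- Let n ≥ 4 be an integer and γ = 1/(2n+1). Let F₀, F₁, G₀, G₁ be real numbers with F₀ + F₁ ≥ 0 and G₀ + G₁ ≥ 0, and let F, G : [0,∞) → ℝ be continuous functions with sup_{x>0} |F(x)|(x^{−F₀} + x^{F₁}) < ∞ and sup_{x>0} |G(x)|(x^{−G₀} + x^{G₁}) < ∞. Assume 1 − G₁ < F₁, 1 + G₀ > −F₀, and F₁ ≠ 1 + G₀. Then there is a constant C > 0 such that for all t ≥ 1, ∫₀^∞ |G(x) F(t^γ x)| dx ≤ C t^{−ξ}, where ξ = γ · min{F₁, 1 + G₀}. -/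
/-!
The bound defining `𝒱(p, q)` gives both `f = O(x ^ p)` and `f = O(x ^ (-q))` on all of `(0, ∞)`, so
the Mellin transform of `f` converges absolutely on the strip `(-p, q)`. In `∫ |G x * F (s * x)|`,
bounding `F y` by a multiple of `y ^ (-F₁)` pulls out `s ^ (-F₁)` and leaves the Mellin integral of
`G` at `1 - F₁`. Alternatively, after the substitution `y = s * x`, bounding `G` by a multiple of
`x ^ G₀` pulls out `s ^ (-(1 + G₀))` and leaves the Mellin integral of `F` at `1 + G₀`. The first
integral converges if `F₁ < 1 + G₀`, the second one if `1 + G₀ < F₁`.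
-/

section

open MeasureTheory Set Filter Asymptotics Topology

/-- The growth condition in the definition of the space `𝒱(p, q)`, without continuity and without
the constraint `0 ≤ p + q`. It combines decay of order `p` at `0` and of order `q` at `∞`. -/
def PowerBounded (p q : ℝ) (f : ℝ → ℝ) : Prop :=
  ∃ M : ℝ, ∀ x > (0 : ℝ), |f x| * (x ^ (-p) + x ^ q) ≤ M

namespace PowerBounded

variable {p q a : ℝ} {f : ℝ → ℝ}

lemma exists_abs_le_mul_rpow (hf : PowerBounded p q f) : ∃ M, ∀ x > 0, |f x| ≤ M * x ^ p := by
  obtain ⟨M, hM⟩ := hf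
  refine ⟨M, fun x hx => ?_⟩
  rw [← div_le_iff₀ (Real.rpow_pos_of_pos hx p), div_eq_mul_inv, ← Real.rpow_neg hx.le]
  calc |f x| * x ^ (-p) ≤ |f x| * (x ^ (-p) + x ^ q) := by
        gcongr
        exact le_add_of_nonneg_right (Real.rpow_nonneg hx.le q)
    _ ≤ M := hM x hx

lemma exists_abs_le_mul_rpow_neg (hf : PowerBounded p q f) :
    ∃ M, ∀ x > 0, |f x| ≤ M * x ^ (-q) := by
  have hf' : PowerBounded (-q) (-p) f := by
    simpa only [PowerBounded, neg_neg, add_comm] using hf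
  exact hf'.exists_abs_le_mul_rpow

lemma isBigO_nhdsGT_zero (hf : PowerBounded p q f) : f =O[𝓝[>] 0] (· ^ p) := by
  obtain ⟨M, hM⟩ := hf.exists_abs_le_mul_rpow
  refine .of_bound M (eventually_mem_nhdsWithin.mono fun x hx => ?_)
  simpa only [Real.norm_eq_abs, abs_of_pos (Real.rpow_pos_of_pos hx p)] using hM x hx

lemma isBigO_atTop (hf : PowerBounded p q f) : f =O[atTop] (· ^ (-q)) := by
  obtain ⟨M, hM⟩ := hf.exists_abs_le_mul_rpow_neg
  refine .of_bound M ((eventually_gt_atTop 0).mono fun x hx => ?_)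
  simpa only [Real.norm_eq_abs, abs_of_pos (Real.rpow_pos_of_pos hx (-q))] using hM x hx

lemma integrableOn_rpow_mul (hf : PowerBounded p q f) (hfl : LocallyIntegrableOn f (Ioi 0))
    (hpa : -p < 1 + a) (haq : 1 + a < q) : IntegrableOn (fun x => x ^ a * f x) (Ioi 0) := by
  simpa only [add_sub_cancel_left] using mellin_convergent_of_isBigO_scalar hfl hf.isBigO_atTop haq
    (by simpa only [neg_neg] using hf.isBigO_nhdsGT_zero) hpa

end PowerBounded

variable {f g : ℝ → ℝ} {a M s x : ℝ}

lemma abs_mul_comp_mul_le (hs : 0 < s) (hf : ∀ x > 0, |f x| ≤ M * x ^ a) (hx : 0 < x) :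
    |g x * f (s * x)| ≤ M * s ^ a * |x ^ a * g x| := by
  calc |g x * f (s * x)| = |g x| * |f (s * x)| := abs_mul _ _
    _ ≤ |g x| * (M * (s * x) ^ a) := by gcongr; exact hf _ (mul_pos hs hx)
    _ = M * s ^ a * |x ^ a * g x| := by
      rw [Real.mul_rpow hs.le hx.le, abs_mul, abs_of_pos (Real.rpow_pos_of_pos hx a)]
      ring

lemma aestronglyMeasurable_comp_mul_left_Ioi {E : Type*} [TopologicalSpace E] {f : ℝ → E}
    (hs : 0 < s) (hf : AEStronglyMeasurable f (volume.restrict (Ioi 0))) :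
    AEStronglyMeasurable (fun x => f (s * x)) (volume.restrict (Ioi 0)) :=
  hf.comp_quasiMeasurePreserving
    ((Measure.quasiMeasurePreserving_smul volume hs.ne').restrict fun _ hx => mul_pos hs hx)

lemma integrableOn_mul_comp_mul (hs : 0 < s)
    (hfm : AEStronglyMeasurable f (volume.restrict (Ioi 0)))
    (hgm : AEStronglyMeasurable g (volume.restrict (Ioi 0)))
    (hf : ∀ x > 0, |f x| ≤ M * x ^ a) (hg : IntegrableOn (fun x => x ^ a * g x) (Ioi 0)) :
    IntegrableOn (fun x => g x * f (s * x)) (Ioi 0) :=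
  (hg.abs.const_mul (M * s ^ a)).mono' (hgm.mul (aestronglyMeasurable_comp_mul_left_Ioi hs hfm))
    (ae_restrict_of_forall_mem measurableSet_Ioi fun _ hx => abs_mul_comp_mul_le hs hf hx)

lemma integral_abs_mul_comp_mul_le (hs : 0 < s) (hf : ∀ x > 0, |f x| ≤ M * x ^ a)
    (hg : IntegrableOn (fun x => x ^ a * g x) (Ioi 0)) :
    ∫ x in Ioi 0, |g x * f (s * x)| ≤ M * (∫ x in Ioi 0, |x ^ a * g x|) * s ^ a := by
  calc ∫ x in Ioi 0, |g x * f (s * x)| ≤ ∫ x in Ioi 0, M * s ^ a * |x ^ a * g x| :=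
        integral_mono_of_nonneg (.of_forall fun _ => abs_nonneg _) (hg.abs.const_mul _)
          (ae_restrict_of_forall_mem measurableSet_Ioi fun _ hx => abs_mul_comp_mul_le hs hf hx)
    _ = M * (∫ x in Ioi 0, |x ^ a * g x|) * s ^ a := by rw [integral_const_mul]; ring

lemma integrableOn_mul_comp_mul_swap_iff (hs : 0 < s) :
    IntegrableOn (fun x => g x * f (s * x)) (Ioi 0) ↔
      IntegrableOn (fun y => f y * g (s⁻¹ * y)) (Ioi 0) := by
  simpa only [inv_mul_cancel_left₀ hs.ne', mul_zero, mul_comm] using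
    integrableOn_Ioi_comp_mul_left_iff (fun y => g (s⁻¹ * y) * f y) 0 hs

lemma integral_abs_mul_comp_mul_swap (hs : 0 < s) :
    ∫ x in Ioi 0, |g x * f (s * x)| = s⁻¹ * ∫ y in Ioi 0, |f y * g (s⁻¹ * y)| := by
  simpa only [inv_mul_cancel_left₀ hs.ne', mul_zero, smul_eq_mul, mul_comm (f _)] using
    integral_comp_mul_left_Ioi (fun y => |g (s⁻¹ * y) * f y|) 0 hs

/-- Integrability of `x ↦ g x * f (s * x)` on `(0, ∞)` for every `s > 0`, with an `L¹` norm that is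
at most a constant multiple of `s ^ a`, uniformly in `s`. -/
def DilationBound (a : ℝ) (g f : ℝ → ℝ) : Prop :=
  ∃ C : ℝ, 0 < C ∧ ∀ s > (0 : ℝ), IntegrableOn (fun x => g x * f (s * x)) (Ioi 0) ∧
    ∫ x in Ioi 0, |g x * f (s * x)| ≤ C * s ^ a

namespace DilationBound

lemma of_abs_le_mul_rpow (hfm : AEStronglyMeasurable f (volume.restrict (Ioi 0)))
    (hgm : AEStronglyMeasurable g (volume.restrict (Ioi 0)))
    (hf : ∀ x > 0, |f x| ≤ M * x ^ a) (hg : IntegrableOn (fun x => x ^ a * g x) (Ioi 0)) :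
    DilationBound a g f := by
  refine ⟨max (M * ∫ x in Ioi 0, |x ^ a * g x|) 1, by positivity, fun s hs =>
    ⟨integrableOn_mul_comp_mul hs hfm hgm hf hg, ?_⟩⟩
  refine (integral_abs_mul_comp_mul_le hs hf hg).trans ?_
  gcongr
  exact le_max_left _ _

lemma swap (h : DilationBound a f g) : DilationBound (-(1 + a)) g f := by
  obtain ⟨C, hC, h⟩ := h
  refine ⟨C, hC, fun s hs => ?_⟩
  obtain ⟨hint, hle⟩ := h s⁻¹ (inv_pos.2 hs)
  refine ⟨(integrableOn_mul_comp_mul_swap_iff hs).2 hint, ?_⟩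
  calc ∫ x in Ioi 0, |g x * f (s * x)| = s⁻¹ * ∫ y in Ioi 0, |f y * g (s⁻¹ * y)| :=
        integral_abs_mul_comp_mul_swap hs
    _ ≤ s⁻¹ * (C * s⁻¹ ^ a) := mul_le_mul_of_nonneg_left hle (inv_pos.2 hs).le
    _ = C * s ^ (-(1 + a)) := by
      rw [Real.rpow_neg hs.le, ← Real.inv_rpow hs.le, Real.rpow_add (inv_pos.2 hs), Real.rpow_one]
      ring

end DilationBound

theorem integral_scaling_estimate_general {F₀ F₁ G₀ G₁ : ℝ} {F G : ℝ → ℝ}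
    (hFl : LocallyIntegrableOn F (Ioi 0)) (hGl : LocallyIntegrableOn G (Ioi 0))
    (hF : PowerBounded F₀ F₁ F) (hG : PowerBounded G₀ G₁ G)
    (h₁ : 1 - G₁ < F₁) (h₂ : -F₀ < 1 + G₀) (h₃ : F₁ ≠ 1 + G₀) :
    ∃ C : ℝ, 0 < C ∧ ∀ s > (0 : ℝ), IntegrableOn (fun x => G x * F (s * x)) (Ioi 0) ∧
      ∫ x in Ioi 0, |G x * F (s * x)| ≤ C * s ^ (-min F₁ (1 + G₀)) := by
  have hFm := hFl.aestronglyMeasurable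
  have hGm := hGl.aestronglyMeasurable
  rcases h₃.lt_or_gt with h | h
  · obtain ⟨M, hM⟩ := hF.exists_abs_le_mul_rpow_neg
    have hMellin := hG.integrableOn_rpow_mul (a := -F₁) hGl (by linarith) (by linarith)
    rw [min_eq_left h.le]
    exact DilationBound.of_abs_le_mul_rpow hFm hGm hM hMellin
  · obtain ⟨M, hM⟩ := hG.exists_abs_le_mul_rpow
    have hMellin := hF.integrableOn_rpow_mul hFl h₂ h
    rw [min_eq_right h.le]
    exact (DilationBound.of_abs_le_mul_rpow hGm hFm hM hMellin).swap

end

/-- Integral estimate (Lemma 5.3 of the paper): if F ∈ 𝒱(F₀,F₁), G ∈ 𝒱(G₀,G₁) with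
1 − G₁ < F₁, 1 + G₀ > −F₀ and F₁ ≠ 1 + G₀, then
∫₀^∞ |G(x) F(t^γ x)| dx ≤ C t^{−ξ} for all t ≥ 1, where ξ = γ·min{F₁, 1+G₀}. -/
theorem integral_scaling_estimate (n : ℕ) (hn : 4 ≤ n)
    (F0 F1 G0 G1 : ℝ) (hF01 : 0 ≤ F0 + F1) (hG01 : 0 ≤ G0 + G1)
    (F G : ℝ → ℝ) (hFc : ContinuousOn F (Set.Ici 0)) (hGc : ContinuousOn G (Set.Ici 0))
    (hFb : ∃ M : ℝ, ∀ x > (0:ℝ), |F x| * (x ^ (-F0) + x ^ F1) ≤ M)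
    (hGb : ∃ M : ℝ, ∀ x > (0:ℝ), |G x| * (x ^ (-G0) + x ^ G1) ≤ M)
    (h1 : 1 - G1 < F1) (h2 : -F0 < 1 + G0) (h3 : F1 ≠ 1 + G0) :
    ∃ C : ℝ, 0 < C ∧ ∀ t ≥ (1:ℝ),
      (∫ x in Set.Ioi (0:ℝ), |G x * F (t ^ gam n * x)|)
        ≤ C * t ^ (-(gam n * min F1 (1 + G0))) := by
  obtain ⟨C, hC, h⟩ := integral_scaling_estimate_general
    ((hFc.mono Set.Ioi_subset_Ici_self).locallyIntegrableOn measurableSet_Ioi)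
    ((hGc.mono Set.Ioi_subset_Ici_self).locallyIntegrableOn measurableSet_Ioi) hFb hGb h1 h2 h3
  refine ⟨C, hC, fun t ht => ?_⟩
  have ht0 : 0 < t := one_pos.trans_le ht
  simpa only [← Real.rpow_mul ht0.le, mul_neg] using (h (t ^ gam n) (Real.rpow_pos_of_pos ht0 _)).2
end
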